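/- arXiv:0903.0444 — 11 statements merged into one kernel-verified Lean document; each statement's English description precedes it below -/
import Mathlib

section
/- A real 2×2 matrix A has an invariant proper cone if and only if (trace A)² ≥ 4·det A and trace A ≥ 0 (equivalently, if and only if the eigenvalues of A are real and the eigenvalue of maximal absolute value is nonnegative). -/
/-- A set `K ⊆ ℝ^m` is a proper cone: closed under nonnegative scaling,
convex (closed under addition), topologically closed, pointed and solid. -/
def IsProperCone {m : ℕ} (K : Set (Fin m → ℝ)) : Prop :=
  (∀ a : ℝ, 0 ≤ a → ∀ x ∈ K, a • x ∈ K) ∧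
  (∀ x ∈ K, ∀ y ∈ K, x + y ∈ K) ∧
  IsClosed K ∧ K ∩ (-K) = {0} ∧ (interior K).Nonempty

/-- `K` is invariant under the matrix `A`. -/
def InvariantUnder {m : ℕ} (A : Matrix (Fin m) (Fin m) ℝ) (K : Set (Fin m → ℝ)) : Prop :=
  ∀ x ∈ K, A.mulVec x ∈ K

/-- The cone cut out by two independent functionals is proper. -/
lemma cone_proper (p q r s : ℝ) (h : p * s - q * r ≠ 0) :
    IsProperCone {x : Fin 2 → ℝ | 0 ≤ p * x 0 + q * x 1 ∧ 0 ≤ r * x 0 + s * x 1} := by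
  refine ⟨?_, ?_, ?_, ?_, ?_⟩
  · rintro a ha x ⟨h1, h2⟩
    refine ⟨?_, ?_⟩
    · have := mul_nonneg ha h1
      simp only [Pi.smul_apply, smul_eq_mul]; linarith
    · have := mul_nonneg ha h2
      simp only [Pi.smul_apply, smul_eq_mul]; linarith
  · rintro x ⟨h1, h2⟩ y ⟨h3, h4⟩
    refine ⟨?_, ?_⟩ <;> simp only [Pi.add_apply] <;> linarith
  · have c1 : IsClosed {x : Fin 2 → ℝ | 0 ≤ p * x 0 + q * x 1} :=
      isClosed_le (by fun_prop) (by fun_prop)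
    have c2 : IsClosed {x : Fin 2 → ℝ | 0 ≤ r * x 0 + s * x 1} :=
      isClosed_le (by fun_prop) (by fun_prop)
    exact c1.inter c2
  · ext x
    simp only [Set.mem_inter_iff, Set.mem_ofPred_eq, Set.mem_neg, Pi.neg_apply,
      Set.mem_singleton_iff]
    constructor
    · rintro ⟨⟨h1, h2⟩, h3, h4⟩
      have e1 : p * x 0 + q * x 1 = 0 := by linarith
      have e2 : r * x 0 + s * x 1 = 0 := by linarith
      have x0 : x 0 = 0 := by
        apply (mul_eq_zero.1 (_ : (p * s - q * r) * x 0 = 0)).resolve_left h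
        linear_combination s * e1 - q * e2
      have x1 : x 1 = 0 := by
        apply (mul_eq_zero.1 (_ : (p * s - q * r) * x 1 = 0)).resolve_left h
        linear_combination p * e2 - r * e1
      ext i; fin_cases i <;> simp [x0, x1]
    · rintro rfl; simp
  · have o1 : IsOpen {x : Fin 2 → ℝ | 0 < p * x 0 + q * x 1} :=
      isOpen_lt (by fun_prop) (by fun_prop)
    have o2 : IsOpen {x : Fin 2 → ℝ | 0 < r * x 0 + s * x 1} :=
      isOpen_lt (by fun_prop) (by fun_prop)
    have ho := o1.inter o2
    have hsub : {x : Fin 2 → ℝ | 0 < p * x 0 + q * x 1} ∩ {x | 0 < r * x 0 + s * x 1} ⊆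
        {x : Fin 2 → ℝ | 0 ≤ p * x 0 + q * x 1 ∧ 0 ≤ r * x 0 + s * x 1} :=
      fun x hx => ⟨le_of_lt hx.1, le_of_lt hx.2⟩
    refine ⟨![(s - q) / (p * s - q * r), (p - r) / (p * s - q * r)],
      interior_maximal hsub ho ⟨?_, ?_⟩⟩
    · have : p * ((s - q) / (p * s - q * r)) + q * ((p - r) / (p * s - q * r)) = 1 := by
        rw [← mul_div_assoc, ← mul_div_assoc, ← add_div, div_eq_one_iff_eq h]; ring
      simp [this]
    · have : r * ((s - q) / (p * s - q * r)) + s * ((p - r) / (p * s - q * r)) = 1 := by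
        rw [← mul_div_assoc, ← mul_div_assoc, ← add_div, div_eq_one_iff_eq h]; ring
      simp [this]

/-- A covector `(r, s)` that is not a left eigenvector yields an invariant cone. -/
lemma exists_of_cyclic (A : Matrix (Fin 2) (Fin 2) ℝ) (h1 : A.trace ^ 2 ≥ 4 * A.det)
    (h2 : 0 ≤ A.trace) (r s : ℝ)
    (h : (r * A 0 0 + s * A 1 0) * s - (r * A 0 1 + s * A 1 1) * r ≠ 0) :
    ∃ K : Set (Fin 2 → ℝ), IsProperCone K ∧ InvariantUnder A K := by
  rw [Matrix.trace_fin_two, Matrix.det_fin_two] at h1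
  rw [Matrix.trace_fin_two] at h2
  refine ⟨_, cone_proper (r * A 0 0 + s * A 1 0 - (A 0 0 + A 1 1) / 2 * r)
    (r * A 0 1 + s * A 1 1 - (A 0 0 + A 1 1) / 2 * s) r s ?_, ?_⟩
  · intro h0; apply h; linear_combination h0
  · rintro x ⟨hx, hy⟩
    have q : 0 ≤ (A 0 0 + A 1 1) ^ 2 / 4 - (A 0 0 * A 1 1 - A 0 1 * A 1 0) := by linarith
    have a1 := mul_nonneg h2 hx
    have a2 := mul_nonneg h2 hy
    have a3 := mul_nonneg q hy
    refine ⟨?_, ?_⟩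
    · simp only [Matrix.mulVec, dotProduct, Fin.sum_univ_two]
      linarith
    · simp only [Matrix.mulVec, dotProduct, Fin.sum_univ_two]
      linarith

lemma interior_step {K : Set (Fin 2 → ℝ)} {e : Fin 2 → ℝ} (he : e ∈ interior K)
    (w : Fin 2 → ℝ) : ∃ ε : ℝ, 0 < ε ∧ e + ε • w ∈ K := by
  have hc : Filter.Tendsto (fun ε : ℝ => e + ε • w) (nhds 0) (nhds e) := by
    have : Continuous (fun ε : ℝ => e + ε • w) := by fun_prop
    simpa using this.tendsto 0
  have := hc.eventually (mem_interior_iff_mem_nhds.1 he)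
  have h2 : ∀ᶠ ε : ℝ in nhdsWithin 0 (Set.Ioi 0), e + ε • w ∈ K :=
    this.filter_mono nhdsWithin_le_nhds
  obtain ⟨ε, h3, h4⟩ := (h2.and self_mem_nhdsWithin).exists
  exact ⟨ε, h4, h3⟩

lemma exists_min {K : Set (Fin 2 → ℝ)} (hK : IsProperCone K) {e : Fin 2 → ℝ}
    (he : e ∈ interior K) (hne : -e ∉ K) (w : Fin 2 → ℝ) :
    ∃ p : ℝ, p • e + w ∈ K ∧ ∀ s : ℝ, s • e + w ∈ K → p ≤ s := by
  obtain ⟨hs, ha, hcl, hp, -⟩ := hK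
  set S : Set ℝ := {s | s • e + w ∈ K} with hS
  have hSc : IsClosed S := hcl.preimage (f := fun s : ℝ => s • e + w) (by fun_prop)
  have hSn : S.Nonempty := by
    obtain ⟨ε, h0, h1⟩ := interior_step he w
    refine ⟨ε⁻¹, ?_⟩
    have := hs ε⁻¹ (by positivity) _ h1
    rwa [smul_add, smul_smul, inv_mul_cancel₀ h0.ne', one_smul] at this
  have hSb : BddBelow S := by
    by_contra hb
    apply hne
    rw [not_bddBelow_iff] at hb
    choose y hy hy2 using fun n : ℕ => hb (-((n : ℝ) + 1))
    have hlim : Filter.Tendsto (fun n : ℕ => -e + (1 / ((n : ℝ) + 1)) • w) Filter.atTop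
        (nhds (-e)) := by
      have := (tendsto_one_div_add_atTop_nhds_zero_nat (𝕜 := ℝ)).smul_const w
      simpa using this.const_add (-e)
    refine hcl.mem_of_tendsto hlim (Filter.Eventually.of_forall fun n => ?_)
    have hn : (0 : ℝ) < (n : ℝ) + 1 := by positivity
    have h1 := hs (1 / ((n : ℝ) + 1)) (by positivity) _
      (ha _ (hs (-((n : ℝ) + 1) - y n) (by linarith [hy2 n]) _ (interior_subset he)) _ (hy n))
    convert h1 using 1
    ext i
    simp only [Pi.add_apply, Pi.smul_apply, Pi.neg_apply, smul_eq_mul]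
    field_simp
    ring
  exact ⟨sInf S, hSc.csInf_mem hSn hSb, fun s hs => csInf_le hSb hs⟩

lemma exists_gens {K : Set (Fin 2 → ℝ)} (hK : IsProperCone K) :
    ∃ u ∈ K, ∃ v ∈ K, u 0 * v 1 - u 1 * v 0 ≠ 0 ∧
      ∀ y ∈ K, ∃ a b : ℝ, 0 ≤ a ∧ 0 ≤ b ∧ y = a • u + b • v := by
  have hK' := hK
  obtain ⟨hs, ha, hcl, hp, ⟨e, he⟩⟩ := hK'
  have hpt : ∀ x, x ∈ K → -x ∈ K → x = 0 := by
    intro x h1 h2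
    have : x ∈ K ∩ (-K) := ⟨h1, by simpa using h2⟩
    rw [hp] at this; simpa using this
  have heK := interior_subset he
  have he0 : e ≠ 0 := by
    rintro rfl
    obtain ⟨ε, h0, h1⟩ := interior_step he ![1, 0]
    obtain ⟨δ, h2, h3⟩ := interior_step he ![-1, 0]
    have h4 := hs ε⁻¹ (by positivity) _ h1
    have h5 := hs δ⁻¹ (by positivity) _ h3
    rw [zero_add, smul_smul, inv_mul_cancel₀ h0.ne', one_smul] at h4
    rw [zero_add, smul_smul, inv_mul_cancel₀ h2.ne', one_smul] at h5
    have h6 := hpt _ h4 (by simpa using h5)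
    simpa using congrFun h6 0
  have hne : -e ∉ K := fun h => he0 (hpt _ heK h)
  have hN : 0 < e 0 ^ 2 + e 1 ^ 2 := by
    by_contra hN
    apply he0
    ext i
    fin_cases i <;> simp <;> nlinarith [sq_nonneg (e 0), sq_nonneg (e 1)]
  obtain ⟨w, hw⟩ : ∃ w : Fin 2 → ℝ, w = ![-e 1, e 0] := ⟨_, rfl⟩
  have hw0 : w 0 = - e 1 := by simp [hw]
  have hw1 : w 1 = e 0 := by simp [hw]
  obtain ⟨p, hpK, hpm⟩ := exists_min hK he hne w
  obtain ⟨q, hqK, hqm⟩ := exists_min hK he hne (-w)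
  have hpq : 0 < p + q := by
    by_contra hc
    rcases (not_lt.1 hc).lt_or_eq with hc | hc
    · apply hne
      have := hs (-(p + q))⁻¹ (inv_nonneg.2 (by linarith)) _ (ha _ hpK _ hqK)
      convert this using 1
      have h3 : -(p + q) ≠ 0 := by linarith
      have h4 : (p • e + w + (q • e + -w)) = (-(p + q)) • (-e) := by module
      rw [h4, smul_smul, inv_mul_cancel₀ h3, one_smul]
    · have h1 := hpt _ hpK (by
        convert hqK using 1
        have : q = -p := by linarith
        rw [this]; module)
      have e0 := congrFun h1 0
      have e1 := congrFun h1 1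
      simp only [Pi.add_apply, Pi.smul_apply, smul_eq_mul, hw0, hw1, Pi.zero_apply] at e0 e1
      have : e 0 ^ 2 + e 1 ^ 2 = 0 := by linear_combination e 0 * e1 - e 1 * e0
      linarith
  refine ⟨_, hpK, _, hqK, ?_, ?_⟩
  · simp only [Pi.add_apply, Pi.smul_apply, smul_eq_mul, hw0, hw1, Pi.neg_apply]
    have : 0 < (p + q) * (e 0 ^ 2 + e 1 ^ 2) := by positivity
    intro h; apply this.ne'; linear_combination -h
  · intro y hy
    obtain ⟨α, β, rfl⟩ : ∃ α β : ℝ, y = α • e + β • w := by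
      refine ⟨(y 0 * e 0 + y 1 * e 1) / (e 0 ^ 2 + e 1 ^ 2),
        (y 1 * e 0 - y 0 * e 1) / (e 0 ^ 2 + e 1 ^ 2), ?_⟩
      ext i
      fin_cases i <;> simp [hw0, hw1] <;> field_simp <;> ring
    have key : ∀ c : ℝ, c • e = (c / (p + q)) • (p • e + w) + (c / (p + q)) • (q • e + -w) := by
      intro c
      have : (c / (p + q)) • (p • e + w) + (c / (p + q)) • (q • e + -w)
        = (c / (p + q) * (p + q)) • e := by module
      rw [this, div_mul_cancel₀ _ hpq.ne']
    rcases lt_trichotomy β 0 with hb | hb | hb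
    · have h1 := hs (-β)⁻¹ (inv_nonneg.2 (by linarith)) _ hy
      have h0 : -β ≠ 0 := by linarith
      have h2 : (-β)⁻¹ • (α • e + β • w) = (α / (-β)) • e + -w := by
        have : α • e + β • w = α • e + (-β) • (-w) := by module
        rw [this, smul_add, smul_smul, smul_smul, inv_mul_cancel₀ h0, one_smul]
        congr 2; field_simp
      rw [h2] at h1
      have h3 := hqm _ h1
      rw [le_div_iff₀ (by linarith)] at h3
      refine ⟨(α - q * (-β)) / (p + q), (α - q * (-β)) / (p + q) + (-β),
        div_nonneg (by linarith) hpq.le,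
        add_nonneg (div_nonneg (by linarith) hpq.le) (by linarith), ?_⟩
      rw [add_smul _ (-β), ← add_assoc, ← key]
      module
    · subst hb
      have hα : 0 ≤ α := by
        by_contra hα
        apply hne
        have h1 := hs (-α)⁻¹ (inv_nonneg.2 (by linarith)) _ hy
        have h0 : -α ≠ 0 := by linarith
        convert h1 using 1
        have : α • e + (0 : ℝ) • w = (-α) • (-e) := by module
        rw [this, smul_smul, inv_mul_cancel₀ h0, one_smul]
      refine ⟨α / (p + q), α / (p + q), by positivity, by positivity, ?_⟩
      rw [← key]; module
    · have h1 := hs β⁻¹ (by positivity) _ hy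
      have h2 : β⁻¹ • (α • e + β • w) = (α / β) • e + w := by
        rw [smul_add, smul_smul, smul_smul, inv_mul_cancel₀ hb.ne', one_smul]
        congr 2; field_simp
      rw [h2] at h1
      have h3 := hpm _ h1
      rw [le_div_iff₀ hb] at h3
      refine ⟨(α - p * β) / (p + q) + β, (α - p * β) / (p + q),
        add_nonneg (div_nonneg (by linarith) hpq.le) hb.le,
        div_nonneg (by linarith) hpq.le, ?_⟩
      rw [add_smul _ β, add_right_comm, ← key]
      module

/-- A real `2×2` matrix has an invariant proper cone iff
`(trace A)² ≥ 4 det A` and `trace A ≥ 0`. -/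
theorem exists_invariant_proper_cone_iff (A : Matrix (Fin 2) (Fin 2) ℝ) :
    (∃ K : Set (Fin 2 → ℝ), IsProperCone K ∧ InvariantUnder A K) ↔
      (A.trace ^ 2 ≥ 4 * A.det ∧ 0 ≤ A.trace) := by
  constructor
  · rintro ⟨K, hK, hA⟩
    obtain ⟨u, hu, v, hv, hD, hg⟩ := exists_gens hK
    obtain ⟨a, b, ha, hb, h1⟩ := hg _ (hA u hu)
    obtain ⟨c, d, hc, hd, h2⟩ := hg _ (hA v hv)
    have h10 := congrFun h1 0
    have h11 := congrFun h1 1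
    have h20 := congrFun h2 0
    have h21 := congrFun h2 1
    simp only [Matrix.mulVec, dotProduct, Fin.sum_univ_two, Pi.add_apply, Pi.smul_apply,
      smul_eq_mul] at h10 h11 h20 h21
    have ht : A.trace = a + d := by
      rw [Matrix.trace_fin_two]
      apply mul_right_cancel₀ hD
      linear_combination v 1 * h10 - v 0 * h11 + u 0 * h21 - u 1 * h20
    have hdet : A.det = a * d - b * c := by
      rw [Matrix.det_fin_two]
      apply mul_right_cancel₀ hD
      have e : (A 0 0 * A 1 1 - A 0 1 * A 1 0) * (u 0 * v 1 - u 1 * v 0)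
        = (A 0 0 * u 0 + A 0 1 * u 1) * (A 1 0 * v 0 + A 1 1 * v 1)
          - (A 1 0 * u 0 + A 1 1 * u 1) * (A 0 0 * v 0 + A 0 1 * v 1) := by ring
      rw [e, h10, h11, h20, h21]; ring
    rw [ht, hdet]
    refine ⟨?_, by linarith⟩
    nlinarith [sq_nonneg (a - d), mul_nonneg hb hc]
  · rintro ⟨h1, h2⟩
    by_cases hb : A 0 1 = 0
    · by_cases hc : A 1 0 = 0
      · by_cases hd : A 0 0 = A 1 1
        · refine ⟨_, cone_proper 1 0 0 1 (by norm_num), ?_⟩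
          rw [Matrix.trace_fin_two] at h2
          rintro x ⟨hx, hy⟩
          have a1 : 0 ≤ A 1 1 * x 0 := mul_nonneg (by linarith) (by linarith)
          have a2 : 0 ≤ A 1 1 * x 1 := mul_nonneg (by linarith) (by linarith)
          refine ⟨?_, ?_⟩ <;>
            simp [Matrix.mulVec, dotProduct, Fin.sum_univ_two, hb, hc, hd, a1, a2]
        · refine exists_of_cyclic A h1 h2 1 1 fun h => hd ?_
          linear_combination h + hb - hc
      · exact exists_of_cyclic A h1 h2 0 1 fun h => hc (by linear_combination h)
    · exact exists_of_cyclic A h1 h2 1 0 fun h => hb (by linear_combination -h)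
end

section
/- Let A be a real 2×2 diagonalizable matrix with eigenvalues λ₁ > λ₂ ≥ 0. A proper cone K ⊆ ℝ² is A-invariant if and only if K contains an eigenvector of A corresponding to λ₁ and the interior of K contains no eigenvector of A corresponding to λ₂. -/
theorem aux_indep (A : Matrix (Fin 2) (Fin 2) ℝ) (l₁ l₂ : ℝ) (hlt : l₂ < l₁)
    (u v : Fin 2 → ℝ) (hu : u ≠ 0) (hv : v ≠ 0)
    (hAu : A.mulVec u = l₁ • u) (hAv : A.mulVec v = l₂ • v) :
    u 0 * v 1 - u 1 * v 0 ≠ 0 := by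
  intro hD
  have key : ∀ c d : ℝ, c • u = d • v → d = 0 := by
    intro c d h
    have h1 : l₁ • (c • u) = l₂ • (d • v) := by
      have := congrArg A.mulVec h
      rw [Matrix.mulVec_smul, Matrix.mulVec_smul, hAu, hAv] at this
      rw [smul_comm l₁, smul_comm l₂]; exact this
    rw [h, ← sub_eq_zero, ← sub_smul, smul_eq_zero, smul_eq_zero] at h1
    rcases h1 with h1 | h1 | h1
    · linarith
    · exact h1
    · exact absurd h1 hv
  have h0 : u 0 = 0 := by
    apply key (v 0)
    ext i; fin_cases i
    · simp; ring
    · simp; linarith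
  have h1 : u 1 = 0 := by
    apply key (v 1)
    ext i; fin_cases i
    · simp; linarith
    · simp; ring
  apply hu
  ext i; fin_cases i
  · exact h0
  · exact h1

theorem aux_coords (u v : Fin 2 → ℝ) (hD : u 0 * v 1 - u 1 * v 0 ≠ 0) (w : Fin 2 → ℝ) :
    w = ((w 0 * v 1 - w 1 * v 0) / (u 0 * v 1 - u 1 * v 0)) • u
      + ((u 0 * w 1 - u 1 * w 0) / (u 0 * v 1 - u 1 * v 0)) • v := by
  ext i; fin_cases i
  · simp only [Fin.zero_eta, Pi.add_apply, Pi.smul_apply, smul_eq_mul]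
    rw [div_mul_eq_mul_div, div_mul_eq_mul_div, ← add_div, eq_div_iff hD]; ring
  · simp only [Fin.mk_one, Pi.add_apply, Pi.smul_apply, smul_eq_mul]
    rw [div_mul_eq_mul_div, div_mul_eq_mul_div, ← add_div, eq_div_iff hD]; ring

theorem aux_interior (K : Set (Fin 2 → ℝ)) (y u : Fin 2 → ℝ) (hy : y ∈ interior K) :
    ∃ e : ℝ, 0 < e ∧ y + e • u ∈ K ∧ y + (-e) • u ∈ K := by
  have hc : Continuous (fun t : ℝ => y + t • u) := by fun_prop
  have h : (fun t : ℝ => y + t • u) ⁻¹' interior K ∈ nhds (0 : ℝ) :=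
    (isOpen_interior.preimage hc).mem_nhds (by simpa using hy)
  obtain ⟨e, he, hs⟩ := Metric.mem_nhds_iff.1 h
  refine ⟨e / 2, by positivity, interior_subset (hs ?_), interior_subset (hs ?_)⟩
  · rw [Metric.mem_ball, Real.dist_eq, sub_zero, abs_of_pos (by positivity)]; linarith
  · rw [Metric.mem_ball, Real.dist_eq, sub_zero, abs_neg, abs_of_pos (by positivity)]; linarith

theorem aux_limit (A : Matrix (Fin 2) (Fin 2) ℝ) (l₁ l₂ : ℝ) (hlt : l₂ < l₁) (hl₂ : 0 ≤ l₂)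
    (u v : Fin 2 → ℝ) (hAu : A.mulVec u = l₁ • u) (hAv : A.mulVec v = l₂ • v)
    (K : Set (Fin 2 → ℝ)) (hK : IsProperCone K) (hinv : InvariantUnder A K)
    (a b : ℝ) (h : a • u + b • v ∈ K) : a • u ∈ K := by
  have hl₁ : 0 < l₁ := by linarith
  have hn : ∀ n : ℕ, a • u + ((l₂ / l₁) ^ n * b) • v ∈ K := by
    intro n
    induction n with
    | zero => simpa using h
    | succ n ih =>
      have h2 := hK.1 l₁⁻¹ (by positivity) _ (hinv _ ih)
      convert h2 using 1
      rw [Matrix.mulVec_add, Matrix.mulVec_smul, Matrix.mulVec_smul, hAu, hAv]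
      ext i
      simp only [Pi.add_apply, Pi.smul_apply, smul_eq_mul]
      rw [pow_succ]
      generalize (l₂ / l₁) ^ n = r
      field_simp
  refine hK.2.2.1.mem_of_tendsto (f := fun n : ℕ => a • u + ((l₂ / l₁) ^ n * b) • v)
    (b := Filter.atTop) ?_ (Filter.Eventually.of_forall hn)
  have ht := tendsto_pow_atTop_nhds_zero_of_lt_one (r := l₂ / l₁) (by positivity)
    ((div_lt_one hl₁).2 hlt)
  have := ((ht.mul_const b).smul_const v).const_add (a • u)
  simpa using this

theorem aux_pointed (K : Set (Fin 2 → ℝ)) (hK : IsProperCone K) (u : Fin 2 → ℝ)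
    (hu : u ≠ 0) (huK : u ∈ K) (e : ℝ) (he : e < 0) : e • u ∉ K := by
  intro h
  have h1 := hK.1 (-e)⁻¹ (inv_nonneg.2 (by linarith)) _ h
  have h2 : (-e)⁻¹ • e • u = -u := by
    rw [smul_smul, inv_neg, neg_mul, inv_mul_cancel₀ he.ne, neg_one_smul]
  rw [h2] at h1
  have : u ∈ K ∩ (-K) := ⟨huK, h1⟩
  rw [hK.2.2.2.1] at this
  exact hu this

theorem aux_comb_interior (K : Set (Fin 2 → ℝ)) (hK : IsProperCone K) (x u : Fin 2 → ℝ)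
    (hx : x ∈ K) (hu : u ∈ K) (hD : x 0 * u 1 - x 1 * u 0 ≠ 0) (p q : ℝ)
    (hp : 0 < p) (hq : 0 < q) : p • x + q • u ∈ interior K := by
  rw [mem_interior]
  refine ⟨{w | 0 < (w 0 * u 1 - w 1 * u 0) / (x 0 * u 1 - x 1 * u 0)} ∩
    {w | 0 < (x 0 * w 1 - x 1 * w 0) / (x 0 * u 1 - x 1 * u 0)}, ?_, ?_, ?_, ?_⟩
  · rintro w ⟨h1, h2⟩
    rw [aux_coords x u hD w]
    exact hK.2.1 _ (hK.1 _ (le_of_lt h1) _ hx) _ (hK.1 _ (le_of_lt h2) _ hu)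
  · exact (isOpen_lt continuous_const (by fun_prop)).inter
      (isOpen_lt continuous_const (by fun_prop))
  · have : ((p • x + q • u) 0 * u 1 - (p • x + q • u) 1 * u 0) / (x 0 * u 1 - x 1 * u 0) = p := by
      simp only [Pi.add_apply, Pi.smul_apply, smul_eq_mul]
      rw [div_eq_iff hD]; ring
    rw [Set.mem_setOf_eq, this]; exact hp
  · have : (x 0 * (p • x + q • u) 1 - x 1 * (p • x + q • u) 0) / (x 0 * u 1 - x 1 * u 0) = q := by
      simp only [Pi.add_apply, Pi.smul_apply, smul_eq_mul]
      rw [div_eq_iff hD]; ring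
    rw [Set.mem_setOf_eq, this]; exact hq

/-- Theorem: for a diagonalizable real `2×2` matrix `A` with eigenvalues
`l₁ > l₂ ≥ 0` (diagonalizability being expressed by the existence of
eigenvectors for the two distinct eigenvalues), a proper cone `K` is
`A`-invariant iff `K` contains an eigenvector for `l₁` and the interior of
`K` contains no eigenvector for `l₂`. -/
theorem invariant_iff_of_diagonalizable_nonneg_eigenvalues
    (A : Matrix (Fin 2) (Fin 2) ℝ) (l₁ l₂ : ℝ)
    (hlt : l₂ < l₁) (hl₂ : 0 ≤ l₂)
    (he₁ : ∃ u : Fin 2 → ℝ, u ≠ 0 ∧ A.mulVec u = l₁ • u)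
    (he₂ : ∃ u : Fin 2 → ℝ, u ≠ 0 ∧ A.mulVec u = l₂ • u)
    (K : Set (Fin 2 → ℝ)) (hK : IsProperCone K) :
    InvariantUnder A K ↔
      (∃ u : Fin 2 → ℝ, u ≠ 0 ∧ A.mulVec u = l₁ • u ∧ u ∈ K) ∧
      (∀ v : Fin 2 → ℝ, v ≠ 0 → A.mulVec v = l₂ • v → v ∉ interior K) := by
  constructor
  · intro hinv
    have hex : ∃ u : Fin 2 → ℝ, u ≠ 0 ∧ A.mulVec u = l₁ • u ∧ u ∈ K := by
      obtain ⟨u, hu, hAu⟩ := he₁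
      obtain ⟨v, hv, hAv⟩ := he₂
      have hD := aux_indep A l₁ l₂ hlt u v hu hv hAu hAv
      obtain ⟨y, hy⟩ := hK.2.2.2.2
      obtain ⟨e, he, h1, h2⟩ := aux_interior K y u hy
      obtain ⟨c, d, hcd⟩ : ∃ c d : ℝ, y = c • u + d • v := ⟨_, _, aux_coords u v hD y⟩
      have h3 : (c + e) • u ∈ K := by
        apply aux_limit A l₁ l₂ hlt hl₂ u v hAu hAv K hK hinv _ d
        convert h1 using 1
        rw [hcd, add_smul]; abel
      have h4 : (c + -e) • u ∈ K := by
        apply aux_limit A l₁ l₂ hlt hl₂ u v hAu hAv K hK hinv _ d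
        convert h2 using 1
        rw [hcd, add_smul]; abel
      by_cases hc : c + e = 0
      · refine ⟨(c + -e) • u, smul_ne_zero (by linarith) hu, ?_, h4⟩
        rw [Matrix.mulVec_smul, hAu, smul_comm]
      · refine ⟨(c + e) • u, smul_ne_zero hc hu, ?_, h3⟩
        rw [Matrix.mulVec_smul, hAu, smul_comm]
    refine ⟨hex, ?_⟩
    intro v hv hAv hvK
    obtain ⟨u, hu, hAu, huK⟩ := hex
    obtain ⟨e, he, -, h2⟩ := aux_interior K v u hvK
    refine aux_pointed K hK u hu huK (-e) (by linarith) ?_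
    apply aux_limit A l₁ l₂ hlt hl₂ u v hAu hAv K hK hinv _ 1
    rw [one_smul, add_comm]; exact h2
  · rintro ⟨⟨u, hu, hAu, huK⟩, hint⟩ x hx
    obtain ⟨v, hv, hAv⟩ := he₂
    have hD := aux_indep A l₁ l₂ hlt u v hu hv hAu hAv
    obtain ⟨a, b, hab⟩ : ∃ a b : ℝ, x = a • u + b • v := ⟨_, _, aux_coords u v hD x⟩
    by_cases ha : 0 ≤ a
    · have hA : A.mulVec x = l₂ • x + ((l₁ - l₂) * a) • u := by
        rw [hab, Matrix.mulVec_add, Matrix.mulVec_smul, Matrix.mulVec_smul, hAu, hAv]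
        ext i
        simp only [Pi.add_apply, Pi.smul_apply, smul_eq_mul]
        ring
      rw [hA]
      exact hK.2.1 _ (hK.1 _ hl₂ _ hx) _ (hK.1 _ (mul_nonneg (by linarith) ha) _ huK)
    · push Not at ha
      exfalso
      by_cases hb : b = 0
      · refine aux_pointed K hK u hu huK a ha ?_
        rw [hab, hb, zero_smul, add_zero] at hx
        exact hx
      · have hD2 : x 0 * u 1 - x 1 * u 0 ≠ 0 := by
          have : x 0 * u 1 - x 1 * u 0 = -(b * (u 0 * v 1 - u 1 * v 0)) := by
            rw [hab]
            simp only [Pi.add_apply, Pi.smul_apply, smul_eq_mul]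
            ring
          rw [this]
          exact neg_ne_zero.2 (mul_ne_zero hb hD)
        have h := aux_comb_interior K hK x u hx huK hD2 1 (-a) one_pos (by linarith)
        have h2 : (1 : ℝ) • x + (-a) • u = b • v := by
          rw [hab, one_smul, neg_smul]; abel
        rw [h2] at h
        refine hint (b • v) (smul_ne_zero hb hv) ?_ h
        rw [Matrix.mulVec_smul, hAv, smul_comm]
end

section
/- Let A be a real 2×2 non-diagonalizable matrix with (necessarily real, repeated) eigenvalue λ ≥ 0. A proper cone K ⊆ ℝ² is A-invariant if and only if there exist an eigenvector u of A and a vector v ∈ ℝ² positively associated with u relative to A such that K = Cone{u, v}. -/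
/-- `coneGen X` is the smallest convex cone containing `X`. -/
def coneGen {m : ℕ} (X : Set (Fin m → ℝ)) : Set (Fin m → ℝ) :=
  ⋂₀ {K : Set (Fin m → ℝ) |
    (∀ a : ℝ, 0 ≤ a → ∀ x ∈ K, a • x ∈ K) ∧ (∀ x ∈ K, ∀ y ∈ K, x + y ∈ K) ∧ X ⊆ K}

/-- `A` is diagonalizable by a real similarity. -/
def IsDiagonalizable (A : Matrix (Fin 2) (Fin 2) ℝ) : Prop :=
  ∃ P : Matrix (Fin 2) (Fin 2) ℝ, IsUnit P.det ∧ (P⁻¹ * A * P).IsDiag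

theorem diag_of_eigenvectors (A : Matrix (Fin 2) (Fin 2) ℝ) (u w : Fin 2 → ℝ) (l m : ℝ)
    (hu : A.mulVec u = l • u) (hw : A.mulVec w = m • w) (hd : u 0 * w 1 - u 1 * w 0 ≠ 0) :
    IsDiagonalizable A := by
  have hdet : IsUnit (!![u 0, w 0; u 1, w 1] : Matrix (Fin 2) (Fin 2) ℝ).det := by
    rw [Matrix.det_fin_two_of, isUnit_iff_ne_zero]
    intro h
    apply hd
    linarith
  refine ⟨!![u 0, w 0; u 1, w 1], hdet, ?_⟩
  have h : A * !![u 0, w 0; u 1, w 1] = !![u 0, w 0; u 1, w 1] * Matrix.diagonal ![l, m] := by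
    have h0 := congrFun hu 0
    have h1 := congrFun hu 1
    have h2 := congrFun hw 0
    have h3 := congrFun hw 1
    simp [Matrix.mulVec, dotProduct, Fin.sum_univ_two] at h0 h1 h2 h3
    ext i j
    fin_cases i <;> fin_cases j <;>
      simp [Matrix.mul_apply, Fin.sum_univ_two, Matrix.diagonal] <;> linarith
  rw [Matrix.mul_assoc, h, ← Matrix.mul_assoc, Matrix.nonsing_inv_mul _ hdet, Matrix.one_mul]
  exact Matrix.isDiag_diagonal _

/-- limit lemma: if `p + n q ∈ K` for all `n`, then `q ∈ K`. -/
theorem recession {K : Set (Fin 2 → ℝ)} (hK : IsProperCone K) (p q : Fin 2 → ℝ)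
    (h : ∀ n : ℕ, p + (n : ℝ) • q ∈ K) : q ∈ K := by
  obtain ⟨hs, -, hc, -, -⟩ := hK
  have ht : Filter.Tendsto (fun n : ℕ => (1 / ((n : ℝ) + 1)) • (p - q) + q) Filter.atTop
      (nhds ((0 : ℝ) • (p - q) + q)) :=
    (tendsto_one_div_add_atTop_nhds_zero_nat.smul_const (p - q)).add_const q
  rw [zero_smul, zero_add] at ht
  refine hc.mem_of_tendsto ht (Filter.Eventually.of_forall fun n => ?_)
  have hn : (0 : ℝ) < (n : ℝ) + 1 := by positivity
  have := hs (1 / ((n : ℝ) + 1)) (by positivity) _ (h n)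
  convert this using 1
  ext i
  simp
  field_simp
  ring

theorem dir_mem {K : Set (Fin 2 → ℝ)} (hK : IsProperCone K) (A : Matrix (Fin 2) (Fin 2) ℝ)
    (l : ℝ) (hl : 0 ≤ l) (hinv : InvariantUnder A K) (p q : Fin 2 → ℝ) (hp : p ∈ K)
    (hAp : A.mulVec p = l • p + q) (hAq : A.mulVec q = l • q) : q ∈ K := by
  rcases hl.eq_or_lt with rfl | hl
  · have := hinv p hp
    rwa [hAp, zero_smul, zero_add] at this
  · have hq : (l⁻¹) • q ∈ K := by
      apply recession hK p
      intro n
      induction n with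
      | zero => simpa using hp
      | succ k ih =>
        have := hK.1 l⁻¹ (by positivity) _ (hinv _ ih)
        convert this using 1
        rw [Matrix.mulVec_add, Matrix.mulVec_smul, Matrix.mulVec_smul, hAp, hAq]
        ext i
        simp
        field_simp
        ring
    have := hK.1 l hl.le _ hq
    rwa [smul_smul, mul_inv_cancel₀ hl.ne', one_smul] at this

theorem structure_lem (A : Matrix (Fin 2) (Fin 2) ℝ) (l : ℝ)
    (hnd : ¬ IsDiagonalizable A) (u : Fin 2 → ℝ) (hu : u ≠ 0) (hAu : A.mulVec u = l • u) :
    ∃ (w : Fin 2 → ℝ) (c : ℝ), c ≠ 0 ∧ A.mulVec w = l • w + c • u ∧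
      ∀ y : Fin 2 → ℝ, ∃ a b : ℝ, y = a • u + b • w := by
  have hn : u 0 * u 0 + u 1 * u 1 ≠ 0 := by
    intro h
    apply hu
    ext i
    fin_cases i
    · show u 0 = 0
      nlinarith [mul_self_nonneg (u 0), mul_self_nonneg (u 1)]
    · show u 1 = 0
      nlinarith [mul_self_nonneg (u 0), mul_self_nonneg (u 1)]
  have hb : ∀ y : Fin 2 → ℝ, ∃ a b : ℝ, y = a • u + b • ![-u 1, u 0] := by
    intro y
    refine ⟨(y 0 * u 0 + y 1 * u 1) / (u 0 * u 0 + u 1 * u 1),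
      (y 1 * u 0 - y 0 * u 1) / (u 0 * u 0 + u 1 * u 1), ?_⟩
    ext i
    have hn' : u 0 ^ 2 + u 1 ^ 2 ≠ 0 := by
      rwa [pow_two, pow_two]
    have hn'' : u 1 ^ 2 + u 0 ^ 2 ≠ 0 := by
      rwa [add_comm]
    fin_cases i <;> simp <;> field_simp <;> ring
  obtain ⟨c, m, hcm⟩ := hb (A.mulVec ![-u 1, u 0])
  have hml : m = l := by
    by_contra hne
    have hne' : m - l ≠ 0 := sub_ne_zero.2 hne
    apply hnd
    apply diag_of_eigenvectors A u (![-u 1, u 0] + (c / (m - l)) • u) l m hAu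
    · rw [Matrix.mulVec_add, Matrix.mulVec_smul, hAu, hcm]
      ext i
      simp only [Pi.add_apply, Pi.smul_apply, smul_eq_mul]
      field_simp
      ring
    · simp
      intro h
      apply hn
      linarith
  subst hml
  refine ⟨![-u 1, u 0], c, ?_, by rw [hcm, add_comm], hb⟩
  rintro rfl
  apply hnd
  apply diag_of_eigenvectors A u ![-u 1, u 0] m m hAu
  · rw [hcm]; simp
  · simp
    intro h
    apply hn
    linarith

theorem exists_good {K : Set (Fin 2 → ℝ)} (hK : IsProperCone K) (A : Matrix (Fin 2) (Fin 2) ℝ)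
    (l : ℝ) (hnd : ¬ IsDiagonalizable A) (he : ∃ u : Fin 2 → ℝ, u ≠ 0 ∧ A.mulVec u = l • u) :
    ∃ p q : Fin 2 → ℝ, p ∈ K ∧ q ≠ 0 ∧ A.mulVec q = l • q ∧ A.mulVec p = l • p + q ∧
      ∀ y : Fin 2 → ℝ, ∃ a b : ℝ, y = a • q + b • p := by
  obtain ⟨u, hu, hAu⟩ := he
  obtain ⟨w, c, hc, hAw, hb⟩ := structure_lem A l hnd u hu hAu
  have hp : ∃ a b : ℝ, b ≠ 0 ∧ a • u + b • w ∈ K := by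
    obtain ⟨p, hp⟩ := hK.2.2.2.2
    obtain ⟨a, b, hab⟩ := hb p
    by_cases hb0 : b = 0
    · have hcont : Filter.Tendsto (fun n : ℕ => p + (1 / ((n : ℝ) + 1)) • w) Filter.atTop
          (nhds (p + (0 : ℝ) • w)) :=
        (tendsto_one_div_add_atTop_nhds_zero_nat.smul_const w).const_add p
      rw [zero_smul, add_zero] at hcont
      obtain ⟨n, hn⟩ := (hcont.eventually (mem_interior_iff_mem_nhds.1 hp)).exists
      refine ⟨a, 1 / ((n : ℝ) + 1), by positivity, ?_⟩
      have h2 : p + (1 / ((n : ℝ) + 1)) • w ∈ K := hn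
      rw [hab, hb0, zero_smul, add_zero] at h2
      exact h2
    · exact ⟨a, b, hb0, hab ▸ interior_subset hp⟩
  obtain ⟨a, b, hb0, hp⟩ := hp
  have hbc : b * c ≠ 0 := mul_ne_zero hb0 hc
  refine ⟨a • u + b • w, (b * c) • u, hp, smul_ne_zero hbc hu, ?_, ?_, ?_⟩
  · rw [Matrix.mulVec_smul, hAu, smul_comm]
  · rw [Matrix.mulVec_add, Matrix.mulVec_smul, Matrix.mulVec_smul, hAu, hAw]
    module
  · intro y
    obtain ⟨s, t, rfl⟩ := hb y
    refine ⟨(s - t / b * a) / (b * c), t / b, ?_⟩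
    ext i
    simp
    field_simp
    ring

/-- Theorem: for a non-diagonalizable real `2×2` matrix `A` with eigenvalue
`l ≥ 0`, a proper cone `K` is `A`-invariant iff `K = Cone{u, v}` for some
eigenvector `u` of `A` and some `v` positively associated with `u`
relative to `A` (i.e. `A v = l v + x u` with `x > 0`). -/
theorem invariant_iff_of_nondiagonalizable
    (A : Matrix (Fin 2) (Fin 2) ℝ) (l : ℝ) (hl : 0 ≤ l)
    (hnd : ¬ IsDiagonalizable A)
    (he : ∃ u : Fin 2 → ℝ, u ≠ 0 ∧ A.mulVec u = l • u)
    (K : Set (Fin 2 → ℝ)) (hK : IsProperCone K) :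
    InvariantUnder A K ↔
      ∃ u v : Fin 2 → ℝ, (u ≠ 0 ∧ A.mulVec u = l • u) ∧
        (∃ x : ℝ, 0 < x ∧ A.mulVec v = l • v + x • u) ∧
        K = coneGen {u, v} := by
  constructor
  · intro hinv
    obtain ⟨p, q, hp, hq0, hAq, hAp, hb⟩ := exists_good hK A l hnd he
    have hq : q ∈ K := dir_mem hK A l hl hinv p q hp hAp hAq
    have hnq : -q ∉ K := by
      intro h
      have : q ∈ K ∩ (-K) := ⟨hq, by simpa using h⟩
      rw [hK.2.2.2.1] at this
      exact hq0 this
    have hneg : ∀ a : ℝ, a < 0 → a • q ∉ K := by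
      intro a ha h
      apply hnq
      have := hK.1 (-a)⁻¹ (inv_nonneg.2 (by linarith)) _ h
      convert this using 1
      rw [smul_smul, ← neg_one_smul ℝ q]
      congr 1
      have := ha.ne
      field_simp
    let S : Set ℝ := {t | p + t • q ∈ K}
    have hS0 : (0 : ℝ) ∈ S := by
      show p + (0 : ℝ) • q ∈ K
      simpa using hp
    have hSc : IsClosed S := hK.2.2.1.preimage (by fun_prop : Continuous fun t : ℝ => p + t • q)
    have hSup : ∀ t ∈ S, ∀ s, t ≤ s → s ∈ S := by
      intro t ht s hts
      have := hK.2.1 _ ht _ (hK.1 (s - t) (by linarith) _ hq)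
      show p + s • q ∈ K
      convert this using 1
      module
    have hSb : BddBelow S := by
      by_contra hnb
      apply hnq
      apply recession hK p
      intro n
      obtain ⟨t, ht, htn⟩ := not_bddBelow_iff.1 hnb (-(n : ℝ))
      have h : p + (-(n : ℝ)) • q ∈ K := hSup t ht _ htn.le
      convert h using 2
      module
    have hv : sInf S ∈ S := hSc.csInf_mem ⟨0, hS0⟩ hSb
    set t := sInf S with htdef
    have hvK : p + t • q ∈ K := hv
    refine ⟨q, p + t • q, ⟨hq0, hAq⟩, ⟨1, one_pos, ?_⟩, ?_⟩
    · rw [Matrix.mulVec_add, Matrix.mulVec_smul, hAp, hAq]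
      module
    · apply Set.Subset.antisymm
      · intro y hy
        rintro C ⟨hC1, hC2, hC3⟩
        obtain ⟨a, b, rfl⟩ := hb y
        have hqC : q ∈ C := hC3 (by simp)
        have hvC : p + t • q ∈ C := hC3 (by simp)
        have hb0 : 0 ≤ b := by
          by_contra hlt
          push Not at hlt
          refine hneg b hlt (dir_mem hK A l hl hinv _ (b • q) hy ?_ ?_)
          · rw [Matrix.mulVec_add, Matrix.mulVec_smul, Matrix.mulVec_smul, hAp, hAq]
            module
          · rw [Matrix.mulVec_smul, hAq, smul_comm]
        have hab : 0 ≤ a - b * t := by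
          rcases hb0.eq_or_lt with rfl | hbpos
          · by_contra hlt
            refine hneg a (by linarith) ?_
            simpa using hy
          · have : a / b ∈ S := by
              have h := hK.1 b⁻¹ (by positivity) _ hy
              show p + (a / b) • q ∈ K
              convert h using 1
              ext i
              simp
              field_simp
              ring
            have := csInf_le hSb this
            rw [← htdef, le_div_iff₀ hbpos] at this
            linarith
        have := hC2 _ (hC1 _ hab _ hqC) _ (hC1 _ hb0 _ hvC)
        convert this using 1
        module
      · intro y hy
        refine hy K ⟨hK.1, hK.2.1, ?_⟩
        rintro z (rfl | rfl)
        · exact hq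
        · exact hvK
  · rintro ⟨u, v, ⟨-, hAu⟩, ⟨x, hx, hAv⟩, hKe⟩
    have huK : u ∈ K := by
      rw [hKe]
      intro C hC
      exact hC.2.2 (by simp)
    have hvK : v ∈ K := by
      rw [hKe]
      intro C hC
      exact hC.2.2 (by simp)
    intro y hy
    rw [hKe] at hy
    refine hy {z | A.mulVec z ∈ K} ⟨?_, ?_, ?_⟩
    · intro a ha z hz
      show A.mulVec (a • z) ∈ K
      rw [Matrix.mulVec_smul]
      exact hK.1 a ha _ hz
    · intro z hz z' hz'
      show A.mulVec (z + z') ∈ K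
      rw [Matrix.mulVec_add]
      exact hK.2.1 _ hz _ hz'
    · rintro z (rfl | rfl)
      · show A.mulVec z ∈ K
        rw [hAu]
        exact hK.1 l hl _ huK
      · show A.mulVec z ∈ K
        rw [hAv]
        exact hK.2.1 _ (hK.1 l hl _ hvK) _ (hK.1 x hx.le _ huK)
end

section
/- Let A be a real 2×2 non-diagonalizable matrix with eigenvalue λ ≥ 0, and let K ⊆ ℝ² be an A-invariant proper cone. Then K contains an eigenvector of A, and every eigenvector of A contained in K lies on the boundary of K (i.e., no eigenvector of A belongs to the interior of K). -/
open Filter Topology in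
theorem eigen_parallel (A : Matrix (Fin 2) (Fin 2) ℝ) (hnd : ¬ IsDiagonalizable A)
    (u v : Fin 2 → ℝ) (a b : ℝ) (hu0 : u ≠ 0) (hu : A.mulVec u = a • u)
    (hv : A.mulVec v = b • v) : ∃ s : ℝ, v = s • u := by
  have hdet : u 0 * v 1 - v 0 * u 1 = 0 := by
    by_contra hne
    apply hnd
    have hd : (!![u 0, v 0; u 1, v 1] : Matrix (Fin 2) (Fin 2) ℝ).det ≠ 0 := by
      rw [Matrix.det_fin_two_of]; exact hne
    refine ⟨!![u 0, v 0; u 1, v 1], hd.isUnit, ?_⟩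
    have h1 : A * !![u 0, v 0; u 1, v 1] = !![u 0, v 0; u 1, v 1] * Matrix.diagonal ![a, b] := by
      have u0 := congrFun hu 0
      have u1 := congrFun hu 1
      have v0 := congrFun hv 0
      have v1 := congrFun hv 1
      simp [Matrix.mulVec, dotProduct, Fin.sum_univ_two] at u0 u1 v0 v1
      ext i j
      fin_cases i <;> fin_cases j <;>
        simp [Matrix.mul_apply, Fin.sum_univ_two, Matrix.diagonal] <;> linarith
    rw [Matrix.mul_assoc, h1, ← Matrix.mul_assoc, Matrix.nonsing_inv_mul _ hd.isUnit,
      Matrix.one_mul]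
    exact Matrix.isDiag_diagonal _
  by_cases h0 : u 0 = 0
  · have h1 : u 1 ≠ 0 := by
      intro h1
      apply hu0
      ext i
      fin_cases i <;> simp [h0, h1]
    refine ⟨v 1 / u 1, ?_⟩
    have h2 : v 0 = 0 := by
      have : v 0 * u 1 = 0 := by rw [h0] at hdet; linarith
      exact (mul_eq_zero.mp this).resolve_right h1
    ext i
    fin_cases i <;> simp [h0, h2, h1]
  · refine ⟨v 0 / u 0, ?_⟩
    ext i
    fin_cases i
    · simp [h0]
    · simp; field_simp; linarith

theorem sub_eigen (A : Matrix (Fin 2) (Fin 2) ℝ) (l : ℝ) (u : Fin 2 → ℝ) (hu0 : u ≠ 0)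
    (hu : A.mulVec u = l • u) (hnd : ¬ IsDiagonalizable A) (x : Fin 2 → ℝ) :
    A.mulVec (A.mulVec x - l • x) = l • (A.mulVec x - l • x) := by
  have hdet : (A 0 0 - l) * (A 1 1 - l) - A 0 1 * A 1 0 = 0 := by
    have u0 := congrFun hu 0
    have u1 := congrFun hu 1
    simp [Matrix.mulVec, dotProduct, Fin.sum_univ_two] at u0 u1
    by_contra hne
    apply hu0
    have e0 : ((A 0 0 - l) * (A 1 1 - l) - A 0 1 * A 1 0) * u 0 = 0 := by
      linear_combination (A 1 1 - l) * u0 - A 0 1 * u1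
    have e1 : ((A 0 0 - l) * (A 1 1 - l) - A 0 1 * A 1 0) * u 1 = 0 := by
      linear_combination (A 0 0 - l) * u1 - A 1 0 * u0
    ext i
    fin_cases i
    · exact (mul_eq_zero.mp e0).resolve_left hne
    · exact (mul_eq_zero.mp e1).resolve_left hne
  have hc : A.mulVec (A.mulVec x - l • x) = (A 0 0 + A 1 1 - l) • (A.mulVec x - l • x) := by
    ext i
    fin_cases i
    · simp [Matrix.mulVec, dotProduct, Fin.sum_univ_two, Matrix.vecHead, Matrix.vecTail]
      linear_combination (-x 0) * hdet
    · simp [Matrix.mulVec, dotProduct, Fin.sum_univ_two, Matrix.vecHead, Matrix.vecTail]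
      linear_combination (-x 1) * hdet
  obtain ⟨s, hs⟩ := eigen_parallel A hnd u _ _ _ hu0 hu hc
  rw [hs, Matrix.mulVec_smul, hu, smul_comm]

open Filter Topology in
theorem sub_mem_cone (A : Matrix (Fin 2) (Fin 2) ℝ) (l : ℝ) (hl : 0 ≤ l)
    (K : Set (Fin 2 → ℝ)) (hK : IsProperCone K) (hinv : InvariantUnder A K)
    (x d : Fin 2 → ℝ) (hx : x ∈ K) (hxd : A.mulVec x = l • x + d)
    (hd : A.mulVec d = l • d) : d ∈ K := by
  obtain ⟨hs, ha, hcl, hp, hi⟩ := hK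
  rcases hl.eq_or_lt with h0 | hpos
  · have := hinv x hx
    rw [hxd, ← h0] at this
    simpa using this
  · have key : ∀ n : ℕ, l • x + (n : ℝ) • d ∈ K := by
      intro n
      induction n with
      | zero => simpa using hs l hl x hx
      | succ n ih =>
        have h := hs l⁻¹ (by positivity) _ (hinv _ ih)
        rw [Matrix.mulVec_add, Matrix.mulVec_smul, Matrix.mulVec_smul, hxd, hd] at h
        convert h using 1
        ext i
        simp
        field_simp
        ring
    have hlim : Tendsto (fun n : ℕ => (1 / ((n : ℝ) + 1)) • (l • x) + d) atTop (𝓝 d) := by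
      have h := (tendsto_one_div_add_atTop_nhds_zero_nat (𝕜 := ℝ)).smul_const (l • x)
      simpa using h.add_const d
    refine hcl.mem_of_tendsto hlim (Eventually.of_forall fun n => ?_)
    have h := hs (1 / ((n : ℝ) + 1)) (by positivity) _ (key (n + 1))
    convert h using 1
    have : (n : ℝ) + 1 ≠ 0 := by positivity
    rw [smul_add, smul_smul _ ((n + 1 : ℕ) : ℝ)]
    push_cast
    rw [one_div_mul_cancel this, one_smul]

open Filter Topology in
theorem interior_perturb (K : Set (Fin 2 → ℝ)) (x w : Fin 2 → ℝ) (hx : x ∈ interior K) :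
    ∃ e : ℝ, 0 < e ∧ x + e • w ∈ K ∧ x - e • w ∈ K := by
  have hK : K ∈ 𝓝 x := mem_interior_iff_mem_nhds.mp hx
  have h1 : Tendsto (fun e : ℝ => x + e • w) (𝓝[>] 0) (𝓝 x) := by
    have : Continuous (fun e : ℝ => x + e • w) := by fun_prop
    simpa using (this.tendsto 0).mono_left nhdsWithin_le_nhds
  have h2 : Tendsto (fun e : ℝ => x - e • w) (𝓝[>] 0) (𝓝 x) := by
    have : Continuous (fun e : ℝ => x - e • w) := by fun_prop
    simpa using (this.tendsto 0).mono_left nhdsWithin_le_nhds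
  obtain ⟨e, he, ha, hb⟩ :=
    ((eventually_mem_nhdsWithin (a := (0 : ℝ)) (s := Set.Ioi 0)).and
      ((h1.eventually hK).and (h2.eventually hK))).exists
  exact ⟨e, he, ha, hb⟩

/-- Theorem: if `A` is a non-diagonalizable real `2×2` matrix with eigenvalue
`l ≥ 0` and `K` is an `A`-invariant proper cone, then `K` contains an
eigenvector of `A`, and no eigenvector of `A` lies in the interior of `K`. -/
theorem eigenvector_on_boundary_of_nondiagonalizable
    (A : Matrix (Fin 2) (Fin 2) ℝ) (l : ℝ) (hl : 0 ≤ l)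
    (hnd : ¬ IsDiagonalizable A)
    (he : ∃ u : Fin 2 → ℝ, u ≠ 0 ∧ A.mulVec u = l • u)
    (K : Set (Fin 2 → ℝ)) (hK : IsProperCone K) (hinv : InvariantUnder A K) :
    (∃ u : Fin 2 → ℝ, u ≠ 0 ∧ A.mulVec u = l • u ∧ u ∈ K) ∧
    (∀ (μ : ℝ) (u : Fin 2 → ℝ), u ≠ 0 → A.mulVec u = μ • u → u ∉ interior K) := by
  obtain ⟨u, hu0, hu⟩ := he
  have hN := sub_eigen A l u hu0 hu hnd
  have hmem : ∀ x ∈ K, A.mulVec x - l • x ∈ K := fun x hx =>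
    sub_mem_cone A l hl K hK hinv x _ hx (by abel) (hN x)
  have hw : ∃ w, A.mulVec w - l • w ≠ 0 := by
    by_contra! h
    apply hnd
    refine ⟨1, by simp, ?_⟩
    have hA : A = Matrix.diagonal (fun _ => l) := by
      apply Matrix.ext_of_mulVec_single
      intro i
      rw [sub_eq_zero.mp (h (Pi.single i 1))]
      ext j
      simp [Matrix.mulVec_diagonal]
    rw [hA]
    simpa using Matrix.isDiag_diagonal (fun _ : Fin 2 => l)
  obtain ⟨w, hw⟩ := hw
  constructor
  · obtain ⟨x, hx⟩ := hK.2.2.2.2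
    obtain ⟨e, he, h1, -⟩ := interior_perturb K x w hx
    by_cases h0 : A.mulVec x - l • x = 0
    · refine ⟨_, ?_, hN (x + e • w), hmem _ h1⟩
      have : A.mulVec (x + e • w) - l • (x + e • w)
          = (A.mulVec x - l • x) + e • (A.mulVec w - l • w) := by
        rw [Matrix.mulVec_add, Matrix.mulVec_smul]
        module
      rw [this, h0, zero_add]
      exact smul_ne_zero he.ne' hw
    · exact ⟨_, h0, hN x, hmem x (interior_subset hx)⟩
  · intro μ v hv0 hv hvi
    have hvl : A.mulVec v - l • v = 0 := by
      have h := hN v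
      have e : A.mulVec v - l • v = (μ - l) • v := by rw [hv]; module
      rw [e, Matrix.mulVec_smul, hv] at h
      have h2 : ((μ - l) * (μ - l)) • v = 0 := by
        have h3 := sub_eq_zero.mpr h
        rw [← h3]; module
      rcases smul_eq_zero.mp h2 with h4 | h4
      · rw [e, mul_self_eq_zero.mp h4, zero_smul]
      · exact absurd h4 hv0
    obtain ⟨e, he, h1, h2⟩ := interior_perturb K v w hvi
    have e1 : A.mulVec (v + e • w) - l • (v + e • w) = e • (A.mulVec w - l • w) := by
      have : A.mulVec (v + e • w) - l • (v + e • w)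
          = (A.mulVec v - l • v) + e • (A.mulVec w - l • w) := by
        rw [Matrix.mulVec_add, Matrix.mulVec_smul]
        module
      rw [this, hvl, zero_add]
    have e2 : A.mulVec (v - e • w) - l • (v - e • w) = -(e • (A.mulVec w - l • w)) := by
      have : A.mulVec (v - e • w) - l • (v - e • w)
          = (A.mulVec v - l • v) - e • (A.mulVec w - l • w) := by
        rw [Matrix.mulVec_sub, Matrix.mulVec_smul]
        module
      rw [this, hvl, zero_sub]
    have m1 := hmem _ h1
    have m2 := hmem _ h2
    rw [e1] at m1
    rw [e2] at m2
    have hz : e • (A.mulVec w - l • w) ∈ K ∩ (-K) := ⟨m1, m2⟩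
    rw [hK.2.2.2.1] at hz
    exact smul_ne_zero he.ne' hw hz
end

section
/- Let A be a real 2×2 matrix with det A < 0, so A has real eigenvalues λ₁ > 0 > λ₂. A proper cone K ⊆ ℝ² is A-invariant if and only if there exist an eigenvector u₁ of A for λ₁, an eigenvector u₂ of A for λ₂, and real numbers c₁ > 0 > c₂ satisfying λ₁/λ₂ ≤ c₁/c₂ ≤ λ₂/λ₁, such that K = Cone{u₁ + c₁u₂, u₁ + c₂u₂}. -/
lemma coneGen_pair {m : ℕ} (v w : Fin m → ℝ) :
    coneGen {v, w} = {x | ∃ s t : ℝ, 0 ≤ s ∧ 0 ≤ t ∧ x = s • v + t • w} := by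
  apply Set.Subset.antisymm
  · intro x hx
    refine hx _ ⟨?_, ?_, ?_⟩
    · rintro a ha _ ⟨s, t, hs, ht, rfl⟩
      exact ⟨a * s, a * t, by positivity, by positivity, by module⟩
    · rintro _ ⟨s, t, hs, ht, rfl⟩ _ ⟨s', t', hs', ht', rfl⟩
      exact ⟨s + s', t + t', by positivity, by positivity, by module⟩
    · rintro x (rfl | rfl)
      · exact ⟨1, 0, by simp, by simp, by simp⟩
      · exact ⟨0, 1, by simp, by simp, by simp⟩
  · rintro _ ⟨s, t, hs, ht, rfl⟩ K ⟨h1, h2, h3⟩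
    exact h2 _ (h1 s hs _ (h3 (by simp))) _ (h1 t ht _ (h3 (by simp)))

lemma coords (A : Matrix (Fin 2) (Fin 2) ℝ) (l₁ l₂ : ℝ) (h : l₁ ≠ l₂)
    (u₁ u₂ : Fin 2 → ℝ) (h1 : u₁ ≠ 0) (h2 : u₂ ≠ 0)
    (e1 : A.mulVec u₁ = l₁ • u₁) (e2 : A.mulVec u₂ = l₂ • u₂) (x : Fin 2 → ℝ) :
    ∃ a b : ℝ, x = a • u₁ + b • u₂ := by
  have hli : LinearIndependent ℝ ![u₁, u₂] := by
    rw [LinearIndependent.pair_iff]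
    intro s t hst
    have hA : A.mulVec (s • u₁ + t • u₂) = 0 := by rw [hst]; simp
    rw [Matrix.mulVec_add, Matrix.mulVec_smul, Matrix.mulVec_smul, e1, e2] at hA
    have k1 : ((l₁ - l₂) * s) • u₁ = 0 := by
      have : ((l₁ - l₂) * s) • u₁ = (s • l₁ • u₁ + t • l₂ • u₂) - l₂ • (s • u₁ + t • u₂) := by
        module
      rw [this, hA, hst]; simp
    have hs : s = 0 := by
      rcases smul_eq_zero.1 k1 with k | k
      · exact (mul_eq_zero.1 k).resolve_left (sub_ne_zero.2 h)
      · exact absurd k h1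
    subst hs
    refine ⟨rfl, ?_⟩
    have : t • u₂ = 0 := by simpa using hst
    exact (smul_eq_zero.1 this).resolve_right h2
  let B := basisOfLinearIndependentOfCardEqFinrank hli (by simp)
  refine ⟨B.repr x 0, B.repr x 1, ?_⟩
  have := B.sum_repr x
  rw [Fin.sum_univ_two] at this
  simpa [B] using this.symm

lemma bound_of_not_mem (K : Set (Fin 2 → ℝ)) (hc : ∀ a : ℝ, 0 ≤ a → ∀ x ∈ K, a • x ∈ K)
    (hcl : IsClosed K) (u w : Fin 2 → ℝ) (hw : w ∉ K) :
    ∃ M : ℝ, 0 ≤ M ∧ ∀ b : ℝ, u + b • w ∈ K → b ≤ M := by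
  have ho : IsOpen ((fun t : ℝ => t • u + w) ⁻¹' Kᶜ) :=
    hcl.isOpen_compl.preimage (by fun_prop)
  obtain ⟨ε, hε, hb⟩ := Metric.isOpen_iff.1 ho 0 (by simpa using hw)
  refine ⟨2 / ε, by positivity, fun b hbK => ?_⟩
  by_contra! hlt
  have hbpos : 0 < b := lt_trans (by positivity) hlt
  have hmem : b⁻¹ ∈ Metric.ball (0 : ℝ) ε := by
    rw [Metric.mem_ball, Real.dist_eq, sub_zero, abs_of_pos (by positivity)]
    rw [div_lt_iff₀ hε] at hlt
    rw [inv_lt_iff_one_lt_mul₀ hbpos]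
    linarith
  apply hb hmem
  have := hc b⁻¹ (by positivity) _ hbK
  rw [smul_add, smul_smul, inv_mul_cancel₀ hbpos.ne', one_smul] at this
  exact this

lemma forward (A : Matrix (Fin 2) (Fin 2) ℝ) (l₁ l₂ : ℝ) (hl₁ : 0 < l₁) (hl₂ : l₂ < 0)
    (u₁ u₂ : Fin 2 → ℝ) (h1 : u₁ ≠ 0) (h2 : u₂ ≠ 0)
    (e1 : A.mulVec u₁ = l₁ • u₁) (e2 : A.mulVec u₂ = l₂ • u₂)
    (K : Set (Fin 2 → ℝ)) (hK : IsProperCone K) (hA : InvariantUnder A K)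
    (hn : ∃ a b : ℝ, b ≠ 0 ∧ a • u₁ + b • u₂ ∈ K)
    (hz : ∀ b : ℝ, b • u₂ ∈ K → b = 0) 
    (hp : ∀ a b : ℝ, a • u₁ + b • u₂ ∈ K → a • u₁ ∈ K) (hu : u₁ ∈ K) :
    ∃ c₁ c₂ : ℝ, 0 < c₁ ∧ c₂ < 0 ∧
        l₁ / l₂ ≤ c₁ / c₂ ∧ c₁ / c₂ ≤ l₂ / l₁ ∧
        K = coneGen {u₁ + c₁ • u₂, u₁ + c₂ • u₂} := by
  obtain ⟨hc, hadd, hcl, hpt, -⟩ := hK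
  have hcz : ∀ v, v ∈ K → -v ∈ K → v = 0 := by
    intro v hv hv'
    have : v ∈ K ∩ -K := ⟨hv, by simpa using hv'⟩
    rw [hpt] at this
    simpa using this
  have ha : ∀ a b : ℝ, a • u₁ + b • u₂ ∈ K → 0 ≤ a := by
    intro a b hab
    by_contra! hlt
    have := hc (-a)⁻¹ (by rw [inv_nonneg]; linarith) _ (hp a b hab)
    rw [smul_smul, inv_neg, neg_mul, inv_mul_cancel₀ hlt.ne, neg_one_smul] at this
    exact h1 (hcz _ hu this)
  set S : Set ℝ := {b | u₁ + b • u₂ ∈ K} with hS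
  have hSab : ∀ a b : ℝ, 0 < a → a • u₁ + b • u₂ ∈ K → b / a ∈ S := by
    intro a b hpos hab
    have := hc a⁻¹ (by positivity) _ hab
    rw [smul_add, smul_smul, smul_smul, inv_mul_cancel₀ hpos.ne', one_smul, inv_mul_eq_div] at this
    exact this
  have hflip : ∀ b ∈ S, l₂ * b / l₁ ∈ S := by
    intro b hb
    apply hSab _ _ hl₁
    have := hA _ hb
    rw [Matrix.mulVec_add, Matrix.mulVec_smul, e1, e2] at this
    convert this using 2
    module
  have hSc : IsClosed S := hcl.preimage (f := fun b : ℝ => u₁ + b • u₂) (by fun_prop)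
  have hu2 : u₂ ∉ K := fun h => one_ne_zero (hz 1 (by simpa using h))
  have hu2' : -u₂ ∉ K := fun h => by
    have := hz (-1) (by simpa using h)
    norm_num at this
  obtain ⟨M, -, hM⟩ := bound_of_not_mem K hc hcl u₁ u₂ hu2
  obtain ⟨N, -, hN⟩ := bound_of_not_mem K hc hcl u₁ (-u₂) hu2'
  have hScpt : IsCompact S := by
    apply (isCompact_Icc (a := -N) (b := M)).of_isClosed_subset hSc
    intro b hb
    have := hN (-b) (by simpa [hS] using hb)
    exact ⟨by linarith, hM b hb⟩
  have hSn : S.Nonempty := ⟨0, by simpa [hS] using hu⟩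
  obtain ⟨c₁, hc₁, hmax⟩ := hScpt.exists_isGreatest hSn
  obtain ⟨c₂, hc₂, hmin⟩ := hScpt.exists_isLeast hSn
  have hne : ∃ b ∈ S, b ≠ 0 := by
    obtain ⟨a, b, hb, hab⟩ := hn
    rcases (ha a b hab).eq_or_lt with h0 | h0
    · exact absurd (hz b (by simpa [← h0] using hab)) hb
    · exact ⟨_, hSab a b h0 hab, div_ne_zero hb h0.ne'⟩
  obtain ⟨b, hb, hb0⟩ := hne
  have hsign : c₂ < 0 ∧ 0 < c₁ := by
    have hf := hflip b hb
    rcases lt_or_gt_of_ne hb0 with h | h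
    · exact ⟨(hmin hb).trans_lt h, lt_of_lt_of_le (div_pos (mul_pos_of_neg_of_neg hl₂ h) hl₁) (hmax hf)⟩
    · exact ⟨(hmin hf).trans_lt (div_neg_of_neg_of_pos (mul_neg_of_neg_of_pos hl₂ h) hl₁), h.trans_le (hmax hb)⟩
  obtain ⟨hneg, hpos⟩ := hsign
  refine ⟨c₁, c₂, hpos, hneg, ?_, ?_, ?_⟩
  · have := hmin (hflip c₁ hc₁)
    rw [le_div_iff₀ hl₁] at this
    rw [le_div_iff_of_neg hneg, div_mul_eq_mul_div, le_div_iff_of_neg hl₂]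
    nlinarith
  · have := hmax (hflip c₂ hc₂)
    rw [div_le_iff₀ hl₁] at this
    rw [div_le_iff_of_neg hneg, div_mul_eq_mul_div, div_le_iff₀ hl₁]
    nlinarith
  · rw [coneGen_pair]
    apply Set.Subset.antisymm
    · intro x hx
      obtain ⟨a, b, rfl⟩ := coords A l₁ l₂ (by linarith) u₁ u₂ h1 h2 e1 e2 x
      rcases (ha a b hx).eq_or_lt with h0 | h0
      · have hb := hz b (by simpa [← h0] using hx)
        exact ⟨0, 0, le_rfl, le_rfl, by simp [hb, ← h0]⟩
      · have hs := hSab a b h0 hx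
        have k1 := hmin hs
        have k2 := hmax hs
        rw [le_div_iff₀ h0] at k1
        rw [div_le_iff₀ h0] at k2
        have hd : 0 < c₁ - c₂ := by linarith
        refine ⟨(b - c₂ * a) / (c₁ - c₂), (c₁ * a - b) / (c₁ - c₂),
          div_nonneg (by linarith) hd.le, div_nonneg (by linarith) hd.le, ?_⟩
        match_scalars <;> field_simp <;> ring
    · rintro _ ⟨s, t, hs, ht, rfl⟩
      exact hadd _ (hc s hs _ hc₁) _ (hc t ht _ hc₂)

/-- Theorem: for a real `2×2` matrix `A` with `det A < 0` and (necessarily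
real) eigenvalues `l₁ > 0 > l₂`, a proper cone `K` is `A`-invariant iff
`K = Cone{u₁ + c₁ u₂, u₁ + c₂ u₂}` for eigenvectors `u₁` (for `l₁`), `u₂`
(for `l₂`) and reals `c₁ > 0 > c₂` with `l₁/l₂ ≤ c₁/c₂ ≤ l₂/l₁`. -/
theorem invariant_iff_of_negative_determinant
    (A : Matrix (Fin 2) (Fin 2) ℝ) (l₁ l₂ : ℝ)
    (hdet : A.det < 0) (hl₁ : 0 < l₁) (hl₂ : l₂ < 0)
    (he₁ : ∃ u : Fin 2 → ℝ, u ≠ 0 ∧ A.mulVec u = l₁ • u)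
    (he₂ : ∃ u : Fin 2 → ℝ, u ≠ 0 ∧ A.mulVec u = l₂ • u)
    (K : Set (Fin 2 → ℝ)) (hK : IsProperCone K) :
    InvariantUnder A K ↔
      ∃ (u₁ u₂ : Fin 2 → ℝ) (c₁ c₂ : ℝ),
        (u₁ ≠ 0 ∧ A.mulVec u₁ = l₁ • u₁) ∧
        (u₂ ≠ 0 ∧ A.mulVec u₂ = l₂ • u₂) ∧
        0 < c₁ ∧ c₂ < 0 ∧
        l₁ / l₂ ≤ c₁ / c₂ ∧ c₁ / c₂ ≤ l₂ / l₁ ∧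
        K = coneGen {u₁ + c₁ • u₂, u₁ + c₂ • u₂} := by
  have hne : l₁ ≠ l₂ := by linarith
  constructor
  · intro hA
    obtain ⟨u₁, h1, e1⟩ := he₁
    obtain ⟨u₂, h2, e2⟩ := he₂
    have hK' := hK
    obtain ⟨hc, hadd, hcl, hpt, ⟨x₀, hx₀⟩⟩ := hK'
    have hcz : ∀ v, v ∈ K → -v ∈ K → v = 0 := by
      intro v hv hv'
      have : v ∈ K ∩ -K := ⟨hv, by simpa using hv'⟩
      rw [hpt] at this
      simpa using this
    have hz : ∀ b : ℝ, b • u₂ ∈ K → b = 0 := by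
      intro b hb
      have k := hA _ hb
      rw [Matrix.mulVec_smul, e2] at k
      have k2 := hc (-l₂)⁻¹ (by rw [inv_nonneg]; linarith) _ k
      have k3 : (-l₂)⁻¹ • b • l₂ • u₂ = -(b • u₂) := by
        have hl0 : l₂ ≠ 0 := hl₂.ne
        match_scalars
        field_simp
      rw [k3] at k2
      exact (smul_eq_zero.1 (hcz _ hb k2)).resolve_right h2
    have hp : ∀ a b : ℝ, a • u₁ + b • u₂ ∈ K → a • u₁ ∈ K := by
      intro a b hab
      have k := hA _ hab
      rw [Matrix.mulVec_add, Matrix.mulVec_smul, Matrix.mulVec_smul, e1, e2] at k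
      have hd : 0 < l₁ - l₂ := by linarith
      have k2 := hc (l₁ - l₂)⁻¹ (by positivity) _ (hadd _ k _ (hc (-l₂) (by linarith) _ hab))
      convert k2 using 1
      match_scalars <;> field_simp <;> ring
    have hn : ∃ a b : ℝ, b ≠ 0 ∧ a • u₁ + b • u₂ ∈ K := by
      have ho : IsOpen ((fun t : ℝ => x₀ + t • u₂) ⁻¹' interior K) :=
        isOpen_interior.preimage (by fun_prop)
      obtain ⟨ε, hε, hb⟩ := Metric.isOpen_iff.1 ho 0 (by simpa using hx₀)
      have hm : x₀ + (ε / 2) • u₂ ∈ K := by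
        apply interior_subset
        apply hb
        rw [Metric.mem_ball, Real.dist_eq, sub_zero, abs_of_pos (by positivity)]
        linarith
      obtain ⟨a, b, rfl⟩ := coords A l₁ l₂ hne u₁ u₂ h1 h2 e1 e2 x₀
      by_cases hb0 : b = 0
      · refine ⟨a, b + ε / 2, by rw [hb0]; positivity, ?_⟩
        convert hm using 1
        module
      · exact ⟨a, b, hb0, interior_subset hx₀⟩
    obtain ⟨a, b, hb, hab⟩ := id hn
    have hau := hp a b hab
    rcases lt_trichotomy a 0 with h | h | h
    · have hu : -u₁ ∈ K := by
        have := hc (-a)⁻¹ (by rw [inv_nonneg]; linarith) _ hau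
        rwa [smul_smul, inv_neg, neg_mul, inv_mul_cancel₀ h.ne, neg_one_smul] at this
      have e1' : A.mulVec (-u₁) = l₁ • (-u₁) := by rw [Matrix.mulVec_neg, e1, smul_neg]
      obtain ⟨c₁, c₂, hh⟩ := forward A l₁ l₂ hl₁ hl₂ (-u₁) u₂ (neg_ne_zero.2 h1) h2 e1' e2 K hK hA
        ⟨-a, b, hb, by simpa using hab⟩ hz
        (fun a b hab => by simpa using hp (-a) b (by simpa using hab)) hu
      exact ⟨-u₁, u₂, c₁, c₂, ⟨neg_ne_zero.2 h1, e1'⟩, ⟨h2, e2⟩, hh⟩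
    · exact absurd (hz b (by simpa [h] using hab)) hb
    · have hu : u₁ ∈ K := by
        have := hc a⁻¹ (by positivity) _ hau
        rwa [smul_smul, inv_mul_cancel₀ h.ne', one_smul] at this
      obtain ⟨c₁, c₂, hh⟩ := forward A l₁ l₂ hl₁ hl₂ u₁ u₂ h1 h2 e1 e2 K hK hA hn hz hp hu
      exact ⟨u₁, u₂, c₁, c₂, ⟨h1, e1⟩, ⟨h2, e2⟩, hh⟩
  · rintro ⟨u₁, u₂, c₁, c₂, ⟨h1, e1⟩, ⟨h2, e2⟩, hpos, hneg, hr1, hr2, rfl⟩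
    rw [coneGen_pair]
    rintro _ ⟨s, t, hs, ht, rfl⟩
    rw [le_div_iff_of_neg hneg, div_mul_eq_mul_div, le_div_iff_of_neg hl₂] at hr1
    rw [div_le_iff_of_neg hneg, div_mul_eq_mul_div, div_le_iff₀ hl₁] at hr2
    have hd : 0 < c₁ - c₂ := by linarith
    have hc1l : l₂ * c₁ ≤ 0 := by nlinarith
    have hc2l : 0 ≤ l₂ * c₂ := by nlinarith
    have hx1 : 0 ≤ s * (l₂ * c₁ - l₁ * c₂) := mul_nonneg hs (by linarith)
    have hx2 : 0 ≤ t * (l₂ * c₂ - l₁ * c₂) := mul_nonneg ht (by nlinarith)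
    have hx3 : 0 ≤ s * (l₁ * c₁ - l₂ * c₁) := mul_nonneg hs (by nlinarith)
    have hx4 : 0 ≤ t * (l₁ * c₁ - l₂ * c₂) := mul_nonneg ht (by linarith)
    refine ⟨(s * (l₂ * c₁ - l₁ * c₂) + t * (l₂ * c₂ - l₁ * c₂)) / (c₁ - c₂),
      (s * (l₁ * c₁ - l₂ * c₁) + t * (l₁ * c₁ - l₂ * c₂)) / (c₁ - c₂),
      div_nonneg (by linarith) hd.le, div_nonneg (by linarith) hd.le, ?_⟩
    simp only [Matrix.mulVec_add, Matrix.mulVec_smul, e1, e2]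
    match_scalars <;> field_simp <;> ring
end

section
/- Let A be a real 2×2 matrix with trace A ≥ 0 and det A < 0 (so A has real eigenvalues λ₁ = ρ(A) > 0 > λ₂). If K is an A-invariant proper cone and u is an eigenvector of A for λ₁ with u ∈ K, then u lies in the interior of K. -/
/-- Theorem: let `A` be a real `2×2` matrix with `trace A ≥ 0` and
`det A < 0` (so its positive eigenvalue is the spectral radius). If `K` is
an `A`-invariant proper cone and `u ∈ K` is an eigenvector of `A` for the
positive (dominant) eigenvalue, then `u` lies in the interior of `K`. -/
theorem dominant_eigenvector_in_interior
    (A : Matrix (Fin 2) (Fin 2) ℝ) (htr : 0 ≤ A.trace) (hdet : A.det < 0)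
    (K : Set (Fin 2 → ℝ)) (hK : IsProperCone K) (hinv : InvariantUnder A K)
    (l₁ : ℝ) (hl₁ : 0 < l₁) (u : Fin 2 → ℝ) (hu : u ≠ 0)
    (heig : A.mulVec u = l₁ • u) (huK : u ∈ K) :
    u ∈ interior K := by
  obtain ⟨hsc, hadd, -, hpt, x, hx⟩ := hK
  have hxK : x ∈ K := interior_subset hx
  have hxn : K ∈ nhds x := mem_interior_iff_mem_nhds.mp hx
  have hp : l₁ • A.mulVec x ∈ K := hsc _ hl₁.le _ (hinv x hxK)
  obtain ⟨c, hc⟩ : ∃ c : ℝ, c • u = l₁ • A.mulVec x + (-A.det) • x := by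
    have e0 := congrFun heig 0
    have e1 := congrFun heig 1
    simp only [Matrix.mulVec, dotProduct, Fin.sum_univ_two, Pi.smul_apply, smul_eq_mul] at e0 e1
    have key : u 0 * (l₁ • A.mulVec x + (-A.det) • x) 1
        = u 1 * (l₁ • A.mulVec x + (-A.det) • x) 0 := by
      simp only [Matrix.mulVec, dotProduct, Fin.sum_univ_two, Pi.smul_apply, smul_eq_mul,
        Pi.add_apply, Matrix.det_fin_two]
      linear_combination (-(A 1 0 * x 0 + A 1 1 * x 1)) * e0 + (A 0 0 * x 0 + A 0 1 * x 1) * e1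
    generalize l₁ • A.mulVec x + (-A.det) • x = w at key
    by_cases h0 : u 0 = 0
    · have h1 : u 1 ≠ 0 := by
        intro h1
        apply hu
        ext i
        fin_cases i <;> simp [h0, h1]
      refine ⟨w 1 / u 1, ?_⟩
      ext i
      fin_cases i
      · simp only [Fin.zero_eta, Pi.smul_apply, smul_eq_mul]
        field_simp
        linarith
      · simp [h1]
    · refine ⟨w 0 / u 0, ?_⟩
      ext i
      fin_cases i
      · simp [h0]
      · simp only [Fin.mk_one, Pi.smul_apply, smul_eq_mul]
        field_simp
        linarith
  have hs : 0 < -A.det := by linarith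
  generalize -A.det = s at hs hc
  generalize l₁ • A.mulVec x = p at hp hc
  rcases le_or_gt c 0 with hc0 | hc0
  · exfalso
    have hcont : Filter.Tendsto (fun e : ℝ => x - e • u) (nhdsWithin 0 (Set.Ioi 0)) (nhds x) := by
      have : Continuous (fun e : ℝ => x - e • u) := by fun_prop
      have h := this.tendsto 0
      simp only [zero_smul, sub_zero] at h
      exact h.mono_left nhdsWithin_le_nhds
    obtain ⟨e, heK, he⟩ := ((hcont.eventually hxn).and self_mem_nhdsWithin).exists
    have he : 0 < e := he
    have h1 : p + s • (x - e • u) ∈ K := hadd _ hp _ (hsc s hs.le _ heK)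
    have h2 : p + s • (x - e • u) = (c - s * e) • u := by
      rw [sub_smul, hc, smul_sub, mul_smul]; abel
    have hpos : 0 < s * e - c := by nlinarith [mul_pos hs he]
    rw [h2] at h1
    have h3 := hsc (s * e - c)⁻¹ (inv_pos.mpr hpos).le _ h1
    have h4 : (s * e - c)⁻¹ • (c - s * e) • u = -u := by
      rw [smul_smul, show (s * e - c)⁻¹ * (c - s * e) = -1 by
        rw [← neg_sub (s * e) c, mul_neg, inv_mul_cancel₀ hpos.ne'], neg_one_smul]
    rw [h4] at h3
    have : u ∈ K ∩ (-K) := ⟨huK, h3⟩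
    rw [hpt] at this
    exact hu this
  · rw [mem_interior_iff_mem_nhds]
    have hcont : Filter.Tendsto (fun z : Fin 2 → ℝ => s⁻¹ • (c • z - p)) (nhds u) (nhds x) := by
      have : Continuous (fun z : Fin 2 → ℝ => s⁻¹ • (c • z - p)) := by fun_prop
      have h := this.tendsto u
      simp only [hc, add_sub_cancel_left, inv_smul_smul₀ hs.ne'] at h
      exact h
    filter_upwards [hcont.eventually hxn] with z hz
    have h1 := hsc c⁻¹ (inv_pos.mpr hc0).le _ (hadd _ hp _ (hsc s hs.le _ hz))
    rwa [smul_inv_smul₀ hs.ne', add_sub_cancel, inv_smul_smul₀ hc0.ne'] at h1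
end

section
/- Let A be a real 2×2 matrix with det A ≤ 0 and trace A ≥ 0. Then for every nonzero v ∈ ℝ², the cone Cone{v, Av} is A-invariant; moreover, Cone{v, Av} is a proper cone if and only if v is not an eigenvector of A. -/
theorem mem_coneGen_pair {m : ℕ} (v w x : Fin m → ℝ) :
    x ∈ coneGen {v, w} ↔ ∃ a b : ℝ, 0 ≤ a ∧ 0 ≤ b ∧ x = a • v + b • w := by
  constructor
  · intro h
    refine h {x | ∃ a b : ℝ, 0 ≤ a ∧ 0 ≤ b ∧ x = a • v + b • w} ⟨?_, ?_, ?_⟩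
    · rintro c hc x ⟨a, b, ha, hb, rfl⟩
      exact ⟨c * a, c * b, mul_nonneg hc ha, mul_nonneg hc hb, by
        rw [smul_add, smul_smul, smul_smul]⟩
    · rintro x ⟨a, b, ha, hb, rfl⟩ y ⟨a2, b2, ha2, hb2, rfl⟩
      exact ⟨a + a2, b + b2, add_nonneg ha ha2, add_nonneg hb hb2, by module⟩
    · rintro x (rfl | rfl)
      · exact ⟨1, 0, by norm_num, le_rfl, by simp⟩
      · exact ⟨0, 1, le_rfl, by norm_num, by simp⟩
  · rintro ⟨a, b, ha, hb, rfl⟩ K ⟨h1, h2, h3⟩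
    exact h2 _ (h1 a ha _ (h3 (by simp))) _ (h1 b hb _ (h3 (by simp)))

theorem mulVec_mulVec_two (A : Matrix (Fin 2) (Fin 2) ℝ) (v : Fin 2 → ℝ) :
    A.mulVec (A.mulVec v) = (-A.det) • v + A.trace • A.mulVec v := by
  ext i
  fin_cases i <;>
  · simp [Matrix.mulVec, dotProduct, Fin.sum_univ_two, Matrix.det_fin_two, Matrix.trace_fin_two]
    ring

theorem not_proper_of_parallel (v : Fin 2 → ℝ) (hv : v ≠ 0) (μ : ℝ) :
    ¬ IsProperCone (coneGen {v, μ • v}) := by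
  rintro ⟨-, -, -, -, x, hx⟩
  have hK : ∀ y ∈ coneGen {v, μ • v}, y 0 * v 1 - y 1 * v 0 = 0 := by
    intro y hy
    obtain ⟨a, b, -, -, rfl⟩ := (mem_coneGen_pair _ _ _).1 hy
    simp
    ring
  have hc : Continuous (fun t : ℝ => x + t • (![v 1, -v 0] : Fin 2 → ℝ)) := by fun_prop
  have hn : ∀ᶠ t in nhds (0 : ℝ), x + t • (![v 1, -v 0] : Fin 2 → ℝ) ∈ coneGen {v, μ • v} := by
    apply hc.continuousAt.eventually_mem
    simpa using mem_interior_iff_mem_nhds.1 hx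
  obtain ⟨ε, hε, hb⟩ := Metric.eventually_nhds_iff.1 hn
  have h1 := hK _ (hb (y := ε / 2) (by
    rw [Real.dist_eq, sub_zero, abs_of_pos (by positivity)]; linarith))
  have h0 := hK x (interior_subset hx)
  simp at h1
  have h2 : ε / 2 * (v 0 ^ 2 + v 1 ^ 2) = 0 := by linarith
  have h3 : v 0 ^ 2 + v 1 ^ 2 = 0 := by
    rcases mul_eq_zero.1 h2 with h | h
    · linarith
    · exact h
  apply hv
  ext i
  fin_cases i
  · simp; nlinarith [sq_nonneg (v 0), sq_nonneg (v 1)]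
  · simp; nlinarith [sq_nonneg (v 0), sq_nonneg (v 1)]

theorem proper_of_det_ne (v w : Fin 2 → ℝ) (hD : v 0 * w 1 - v 1 * w 0 ≠ 0) :
    IsProperCone (coneGen {v, w}) := by
  have hm : ∀ x, x ∈ coneGen {v, w} ↔
      0 ≤ (x 0 * w 1 - x 1 * w 0) / (v 0 * w 1 - v 1 * w 0) ∧
      0 ≤ (v 0 * x 1 - v 1 * x 0) / (v 0 * w 1 - v 1 * w 0) := by
    intro x
    rw [mem_coneGen_pair]
    constructor
    · rintro ⟨a, b, ha, hb, rfl⟩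
      have e1 : ((a • v + b • w) 0 * w 1 - (a • v + b • w) 1 * w 0) /
          (v 0 * w 1 - v 1 * w 0) = a := by
        rw [div_eq_iff hD]; simp; ring
      have e2 : (v 0 * (a • v + b • w) 1 - v 1 * (a • v + b • w) 0) /
          (v 0 * w 1 - v 1 * w 0) = b := by
        rw [div_eq_iff hD]; simp; ring
      rw [e1, e2]
      exact ⟨ha, hb⟩
    · rintro ⟨ha, hb⟩
      refine ⟨_, _, ha, hb, ?_⟩
      ext i
      fin_cases i
      · simp
        rw [div_mul_eq_mul_div, div_mul_eq_mul_div, ← add_div, eq_div_iff hD]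
        ring
      · simp
        rw [div_mul_eq_mul_div, div_mul_eq_mul_div, ← add_div, eq_div_iff hD]
        ring
  refine ⟨?_, ?_, ?_, ?_, ?_⟩
  · intro c hc x hx K hK
    exact hK.1 c hc x (hx K hK)
  · intro x hx y hy K hK
    exact hK.2.1 x (hx K hK) y (hy K hK)
  · have : coneGen {v, w} = {x : Fin 2 → ℝ |
      0 ≤ (x 0 * w 1 - x 1 * w 0) / (v 0 * w 1 - v 1 * w 0)} ∩ {x : Fin 2 → ℝ |
      0 ≤ (v 0 * x 1 - v 1 * x 0) / (v 0 * w 1 - v 1 * w 0)} := Set.ext hm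
    rw [this]
    exact (isClosed_le (by fun_prop) (by fun_prop)).inter
      (isClosed_le (by fun_prop) (by fun_prop))
  · ext x
    constructor
    · rintro ⟨h1, h2⟩
      obtain ⟨a1, b1⟩ := (hm x).1 h1
      obtain ⟨a2, b2⟩ := (hm (-x)).1 h2
      have ha : (x 0 * w 1 - x 1 * w 0) / (v 0 * w 1 - v 1 * w 0) = 0 := by
        apply le_antisymm _ a1
        rw [← neg_nonneg, ← neg_div]
        refine a2.trans_eq ?_
        simp only [Pi.neg_apply]
        ring
      have hb : (v 0 * x 1 - v 1 * x 0) / (v 0 * w 1 - v 1 * w 0) = 0 := by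
        apply le_antisymm _ b1
        rw [← neg_nonneg, ← neg_div]
        refine b2.trans_eq ?_
        simp only [Pi.neg_apply]
        ring
      have ha2 := (div_eq_zero_iff.1 ha).resolve_right hD
      have hb2 := (div_eq_zero_iff.1 hb).resolve_right hD
      rw [Set.mem_singleton_iff]
      ext i
      fin_cases i
      · have hz : x 0 * (v 0 * w 1 - v 1 * w 0) = 0 := by
          linear_combination v 0 * ha2 + w 0 * hb2
        exact (mul_eq_zero.1 hz).resolve_right hD
      · have hz : x 1 * (v 0 * w 1 - v 1 * w 0) = 0 := by
          linear_combination v 1 * ha2 + w 1 * hb2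
        exact (mul_eq_zero.1 hz).resolve_right hD
    · rintro rfl
      refine ⟨(hm _).2 (by simp), ?_⟩
      rw [Set.mem_neg]
      exact (hm _).2 (by simp)
  · refine ⟨v + w, ?_⟩
    refine interior_maximal (t := {x : Fin 2 → ℝ |
      0 < (x 0 * w 1 - x 1 * w 0) / (v 0 * w 1 - v 1 * w 0)} ∩ {x : Fin 2 → ℝ |
      0 < (v 0 * x 1 - v 1 * x 0) / (v 0 * w 1 - v 1 * w 0)}) ?_ ?_ ?_
    · rintro x ⟨h1, h2⟩
      exact (hm x).2 ⟨le_of_lt h1, le_of_lt h2⟩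
    · exact (isOpen_lt (by fun_prop) (by fun_prop)).inter
        (isOpen_lt (by fun_prop) (by fun_prop))
    · constructor
      · have : ((v + w) 0 * w 1 - (v + w) 1 * w 0) / (v 0 * w 1 - v 1 * w 0) = 1 := by
          rw [div_eq_iff hD]; simp; ring
        simp only [Set.mem_ofPred_eq, this, zero_lt_one]
      · have : (v 0 * (v + w) 1 - v 1 * (v + w) 0) / (v 0 * w 1 - v 1 * w 0) = 1 := by
          rw [div_eq_iff hD]; simp; ring
        simp only [Set.mem_ofPred_eq, this, zero_lt_one]

theorem parallel_of_det_eq (v w : Fin 2 → ℝ) (hv : v ≠ 0)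
    (hD : v 0 * w 1 - v 1 * w 0 = 0) : ∃ μ : ℝ, w = μ • v := by
  by_cases h0 : v 0 = 0
  · have h1 : v 1 ≠ 0 := by
      intro h1
      apply hv
      ext i
      fin_cases i
      · exact h0
      · exact h1
    have hw : w 0 = 0 := by
      rw [h0] at hD
      have hz : v 1 * w 0 = 0 := by linarith
      exact (mul_eq_zero.1 hz).resolve_left h1
    refine ⟨w 1 / v 1, ?_⟩
    ext i
    fin_cases i
    · simp [h0, hw]
    · simp [h1]
  · refine ⟨w 0 / v 0, ?_⟩
    ext i
    fin_cases i
    · simp [h0]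
    · simp
      rw [div_mul_eq_mul_div, eq_div_iff h0]
      linarith

/-- Theorem: if `det A ≤ 0` and `trace A ≥ 0`, then for every nonzero `v`
the cone `Cone{v, Av}` is `A`-invariant; moreover it is a proper cone iff
`v` is not an eigenvector of `A`. -/
theorem cone_v_Av_invariant
    (A : Matrix (Fin 2) (Fin 2) ℝ) (hdet : A.det ≤ 0) (htr : 0 ≤ A.trace)
    (v : Fin 2 → ℝ) (hv : v ≠ 0) :
    InvariantUnder A (coneGen {v, A.mulVec v}) ∧
      (IsProperCone (coneGen {v, A.mulVec v}) ↔ ∀ μ : ℝ, A.mulVec v ≠ μ • v) := by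
  constructor
  · intro x hx
    obtain ⟨a, b, ha, hb, rfl⟩ := (mem_coneGen_pair _ _ _).1 hx
    refine (mem_coneGen_pair _ _ _).2 ⟨b * (-A.det), a + b * A.trace,
      mul_nonneg hb (by linarith), add_nonneg ha (mul_nonneg hb htr), ?_⟩
    rw [Matrix.mulVec_add, Matrix.mulVec_smul, Matrix.mulVec_smul, mulVec_mulVec_two]
    module
  · constructor
    · intro h μ hμ
      rw [hμ] at h
      exact not_proper_of_parallel v hv μ h
    · intro h
      apply proper_of_det_ne
      intro hD
      obtain ⟨μ, hμ⟩ := parallel_of_det_eq v _ hv hD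
      exact h μ hμ
end

section
/- Let A₁,…,Aₙ be real 2×2 Vandergraft matrices sharing a common dominant eigenvector u. Then there exists a proper cone K ⊆ ℝ² invariant under every A_j if and only if either (i) every A_j is diagonalizable, and any two matrices A_i, A_j with det A_i < 0, trace A_i = 0, det A_j < 0, trace A_j = 0 are scalar multiples of each other, or (ii) every A_j has det A_j ≥ 0, and any two non-diagonalizable matrices among A₁,…,Aₙ have the same orientation with respect to u. -/
/-- `A` is a Vandergraft matrix: `(trace A)² ≥ 4 det A` and `trace A ≥ 0`. -/
def IsVandergraft (A : Matrix (Fin 2) (Fin 2) ℝ) : Prop :=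
  A.trace ^ 2 ≥ 4 * A.det ∧ 0 ≤ A.trace

/-- The spectral radius (largest eigenvalue) of a `2×2` Vandergraft matrix. -/
noncomputable def rho2 (A : Matrix (Fin 2) (Fin 2) ℝ) : ℝ :=
  (A.trace + Real.sqrt (A.trace ^ 2 - 4 * A.det)) / 2

/-- `v` is positively associated with the eigenvector `u` relative to `A`:
`A u = t u` and `A v = t v + x u` for some `x > 0`. -/
def PosAssoc (A : Matrix (Fin 2) (Fin 2) ℝ) (u v : Fin 2 → ℝ) : Prop :=
  ∃ t x : ℝ, 0 < x ∧ A.mulVec u = t • u ∧ A.mulVec v = t • v + x • u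

/-- First coordinate along `u`. -/
noncomputable def cX (u : Fin 2 → ℝ) : (Fin 2 → ℝ) →ₗ[ℝ] ℝ where
  toFun v := (u 0 * v 0 + u 1 * v 1) / (u 0 ^ 2 + u 1 ^ 2)
  map_add' x y := by simp only [Pi.add_apply]; ring
  map_smul' a x := by simp only [Pi.smul_apply, smul_eq_mul, RingHom.id_apply]; ring

/-- Second coordinate, along the rotated vector. -/
noncomputable def cY (u : Fin 2 → ℝ) : (Fin 2 → ℝ) →ₗ[ℝ] ℝ where
  toFun v := (u 0 * v 1 - u 1 * v 0) / (u 0 ^ 2 + u 1 ^ 2)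
  map_add' x y := by simp only [Pi.add_apply]; ring
  map_smul' a x := by simp only [Pi.smul_apply, smul_eq_mul, RingHom.id_apply]; ring

/-- The rotated vector. -/
def cW (u : Fin 2 → ℝ) : Fin 2 → ℝ := ![-u 1, u 0]

lemma normSq_pos {u : Fin 2 → ℝ} (hu : u ≠ 0) : 0 < u 0 ^ 2 + u 1 ^ 2 := by
  by_contra h
  apply hu
  have h0 : u 0 = 0 := by nlinarith [sq_nonneg (u 0), sq_nonneg (u 1)]
  have h1 : u 1 = 0 := by nlinarith [sq_nonneg (u 0), sq_nonneg (u 1)]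
  ext i; fin_cases i <;> simp [h0, h1]

lemma cX_u {u : Fin 2 → ℝ} (hu : u ≠ 0) : cX u u = 1 := by
  have := (normSq_pos hu).ne'
  simp only [cX, LinearMap.coe_mk, AddHom.coe_mk]
  field_simp

lemma cY_u (u : Fin 2 → ℝ) : cY u u = 0 := by
  simp only [cY, LinearMap.coe_mk, AddHom.coe_mk]
  ring

lemma cX_w (u : Fin 2 → ℝ) : cX u (cW u) = 0 := by
  simp only [cX, cW, LinearMap.coe_mk, AddHom.coe_mk]
  simp
  left; ring

lemma cY_w {u : Fin 2 → ℝ} (hu : u ≠ 0) : cY u (cW u) = 1 := by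
  have := (normSq_pos hu).ne'
  simp only [cY, cW, LinearMap.coe_mk, AddHom.coe_mk]
  simp
  field_simp

lemma decomp {u : Fin 2 → ℝ} (hu : u ≠ 0) (v : Fin 2 → ℝ) :
    v = cX u v • u + cY u v • cW u := by
  have := (normSq_pos hu).ne'
  ext i; fin_cases i <;> simp [cX, cY, cW] <;> field_simp <;> ring

lemma coord_ext {u : Fin 2 → ℝ} (hu : u ≠ 0) {v v' : Fin 2 → ℝ}
    (h1 : cX u v = cX u v') (h2 : cY u v = cY u v') : v = v' := by
  rw [decomp hu v, decomp hu v', h1, h2]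

/-- Upper triangular form in the basis `u, w`. -/
structure TriRep (A : Matrix (Fin 2) (Fin 2) ℝ) (u : Fin 2 → ℝ) (r s b : ℝ) : Prop where
  hX : ∀ v, cX u (A.mulVec v) = r * cX u v + b * cY u v
  hY : ∀ v, cY u (A.mulVec v) = s * cY u v
  tr : A.trace = r + s
  dt : A.det = r * s
  r0 : 0 ≤ r
  abs_s : |s| ≤ r

lemma exists_rep {A : Matrix (Fin 2) (Fin 2) ℝ} {u : Fin 2 → ℝ} (hu : u ≠ 0)
    (hV : IsVandergraft A) (h : A.mulVec u = rho2 A • u) :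
    ∃ r s b, TriRep A u r s b := by
  have hN := (normSq_pos hu)
  obtain ⟨h1, h2⟩ := hV
  have hr : rho2 A * 2 = A.trace + Real.sqrt (A.trace ^ 2 - 4 * A.det) := by
    unfold rho2; ring
  have hsq := Real.sq_sqrt (show 0 ≤ A.trace ^ 2 - 4 * A.det by linarith)
  have hs0 := Real.sqrt_nonneg (A.trace ^ 2 - 4 * A.det)
  generalize Real.sqrt (A.trace ^ 2 - 4 * A.det) = q at *
  generalize rho2 A = r at *
  have hdet : A.det = r * (A.trace - r) := by
    have : q = 2 * r - A.trace := by linarith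
    subst this; nlinarith
  have hl : ∀ v, A.mulVec v = cX u v • (r • u) + cY u v • A.mulVec (cW u) := by
    intro v
    conv_lhs => rw [decomp hu v]
    rw [Matrix.mulVec_add, Matrix.mulVec_smul, Matrix.mulVec_smul, h]
  have hsw : cY u (A.mulVec (cW u)) = A.trace - r := by
    have e0 := congrFun h 0
    have e1 := congrFun h 1
    simp [Matrix.mulVec, dotProduct, Fin.sum_univ_two] at e0 e1
    simp [cY, cW, Matrix.mulVec, dotProduct, Fin.sum_univ_two, Matrix.trace]
    rw [div_eq_iff hN.ne']
    linear_combination -u 0 * e0 - u 1 * e1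
  refine ⟨r, A.trace - r, cX u (A.mulVec (cW u)), ?_, ?_, by ring, hdet, by linarith, ?_⟩
  · intro v
    rw [hl v]; simp only [map_add, map_smul, smul_eq_mul, cX_u hu]; ring
  · intro v
    rw [hl v]; simp only [map_add, map_smul, smul_eq_mul, cY_u u, hsw]; ring
  · rw [abs_le]; constructor <;> linarith

lemma diag_of {A : Matrix (Fin 2) (Fin 2) ℝ} {u : Fin 2 → ℝ} (hu : u ≠ 0) {r s b : ℝ}
    (h : TriRep A u r s b) : IsDiagonalizable A ↔ (r ≠ s ∨ b = 0) := by
  constructor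
  · rintro ⟨P, hP, hD⟩
    by_contra! hc
    obtain ⟨rfl, hb⟩ := hc
    have ht : (P⁻¹ * A * P).trace = r + r := by
      rw [Matrix.trace_mul_comm, ← Matrix.mul_assoc, Matrix.mul_nonsing_inv _ hP, Matrix.one_mul,
        h.tr]
    have hd : (P⁻¹ * A * P).det = r * r := by
      rw [Matrix.det_mul_comm, ← Matrix.mul_assoc, Matrix.mul_nonsing_inv _ hP, Matrix.one_mul,
        h.dt]
    have hA : A = P * (P⁻¹ * A * P) * P⁻¹ := by
      rw [Matrix.mul_assoc P⁻¹, ← Matrix.mul_assoc P, Matrix.mul_nonsing_inv _ hP, Matrix.one_mul,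
        Matrix.mul_assoc, Matrix.mul_nonsing_inv _ hP, Matrix.mul_one]
    generalize P⁻¹ * A * P = D at *
    have h01 : D 0 1 = 0 := hD (by decide)
    have h10 : D 1 0 = 0 := hD (by decide)
    rw [Matrix.trace_fin_two] at ht
    rw [Matrix.det_fin_two, h01] at hd
    have h00 : D 0 0 = r := by
      have : (D 0 0 - r) ^ 2 = 0 := by
        have : D 1 1 = r + r - D 0 0 := by linarith
        rw [this] at hd; nlinarith
      have := pow_eq_zero_iff (two_ne_zero) |>.1 this
      linarith
    have h11 : D 1 1 = r := by linarith
    have hDr : D = r • (1 : Matrix (Fin 2) (Fin 2) ℝ) := by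
      ext i j; fin_cases i <;> fin_cases j <;> simp [h00, h01, h10, h11]
    rw [hDr] at hA
    have hA' : A = r • (1 : Matrix (Fin 2) (Fin 2) ℝ) := by
      rw [hA]; simp [Matrix.mul_nonsing_inv _ hP]
    have := h.hX (cW u)
    rw [hA', Matrix.smul_mulVec, Matrix.one_mulVec, map_smul, cX_w, cY_w hu] at this
    simp at this
    exact hb this.symm
  · intro hc
    obtain ⟨α, β, hβ, hαβ⟩ : ∃ α β : ℝ, β ≠ 0 ∧ r * α + b * β = s * α := by
      rcases hc with hc | hc
      · exact ⟨b, s - r, sub_ne_zero.2 (Ne.symm hc), by ring⟩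
      · exact ⟨0, 1, one_ne_zero, by simp [hc]⟩
    have hN := (normSq_pos hu)
    have e1 : A.mulVec u = r • u := by
      apply coord_ext hu
      · rw [h.hX, map_smul, cX_u hu, cY_u]; simp
      · rw [h.hY, map_smul, cY_u]; simp
    have e2 : A.mulVec (α • u + β • cW u) = s • (α • u + β • cW u) := by
      apply coord_ext hu
      · rw [h.hX]; simp [cX_u hu, cY_u, cX_w, cY_w hu]; linarith
      · rw [h.hY, map_smul, smul_eq_mul]
    let P : Matrix (Fin 2) (Fin 2) ℝ :=
      !![u 0, α * u 0 - β * u 1; u 1, α * u 1 + β * u 0]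
    have hdet : P.det = β * (u 0 ^ 2 + u 1 ^ 2) := by
      simp [P, Matrix.det_fin_two]; ring
    have hP : IsUnit P.det := by
      rw [hdet, isUnit_iff_ne_zero]; exact mul_ne_zero hβ hN.ne'
    refine ⟨P, hP, ?_⟩
    have hAP : A * P = P * Matrix.diagonal ![r, s] := by
      have a0 := congrFun e1 0
      have a1 := congrFun e1 1
      have b0 := congrFun e2 0
      have b1 := congrFun e2 1
      simp [cW, Matrix.mulVec, dotProduct, Fin.sum_univ_two] at a0 a1 b0 b1
      simp only [Matrix.vecHead, Matrix.vecTail, Function.comp, Pi.smul_apply, smul_eq_mul] at b0 b1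
      simp at b0 b1
      ext i j; fin_cases i <;> fin_cases j <;>
        simp [P, Matrix.mul_apply, Fin.sum_univ_two]
      · linarith
      · linarith
      · linarith
      · linarith
    rw [Matrix.mul_assoc, hAP, ← Matrix.mul_assoc, Matrix.nonsing_inv_mul _ hP, Matrix.one_mul]
    exact Matrix.isDiag_diagonal _

lemma posAssoc_iff {A : Matrix (Fin 2) (Fin 2) ℝ} {u : Fin 2 → ℝ} (hu : u ≠ 0) {r b : ℝ}
    (h : TriRep A u r r b) (v : Fin 2 → ℝ) : PosAssoc A u v ↔ 0 < b * cY u v := by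
  constructor
  · rintro ⟨t, x, hx, h1, h2⟩
    have e1 := congrArg (cX u) h1
    rw [h.hX, map_smul, cX_u hu, cY_u] at e1
    have e2 := congrArg (cX u) h2
    rw [h.hX] at e2
    simp [cX_u hu] at e1 e2
    subst e1
    linarith
  · intro hx
    refine ⟨r, _, hx, ?_, ?_⟩ <;> apply coord_ext hu
    · rw [h.hX]; simp [cX_u hu, cY_u]
    · rw [h.hY]; simp
    · rw [h.hX]; simp [cX_u hu]
    · rw [h.hY]; simp [cY_u]

lemma properCone_of {f g : (Fin 2 → ℝ) →ₗ[ℝ] ℝ} (hinj : ∀ v, f v = 0 → g v = 0 → v = 0)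
    (p : Fin 2 → ℝ) (hf : 0 < f p) (hg : 0 < g p) :
    IsProperCone {v | 0 ≤ f v ∧ 0 ≤ g v} := by
  have cf := f.continuous_of_finiteDimensional
  have cg := g.continuous_of_finiteDimensional
  refine ⟨?_, ?_, ?_, ?_, ?_⟩
  · rintro a ha x ⟨h1, h2⟩
    simp only [Set.mem_ofPred_eq, map_smul, smul_eq_mul]
    exact ⟨mul_nonneg ha h1, mul_nonneg ha h2⟩
  · rintro x ⟨h1, h2⟩ y ⟨h3, h4⟩
    simp only [Set.mem_ofPred_eq, map_add]
    exact ⟨add_nonneg h1 h3, add_nonneg h2 h4⟩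
  · exact (isClosed_le continuous_const cf).inter (isClosed_le continuous_const cg)
  · ext v
    simp only [Set.mem_inter_iff, Set.mem_neg, Set.mem_ofPred_eq, map_neg, Set.mem_singleton_iff]
    constructor
    · rintro ⟨⟨h1, h2⟩, h3, h4⟩
      exact hinj v (by linarith) (by linarith)
    · rintro rfl; simp
  · refine ⟨p, mem_interior.2 ⟨{v | 0 < f v ∧ 0 < g v}, fun v hv => ⟨hv.1.le, hv.2.le⟩, ?_, hf, hg⟩⟩
    exact (isOpen_lt continuous_const cf).inter (isOpen_lt continuous_const cg)

lemma exists_bound {n : ℕ} (f : Fin n → ℝ) : ∃ M : ℝ, 0 < M ∧ ∀ j, f j ≤ M := by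
  obtain ⟨M, hM⟩ := Finite.bddAbove_range f
  exact ⟨max M 1, by positivity, fun j => (hM ⟨j, rfl⟩).trans (le_max_left _ _)⟩

lemma shear_limit {u : Fin 2 → ℝ} {K : Set (Fin 2 → ℝ)} (hK : IsProperCone K) {r b : ℝ}
    (hr : 0 ≤ r) (h : ∀ q ∈ K, r • q + (b * cY u q) • u ∈ K) {p : Fin 2 → ℝ} (hp : p ∈ K) :
    (b * cY u p) • u ∈ K := by
  rcases hr.eq_or_lt with rfl | hr
  · simpa using h p hp
  have key : ∀ n : ℕ, p + (n * (b * cY u p / r)) • u ∈ K := by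
    intro n
    induction n with
    | zero => simpa using hp
    | succ n ih =>
      have := hK.1 r⁻¹ (by positivity) _ (h _ ih)
      convert this using 1
      simp only [map_add, map_smul, cY_u, smul_eq_mul, mul_zero, add_zero]
      ext i
      simp
      field_simp
      ring
  have key2 : ∀ n : ℕ, (r / ((n : ℝ) + 1)) • p + (b * cY u p) • u ∈ K := by
    intro n
    have := hK.1 (r / ((n : ℝ) + 1)) (by positivity) _ (key (n + 1))
    convert this using 1
    ext i
    simp
    field_simp
  refine hK.2.2.1.mem_of_tendsto (b := Filter.atTop) ?_ (Filter.Eventually.of_forall key2)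
  have : Filter.Tendsto (fun n : ℕ => r / ((n : ℝ) + 1)) Filter.atTop (nhds 0) := by
    have := (tendsto_one_div_add_atTop_nhds_zero_nat (𝕜 := ℝ)).const_mul r
    simpa [div_eq_mul_inv] using this
  simpa using (this.smul_const p).add_const ((b * cY u p) • u)

lemma pointed_u {u : Fin 2 → ℝ} (hu : u ≠ 0) {K : Set (Fin 2 → ℝ)} (hK : IsProperCone K) {a b : ℝ}
    (ha : a • u ∈ K) (hb : b • u ∈ K) : 0 ≤ a * b := by
  by_contra! hc
  have h1 : (a * b ^ 2) • u ∈ K := by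
    have := hK.1 (b ^ 2) (by positivity) _ ha
    rwa [smul_smul, mul_comm] at this
  have h2 : -((a * b ^ 2) • u) ∈ K := by
    have := hK.1 (-(a * b)) (by linarith) _ hb
    rw [smul_smul] at this
    convert this using 1
    rw [← neg_smul]; congr 1; ring
  have : (a * b ^ 2) • u ∈ K ∩ (-K) := ⟨h1, h2⟩
  rw [hK.2.2.2.1] at this
  rcases smul_eq_zero.1 this with h | h
  · rcases mul_eq_zero.1 h with h | h
    · simp [h] at hc
    · rw [pow_eq_zero_iff two_ne_zero] at h
      simp [h] at hc
  · exact hu h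

lemma exists_cY_ne {u : Fin 2 → ℝ} (hu : u ≠ 0) {K : Set (Fin 2 → ℝ)} (hK : IsProperCone K) :
    ∃ p ∈ K, cY u p ≠ 0 := by
  by_contra! hc
  have hsub : K ⊆ (LinearMap.ker (cY u) : Set (Fin 2 → ℝ)) := fun p hp => hc p hp
  have htop := Submodule.eq_top_of_nonempty_interior' (LinearMap.ker (cY u))
    (hK.2.2.2.2.mono (interior_mono hsub))
  have : cW u ∈ LinearMap.ker (cY u) := by rw [htop]; trivial
  rw [LinearMap.mem_ker, cY_w hu] at this
  exact one_ne_zero this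

lemma rep_shear {A : Matrix (Fin 2) (Fin 2) ℝ} {u : Fin 2 → ℝ} (hu : u ≠ 0) {r b : ℝ}
    (h : TriRep A u r r b) (q : Fin 2 → ℝ) : A.mulVec q = r • q + (b * cY u q) • u := by
  apply coord_ext hu
  · rw [h.hX]; simp [cX_u hu]
  · rw [h.hY]; simp [cY_u]

lemma backward_one (n : ℕ) (A : Fin n → Matrix (Fin 2) (Fin 2) ℝ)
    (u : Fin 2 → ℝ) (hu : u ≠ 0) (r s b : Fin n → ℝ) (hR : ∀ j, TriRep (A j) u (r j) (s j) (b j))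
    (hd : ∀ j, IsDiagonalizable (A j))
    (hm : ∀ i j, (A i).det < 0 → (A i).trace = 0 → (A j).det < 0 → (A j).trace = 0 →
            ∃ c : ℝ, A j = c • A i) :
    ∃ K : Set (Fin 2 → ℝ), IsProperCone K ∧ ∀ j, InvariantUnder (A j) K := by
  obtain ⟨c, hc⟩ : ∃ c : ℝ, ∀ j, r j = |s j| → b j + c * (r j - s j) = 0 := by
    have hpos : ∀ j, r j = |s j| → 0 ≤ s j → b j = 0 := by
      intro j hj hs
      rw [abs_of_nonneg hs] at hj
      exact ((diag_of hu (hR j)).1 (hd j)).resolve_left (not_not.2 hj)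
    have hneg : ∀ j, r j = |s j| → s j < 0 → (A j).det < 0 ∧ (A j).trace = 0 := by
      intro j hj hs
      rw [abs_of_neg hs] at hj
      rw [(hR j).dt, (hR j).tr, hj]
      constructor <;> nlinarith
    by_cases hex : ∃ i, r i = |s i| ∧ s i < 0
    · obtain ⟨i, hi, hsi⟩ := hex
      have hni := hneg i hi hsi
      rw [abs_of_neg hsi] at hi
      refine ⟨-b i / (r i - s i), fun j hj => ?_⟩
      rcases le_or_gt 0 (s j) with hs | hs
      · rw [hpos j hj hs, hj, abs_of_nonneg hs]; simp
      · have hnj := hneg j hj hs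
        obtain ⟨k, hk⟩ := hm i j hni.1 hni.2 hnj.1 hnj.2
        have e1 := (hR j).hX u
        have e2 := (hR j).hX (cW u)
        have e3 := (hR j).hY (cW u)
        rw [hk, Matrix.smul_mulVec, map_smul] at e1 e2 e3
        rw [(hR i).hX] at e1 e2
        rw [(hR i).hY] at e3
        simp [cX_u hu, cY_u, cX_w, cY_w hu] at e1 e2 e3
        have : r i - s i ≠ 0 := by linarith
        rw [← e1, ← e2, ← e3]
        field_simp
        ring
    · push Not at hex
      refine ⟨0, fun j hj => ?_⟩
      rw [hpos j hj (hex j hj)]; simp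
  obtain ⟨M, hM, hMb⟩ := exists_bound
    (fun j => |b j + c * (r j - s j)| / (r j - |s j|))
  refine ⟨{v | 0 ≤ (cX u - (c + M) • cY u) v ∧ 0 ≤ (cX u - (c - M) • cY u) v},
    properCone_of ?_ u ?_ ?_, ?_⟩
  · intro v h1 h2
    simp at h1 h2
    have hy : cY u v = 0 := by
      have : M * cY u v = 0 := by linarith
      exact (mul_eq_zero.1 this).resolve_left hM.ne'
    apply coord_ext hu
    · rw [hy] at h1; simpa using h1
    · simpa using hy
  · simp [cX_u hu, cY_u]
  · simp [cX_u hu, cY_u]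
  · rintro j v ⟨h1, h2⟩
    simp only [Set.mem_ofPred_eq, LinearMap.sub_apply, LinearMap.smul_apply, smul_eq_mul, (hR j).hX,
      (hR j).hY] at *
    have hb : |b j + c * (r j - s j)| ≤ M * (r j - |s j|) := by
      rcases (hR j).abs_s.eq_or_lt with h | h
      · rw [hc j h.symm, h]; simp
      · exact (div_le_iff₀ (by linarith)).1 (hMb j)
    have hy : M * |cY u v| ≤ cX u v - c * cY u v := by
      rcases abs_cases (cY u v) with h | h <;> rw [h.1] <;> linarith
    have hk : M * |s j * cY u v| ≤ r j * (cX u v - c * cY u v)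
        + (b j + c * (r j - s j)) * cY u v := by
      have a1 := neg_abs_le ((b j + c * (r j - s j)) * cY u v)
      rw [abs_mul] at a1 ⊢
      have a2 := mul_le_mul_of_nonneg_right hb (abs_nonneg (cY u v))
      have a3 := mul_le_mul_of_nonneg_left hy (hR j).r0
      nlinarith
    have a4 := mul_le_mul_of_nonneg_left (le_abs_self (s j * cY u v)) hM.le
    have a5 := mul_le_mul_of_nonneg_left (neg_abs_le (s j * cY u v)) hM.le
    constructor <;> nlinarith

lemma backward_two (n : ℕ) (A : Fin n → Matrix (Fin 2) (Fin 2) ℝ)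
    (u : Fin 2 → ℝ) (hu : u ≠ 0) (r s b : Fin n → ℝ) (hR : ∀ j, TriRep (A j) u (r j) (s j) (b j))
    (hd : ∀ j, 0 ≤ (A j).det)
    (hm : ∀ i j, ¬ IsDiagonalizable (A i) → ¬ IsDiagonalizable (A j) →
            ∀ v : Fin 2 → ℝ, PosAssoc (A i) u v ↔ PosAssoc (A j) u v) :
    ∃ K : Set (Fin 2 → ℝ), IsProperCone K ∧ ∀ j, InvariantUnder (A j) K := by
  have hs : ∀ j, 0 ≤ s j := by
    intro j
    by_contra! h
    have := hd j
    have h2 := (hR j).abs_s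
    rw [(hR j).dt] at this
    rw [abs_of_neg h] at h2
    nlinarith
  obtain ⟨δ, hδ, hδb⟩ : ∃ δ : ℝ, δ ≠ 0 ∧ ∀ j, r j = s j → 0 ≤ b j / δ := by
    by_cases hex : ∃ i, r i = s i ∧ b i ≠ 0
    · obtain ⟨i, hi, hbi⟩ := hex
      refine ⟨b i, hbi, fun j hj => ?_⟩
      by_cases hbj : b j = 0
      · simp [hbj]
      have ni : ¬ IsDiagonalizable (A i) := by rw [diag_of hu (hR i)]; tauto
      have nj : ¬ IsDiagonalizable (A j) := by rw [diag_of hu (hR j)]; tauto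
      have hRi := hR i
      have hRj := hR j
      rw [← hi] at hRi
      rw [← hj] at hRj
      have e := hm i j ni nj (b i • cW u)
      rw [posAssoc_iff hu hRi, posAssoc_iff hu hRj] at e
      simp only [map_smul, cY_w hu, smul_eq_mul, mul_one] at e
      have := e.1 (mul_self_pos.2 hbi)
      have h3 : b j / b i = b j * b i / (b i) ^ 2 := by field_simp
      rw [h3]; positivity
    · push Not at hex
      exact ⟨1, one_ne_zero, fun j hj => by simp [hex j hj]⟩
  obtain ⟨M, hM, hMb⟩ := exists_bound (fun j => -(b j / δ) / (r j - s j))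
  refine ⟨{v | 0 ≤ (δ • cY u) v ∧ 0 ≤ (cX u - (M * δ) • cY u) v},
    properCone_of ?_ ((M * δ ^ 2 + 1) • u + δ • cW u) ?_ ?_, ?_⟩
  · intro v h1 h2
    simp [hδ] at h1 h2
    apply coord_ext hu
    · rw [h1] at h2; simpa using h2
    · simpa using h1
  · simp [cY_u, cY_w hu]; positivity
  · simp [cX_u hu, cY_u, cX_w, cY_w hu]; nlinarith
  · rintro j v ⟨h1, h2⟩
    simp only [Set.mem_ofPred_eq, LinearMap.sub_apply, LinearMap.smul_apply, smul_eq_mul, (hR j).hX,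
      (hR j).hY] at *
    have hb : 0 ≤ M * (r j - s j) + b j / δ := by
      have h := (le_abs_self _).trans (hR j).abs_s
      rcases h.eq_or_lt with h | h
      · have := hδb j h.symm
        rw [h]; simpa using this
      · have := (div_le_iff₀ (by linarith)).1 (hMb j)
        linarith
    constructor
    · have := mul_nonneg (hs j) h1
      linarith
    · have a1 := mul_nonneg hb h1
      have a2 := mul_nonneg (hR j).r0 h2
      have a3 : (M * (r j - s j) + b j / δ) * (δ * cY u v)
        = M * (r j - s j) * (δ * cY u v) + b j * cY u v := by field_simp
      nlinarith

lemma forward_one {A B : Matrix (Fin 2) (Fin 2) ℝ} {u : Fin 2 → ℝ} (hu : u ≠ 0)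
    {K : Set (Fin 2 → ℝ)} (hK : IsProperCone K) {r b r' b' : ℝ}
    (hA : TriRep A u r (-r) b) (hB : TriRep B u r' (-r') b')
    (iA : InvariantUnder A K) (iB : InvariantUnder B K) : r * b' = r' * b := by
  obtain ⟨p, hp, hpY⟩ := exists_cY_ne hu hK
  have hrr := mul_nonneg hA.r0 hB.r0
  have h1 : ((r * b' - r' * b) * cY u p) • u ∈ K := by
    apply shear_limit hK hrr (fun q hq => ?_) hp
    have hcone := iA _ (iB q hq)
    convert hcone using 1
    apply coord_ext hu
    · simp only [map_add, map_smul, smul_eq_mul, hA.hX, hB.hX, hA.hY, hB.hY, cX_u hu]; ring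
    · simp only [map_add, map_smul, smul_eq_mul, hA.hY, hB.hY, cY_u]; ring
  have h2 : ((r' * b - r * b') * cY u p) • u ∈ K := by
    apply shear_limit hK hrr (fun q hq => ?_) hp
    have hcone := iB _ (iA q hq)
    convert hcone using 1
    apply coord_ext hu
    · simp only [map_add, map_smul, smul_eq_mul, hA.hX, hB.hX, hA.hY, hB.hY, cX_u hu]; ring
    · simp only [map_add, map_smul, smul_eq_mul, hA.hY, hB.hY, cY_u]; ring
  have := pointed_u hu hK h1 h2
  by_contra hne
  have h3 : 0 < ((r * b' - r' * b) * cY u p) ^ 2 := by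
    have := mul_ne_zero (sub_ne_zero.2 hne) hpY
    positivity
  nlinarith

/-- Theorem: for `2×2` Vandergraft matrices `A 1, …, A n` sharing the
dominant eigenvector `u`, a common invariant proper cone exists iff either
(i) all `A j` are diagonalizable and any two of them with negative
determinant and zero trace are scalar multiples of each other, or (ii) all
`A j` have nonnegative determinants and any two non-diagonalizable ones
have the same orientation relative to `u`. -/
theorem common_invariant_cone_shared_dominant_eigenvector
    (n : ℕ) (A : Fin n → Matrix (Fin 2) (Fin 2) ℝ)
    (hV : ∀ j, IsVandergraft (A j))
    (u : Fin 2 → ℝ) (hu : u ≠ 0)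
    (hdom : ∀ j, (A j).mulVec u = rho2 (A j) • u) :
    (∃ K : Set (Fin 2 → ℝ), IsProperCone K ∧ ∀ j, InvariantUnder (A j) K) ↔
      (((∀ j, IsDiagonalizable (A j)) ∧
          ∀ i j, (A i).det < 0 → (A i).trace = 0 → (A j).det < 0 → (A j).trace = 0 →
            ∃ c : ℝ, A j = c • A i) ∨
        ((∀ j, 0 ≤ (A j).det) ∧
          ∀ i j, ¬ IsDiagonalizable (A i) → ¬ IsDiagonalizable (A j) →
            ∀ v : Fin 2 → ℝ, PosAssoc (A i) u v ↔ PosAssoc (A j) u v)) := by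
  have hrep := fun j => exists_rep hu (hV j) (hdom j)
  choose r s b hR using hrep
  constructor
  · rintro ⟨K, hK, hinv⟩
    by_cases hd : ∀ j, IsDiagonalizable (A j)
    · left
      refine ⟨hd, fun i j di ti dj tj => ?_⟩
      have hi := hR i
      have hj := hR j
      have si : s i = - r i := by rw [hi.tr] at ti; linarith
      have sj : s j = - r j := by rw [hj.tr] at tj; linarith
      rw [si] at hi
      rw [sj] at hj
      have hri : r i ≠ 0 := by
        intro h0; rw [hi.dt, h0] at di; simp at di
      have hb := forward_one hu hK hi hj (hinv i) (hinv j)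
      refine ⟨r j / r i, ?_⟩
      apply Matrix.ext_of_mulVec_single
      intro k
      rw [Matrix.smul_mulVec]
      apply coord_ext hu
      · rw [hj.hX, map_smul, hi.hX, smul_eq_mul]
        have : b j = r j * b i / r i := by field_simp; linarith
        rw [this]; field_simp
      · rw [hj.hY, map_smul, hi.hY, smul_eq_mul]
        field_simp
    · right
      obtain ⟨p, hp, hpY⟩ := exists_cY_ne hu hK
      have key : ∀ i, ¬ IsDiagonalizable (A i) → r i = s i ∧ b i ≠ 0 ∧
          ∀ q ∈ K, (b i * cY u q) • u ∈ K := by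
        intro i hi
        rw [diag_of hu (hR i)] at hi
        push Not at hi
        refine ⟨hi.1, hi.2, fun q hq => ?_⟩
        have hRi := hR i
        rw [← hi.1] at hRi
        apply shear_limit hK hRi.r0 (fun q hq => ?_) hq
        rw [← rep_shear hu hRi]
        exact hinv i q hq
      constructor
      · intro j
        push Not at hd
        obtain ⟨i, hi⟩ := hd
        obtain ⟨-, hb, hk⟩ := key i hi
        have h := pointed_u hu hK (hk p hp) (hk _ (hinv j p hp))
        rw [(hR j).hY] at h
        have h2 : 0 < (b i * cY u p) ^ 2 := by
          have := mul_ne_zero hb hpY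
          positivity
        have hs : 0 ≤ s j := by
          by_contra! hs
          nlinarith
        rw [(hR j).dt]
        exact mul_nonneg (hR j).r0 hs
      · intro i j hi hj v
        obtain ⟨ei, hbi, hki⟩ := key i hi
        obtain ⟨ej, hbj, hkj⟩ := key j hj
        have hRi := hR i
        have hRj := hR j
        rw [← ei] at hRi
        rw [← ej] at hRj
        rw [posAssoc_iff hu hRi, posAssoc_iff hu hRj]
        have h := pointed_u hu hK (hki p hp) (hkj p hp)
        have h2 : 0 < cY u p ^ 2 := by positivity
        have h3 : 0 < b i * b j := by
          apply lt_of_le_of_ne _ (mul_ne_zero hbi hbj).symm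
          by_contra! h4
          nlinarith
        have h5 : 0 < (b i)^2 := by positivity
        have h6 : 0 < (b j)^2 := by positivity
        constructor
        · intro h7
          have h8 := mul_pos h3 h7
          by_contra! h9
          nlinarith
        · intro h7
          have h8 := mul_pos h3 h7
          by_contra! h9
          nlinarith
  · rintro (⟨h1, h2⟩ | ⟨h1, h2⟩)
    · exact backward_one n A u hu r s b hR h1 h2
    · exact backward_two n A u hu r s b hR h1 h2
end

section
/- Let A₁,…,Aₙ be real 2×2 Vandergraft matrices sharing a common dominant eigenvector u. Then there exists a proper cone K ⊆ ℝ² invariant under every A_j if and only if for every pair of indices i, j there exists a proper cone invariant under both A_i and A_j. -/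
namespace ConeAux

/-- The coordinate along `u` (unnormalised). -/
def psi (u v : Fin 2 → ℝ) : ℝ := u 0 * v 0 + u 1 * v 1

/-- The coordinate transversal to `u`. -/
def phi (u v : Fin 2 → ℝ) : ℝ := u 0 * v 1 - u 1 * v 0

lemma normSq_pos {u : Fin 2 → ℝ} (hu : u ≠ 0) : 0 < u 0 ^ 2 + u 1 ^ 2 := by
  by_contra h
  apply hu
  have h0 : u 0 = 0 := by nlinarith [sq_nonneg (u 0), sq_nonneg (u 1)]
  have h1 : u 1 = 0 := by nlinarith [sq_nonneg (u 0), sq_nonneg (u 1)]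
  ext i
  fin_cases i
  · simpa using h0
  · simpa using h1

lemma ext_coord {u : Fin 2 → ℝ} (hu : u ≠ 0) {v w : Fin 2 → ℝ}
    (h1 : psi u v = psi u w) (h2 : phi u v = phi u w) : v = w := by
  have hN := normSq_pos hu
  simp only [psi, phi] at h1 h2
  ext i
  fin_cases i
  · apply mul_left_cancel₀ hN.ne'
    simp only [Fin.zero_eta]
    linear_combination u 0 * h1 - u 1 * h2
  · apply mul_left_cancel₀ hN.ne'
    simp only [Fin.mk_one]
    linear_combination u 1 * h1 + u 0 * h2

lemma normal_form (A : Matrix (Fin 2) (Fin 2) ℝ) (hV : IsVandergraft A)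
    (u : Fin 2 → ℝ) (hu : u ≠ 0) (hd : A.mulVec u = rho2 A • u) :
    ∃ r m b : ℝ, |m| ≤ r ∧ ∀ v, psi u (A.mulVec v) = r * psi u v + b * phi u v ∧
      phi u (A.mulVec v) = m * phi u v := by
  have hN := normSq_pos hu
  have h0 := congrFun hd 0
  have h1 := congrFun hd 1
  have hs := Real.sqrt_nonneg (A.trace ^ 2 - 4 * A.det)
  have ht := hV.2
  refine ⟨rho2 A, A.trace - rho2 A,
    psi u (A.mulVec ![-u 1, u 0]) / (u 0 ^ 2 + u 1 ^ 2), ?_, ?_⟩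
  · unfold rho2
    rw [abs_le]
    constructor <;> linarith
  · intro v
    have htr : A.trace = A 0 0 + A 1 1 := Matrix.trace_fin_two A
    rw [htr]
    generalize rho2 A = r at *
    simp [Matrix.mulVec, dotProduct, Fin.sum_univ_two] at h0 h1
    constructor
    · rw [← sub_eq_zero]
      simp [psi, phi, Matrix.mulVec, dotProduct, Fin.sum_univ_two]
      field_simp
      linear_combination (u 0 * v 0 + u 1 * v 1) * (u 0 * h0 + u 1 * h1)
    · simp [phi, Matrix.mulVec, dotProduct, Fin.sum_univ_two]
      linear_combination (-v 1) * h0 + v 0 * h1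

lemma properCone (f0 f1 g0 g1 : ℝ) (hdet : f0 * g1 - f1 * g0 ≠ 0) :
    IsProperCone {v : Fin 2 → ℝ | 0 ≤ f0 * v 0 + f1 * v 1 ∧ 0 ≤ g0 * v 0 + g1 * v 1} := by
  refine ⟨?_, ?_, ?_, ?_, ?_⟩
  · rintro a ha x ⟨h1, h2⟩
    simp only [Set.mem_ofPred_eq, Pi.smul_apply, smul_eq_mul]
    constructor
    · nlinarith [mul_nonneg ha h1]
    · nlinarith [mul_nonneg ha h2]
  · rintro x ⟨h1, h2⟩ y ⟨h3, h4⟩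
    simp only [Set.mem_ofPred_eq, Pi.add_apply]
    constructor <;> linarith
  · have c1 : Continuous (fun v : Fin 2 → ℝ => f0 * v 0 + f1 * v 1) := by fun_prop
    have c2 : Continuous (fun v : Fin 2 → ℝ => g0 * v 0 + g1 * v 1) := by fun_prop
    exact (isClosed_le continuous_const c1).inter (isClosed_le continuous_const c2)
  · ext v
    simp only [Set.mem_inter_iff, Set.mem_ofPred_eq, Set.mem_neg, Pi.neg_apply,
      Set.mem_singleton_iff]
    constructor
    · rintro ⟨⟨h1, h2⟩, h3, h4⟩
      have e1 : f0 * v 0 + f1 * v 1 = 0 := by linarith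
      have e2 : g0 * v 0 + g1 * v 1 = 0 := by linarith
      ext i
      fin_cases i
      · apply mul_left_cancel₀ hdet
        simp only [Fin.zero_eta, Pi.zero_apply]
        linear_combination g1 * e1 - f1 * e2
      · apply mul_left_cancel₀ hdet
        simp only [Fin.mk_one, Pi.zero_apply]
        linear_combination f0 * e2 - g0 * e1
    · rintro rfl
      simp
  · refine ⟨![(g1 - f1) / (f0 * g1 - f1 * g0), (f0 - g0) / (f0 * g1 - f1 * g0)], ?_⟩
    have ho : IsOpen {v : Fin 2 → ℝ | 0 < f0 * v 0 + f1 * v 1 ∧ 0 < g0 * v 0 + g1 * v 1} := by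
      have c1 : Continuous (fun v : Fin 2 → ℝ => f0 * v 0 + f1 * v 1) := by fun_prop
      have c2 : Continuous (fun v : Fin 2 → ℝ => g0 * v 0 + g1 * v 1) := by fun_prop
      exact (isOpen_lt continuous_const c1).inter (isOpen_lt continuous_const c2)
    refine interior_maximal ?_ ho ?_
    · rintro v ⟨h1, h2⟩
      exact ⟨h1.le, h2.le⟩
    · simp only [Set.mem_ofPred_eq, Matrix.cons_val_zero, Matrix.cons_val_one]
      have e1 : f0 * ((g1 - f1) / (f0 * g1 - f1 * g0)) + f1 * ((f0 - g0) / (f0 * g1 - f1 * g0))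
          = 1 := by
        rw [mul_div_assoc', mul_div_assoc', ← add_div, div_eq_one_iff_eq hdet]; ring
      have e2 : g0 * ((g1 - f1) / (f0 * g1 - f1 * g0)) + g1 * ((f0 - g0) / (f0 * g1 - f1 * g0))
          = 1 := by
        rw [mul_div_assoc', mul_div_assoc', ← add_div, div_eq_one_iff_eq hdet]; ring
      rw [e1, e2]
      exact ⟨one_pos, one_pos⟩

/-- Proper cones given in the adapted coordinates. -/
lemma properCone' {u : Fin 2 → ℝ} (hu : u ≠ 0) (f0 f1 g0 g1 : ℝ)
    (hdet : f0 * g1 - f1 * g0 ≠ 0) :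
    IsProperCone {v : Fin 2 → ℝ | 0 ≤ f0 * psi u v + f1 * phi u v ∧
      0 ≤ g0 * psi u v + g1 * phi u v} := by
  have hN := normSq_pos hu
  have h := properCone (f0 * u 0 - f1 * u 1) (f0 * u 1 + f1 * u 0)
    (g0 * u 0 - g1 * u 1) (g0 * u 1 + g1 * u 0) (by
      intro h
      apply mul_ne_zero hdet hN.ne'
      linear_combination h)
  have e : ∀ (a b : ℝ) (v : Fin 2 → ℝ), a * psi u v + b * phi u v =
      (a * u 0 - b * u 1) * v 0 + (a * u 1 + b * u 0) * v 1 := by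
    intro a b v
    simp only [psi, phi]; ring
  simp only [e]
  exact h

lemma exists_phi_ne {u : Fin 2 → ℝ} (hu : u ≠ 0) {K : Set (Fin 2 → ℝ)} (hK : IsProperCone K) :
    ∃ v ∈ K, phi u v ≠ 0 := by
  have hN := normSq_pos hu
  obtain ⟨p, hp⟩ := hK.2.2.2.2
  by_cases h : phi u p = 0
  · have hc : Continuous (fun t : ℝ => p + t • (![-u 1, u 0] : Fin 2 → ℝ)) := by fun_prop
    have hopen := (isOpen_interior (s := K)).preimage hc
    have h0 : (0 : ℝ) ∈ (fun t : ℝ => p + t • (![-u 1, u 0] : Fin 2 → ℝ)) ⁻¹' interior K := by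
      simpa only [Set.mem_preimage, zero_smul, add_zero] using hp
    obtain ⟨e, he, hsub⟩ := Metric.isOpen_iff.1 hopen 0 h0
    refine ⟨p + (e / 2) • ![-u 1, u 0], interior_subset (hsub ?_), ?_⟩
    · simp [abs_of_pos he]; linarith
    · have : phi u (p + (e / 2) • ![-u 1, u 0]) = phi u p + e / 2 * (u 0 ^ 2 + u 1 ^ 2) := by
        simp [phi]; ring
      rw [this, h]
      positivity
  · exact ⟨p, interior_subset hp, h⟩

lemma not_both {u : Fin 2 → ℝ} (hu : u ≠ 0) {K : Set (Fin 2 → ℝ)} (hK : IsProperCone K)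
    {a b : ℝ} (ha : a • u ∈ K) (hb : b • u ∈ K) (hab : a * b < 0) : False := by
  obtain ⟨hs, -, -, hp, -⟩ := hK
  have h1 : (b ^ 2 * 1) • (a • u) ∈ K := hs _ (by positivity) _ ha
  have h2 : (-(a * b)) • (b • u) ∈ K := hs _ (by linarith) _ hb
  have h3 : (b ^ 2 * 1) • (a • u) ∈ K ∩ (-K) := by
    refine ⟨h1, ?_⟩
    rw [Set.mem_neg]
    convert h2 using 1
    rw [smul_smul, smul_smul, ← neg_smul]
    congr 1; ring
  rw [hp, Set.mem_singleton_iff, smul_smul] at h3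
  have hb0 : b ≠ 0 := by rintro rfl; simp at hab
  have ha0 : a ≠ 0 := by rintro rfl; simp at hab
  rcases smul_eq_zero.1 h3 with h | h
  · have : b ^ 2 * 1 * a ≠ 0 := by positivity
    exact this h
  · exact hu h

/-- A map acting as a (generalised) Jordan block pushes points of `K` towards `±u`. -/
lemma jordan {u : Fin 2 → ℝ} {K : Set (Fin 2 → ℝ)} (hu : u ≠ 0) (hK : IsProperCone K)
    (B : (Fin 2 → ℝ) → (Fin 2 → ℝ)) (hB : ∀ v ∈ K, B v ∈ K) {r b : ℝ} (hr : 0 ≤ r)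
    (hpsi : ∀ v, psi u (B v) = r * psi u v + b * phi u v)
    (hphi : ∀ v, phi u (B v) = r * phi u v) {v : Fin 2 → ℝ} (hv : v ∈ K) :
    (b * phi u v) • u ∈ K := by
  have hN := normSq_pos hu
  set N := u 0 ^ 2 + u 1 ^ 2 with hNdef
  obtain ⟨hs, ha, hcl, -, -⟩ := hK
  have pu : psi u u = N := by simp only [psi, hNdef]; ring
  have fu : phi u u = 0 := by simp only [phi]; ring
  have padd : ∀ (s t : ℝ) (x y : Fin 2 → ℝ), psi u (s • x + t • y) = s * psi u x + t * psi u y := by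
    intro s t x y; simp [psi]; ring
  have fadd : ∀ (s t : ℝ) (x y : Fin 2 → ℝ), phi u (s • x + t • y) = s * phi u x + t * phi u y := by
    intro s t x y; simp [phi]; ring
  have hform : ∀ v, B v = r • v + (b * phi u v / N) • u := by
    intro v
    apply ext_coord hu
    · rw [hpsi, padd, pu]; field_simp
    · rw [hphi, fadd, fu]; ring
  suffices h : (b * phi u v / N) • u ∈ K by
    have := hs N hN.le _ h
    rw [smul_smul] at this
    convert this using 2
    field_simp
  rcases hr.eq_or_lt with h0 | hpos
  · have := hB v hv
    rw [hform, ← h0] at this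
    simpa using this
  · have hn : ∀ n : ℕ, (1 : ℝ) • v + ((n : ℝ) * (b * phi u v / N) / r) • u ∈ K := by
      intro n
      induction n with
      | zero => simpa using hv
      | succ k ih =>
        have := hs r⁻¹ (by positivity) _ (hB _ ih)
        rw [hform, fadd, fu] at this
        convert this using 1
        rw [smul_add, smul_add, smul_add, smul_smul, smul_smul, smul_smul, smul_smul, smul_smul,
          add_assoc, ← add_smul]
        congr 2
        · field_simp
        · push_cast
          field_simp
          ring
    have hlim : Filter.Tendsto (fun n : ℕ => ((n : ℝ) + 1)⁻¹ • v + ((b * phi u v / N) / r) • u)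
        Filter.atTop (nhds ((0 : ℝ) • v + ((b * phi u v / N) / r) • u)) := by
      refine Filter.Tendsto.add_const _ (Filter.Tendsto.smul_const ?_ _)
      simpa using tendsto_one_div_add_atTop_nhds_zero_nat (𝕜 := ℝ)
    have hmem := hcl.mem_of_tendsto hlim (Filter.Eventually.of_forall (fun n => by
      have := hs ((n : ℝ) + 1)⁻¹ (by positivity) _ (hn (n + 1))
      convert this using 1
      rw [smul_add, smul_smul, smul_smul, mul_one]
      congr 2
      push_cast
      field_simp))
    have := hs r hr _ hmem
    rw [zero_smul, zero_add, smul_smul] at this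
    convert this using 2
    field_simp

end ConeAux

/-- Theorem: for `2×2` Vandergraft matrices `A 1, …, A n` sharing the
dominant eigenvector `u`, a common invariant proper cone exists iff every
pair of the matrices has a common invariant proper cone. -/
theorem common_invariant_cone_iff_pairwise
    (n : ℕ) (A : Fin n → Matrix (Fin 2) (Fin 2) ℝ)
    (hV : ∀ j, IsVandergraft (A j))
    (u : Fin 2 → ℝ) (hu : u ≠ 0)
    (hdom : ∀ j, (A j).mulVec u = rho2 (A j) • u) :
    (∃ K : Set (Fin 2 → ℝ), IsProperCone K ∧ ∀ j, InvariantUnder (A j) K) ↔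
      ∀ i j : Fin n, ∃ K : Set (Fin 2 → ℝ),
        IsProperCone K ∧ InvariantUnder (A i) K ∧ InvariantUnder (A j) K := by
  constructor
  · rintro ⟨K, hK, hI⟩ i j
    exact ⟨K, hK, hI i, hI j⟩
  intro hpair
  choose r m b hrm hA using fun j => ConeAux.normal_form (A j) (hV j) u hu (hdom j)
  have hr : ∀ j, 0 ≤ r j := fun j => (abs_nonneg _).trans (hrm j)
  -- a point with nonzero transversal coordinate, for every pair
  have key1 : ∀ i j, m i = r i → b i ≠ 0 → 0 ≤ m j := by
    intro i j hi hb
    by_contra! hm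
    obtain ⟨K, hK, h1, h2⟩ := hpair i j
    obtain ⟨v, hv, hne⟩ := ConeAux.exists_phi_ne hu hK
    have e1 := ConeAux.jordan hu hK (A i).mulVec h1 (hr i) (fun v => (hA i v).1)
      (fun v => by rw [(hA i v).2, hi]) hv
    have e2 := ConeAux.jordan hu hK (A i).mulVec h1 (hr i) (fun v => (hA i v).1)
      (fun v => by rw [(hA i v).2, hi]) (h2 v hv)
    refine ConeAux.not_both hu hK e1 e2 ?_
    rw [(hA j v).2]
    have : 0 < (b i * ConeAux.phi u v) ^ 2 := by positivity
    nlinarith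
  have key2 : ∀ i j, m i = r i → m j = r j → 0 ≤ b i * b j := by
    intro i j hi hj
    by_contra! hb
    obtain ⟨K, hK, h1, h2⟩ := hpair i j
    obtain ⟨v, hv, hne⟩ := ConeAux.exists_phi_ne hu hK
    have e1 := ConeAux.jordan hu hK (A i).mulVec h1 (hr i) (fun v => (hA i v).1)
      (fun v => by rw [(hA i v).2, hi]) hv
    have e2 := ConeAux.jordan hu hK (A j).mulVec h2 (hr j) (fun v => (hA j v).1)
      (fun v => by rw [(hA j v).2, hj]) hv
    refine ConeAux.not_both hu hK e1 e2 ?_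
    have : 0 < (ConeAux.phi u v) ^ 2 := by positivity
    nlinarith
  have key3 : ∀ i j, m i = - r i → m j = - r j → 0 < r i → r i * b j = r j * b i := by
    intro i j hi hj hri
    by_contra hb
    have hb' : r i * b j - r j * b i ≠ 0 := sub_ne_zero.2 hb
    obtain ⟨K, hK, h1, h2⟩ := hpair i j
    obtain ⟨v, hv, hne⟩ := ConeAux.exists_phi_ne hu hK
    have J : ∀ w ∈ K, ((r i * b j - r j * b i) * ConeAux.phi u w) • u ∈ K := by
      intro w hw
      refine ConeAux.jordan hu hK (fun v => (A i).mulVec ((A j).mulVec v))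
        (fun v hv => h1 _ (h2 v hv)) (mul_nonneg (hr i) (hr j)) ?_ ?_ hw
      · intro v
        simp only [(hA i _).1, (hA j _).1, (hA j _).2, hj]
        ring
      · intro v
        simp only [(hA i _).2, (hA j _).2, hi, hj]
        ring
    refine ConeAux.not_both hu hK (J v hv) (J _ (h1 v hv)) ?_
    rw [(hA i v).2, hi]
    have : 0 < ((r i * b j - r j * b i) * ConeAux.phi u v) ^ 2 := by positivity
    nlinarith
  -- uniform choice of a large parameter
  have big : ∀ c e : Fin n → ℝ, (∀ j, 0 < e j ∨ (e j = 0 ∧ c j ≤ 0)) →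
      ∃ M : ℝ, 0 < M ∧ ∀ j, c j ≤ M * e j := by
    intro c e h
    have h1 : ∀ᶠ M : ℝ in Filter.atTop, ∀ j, c j ≤ M * e j := by
      rw [Filter.eventually_all]
      intro j
      rcases h j with h | ⟨h, h'⟩
      · filter_upwards [Filter.eventually_ge_atTop (c j / e j)] with M hM
        rwa [div_le_iff₀ h] at hM
      · simp [h, h']
    obtain ⟨M, h2, h3⟩ := ((Filter.eventually_gt_atTop (0 : ℝ)).and h1).exists
    exact ⟨M, h2, h3⟩
  by_cases hJ : ∃ i, m i = r i ∧ b i ≠ 0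
  · obtain ⟨i, hi, hbi⟩ := hJ
    have hm : ∀ j, 0 ≤ m j := fun j => key1 i j hi hbi
    have hmr : ∀ j, m j ≤ r j := fun j => (le_abs_self _).trans (hrm j)
    rcases lt_or_gt_of_ne hbi with hneg | hpos
    · obtain ⟨M, hM, hMj⟩ := big b (fun j => r j - m j) (by
        intro j
        rcases (hmr j).eq_or_lt with h | h
        · right
          have := key2 i j hi h
          exact ⟨by rw [h]; ring, by nlinarith⟩
        · left; linarith)
      refine ⟨_, ConeAux.properCone' hu 1 M 0 (-1) (by norm_num), ?_⟩
      rintro j v ⟨h1, h2⟩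
      simp only [Set.mem_ofPred_eq, (hA j v).1, (hA j v).2]
      have h2' : 0 ≤ - ConeAux.phi u v := by linarith
      constructor
      · nlinarith [mul_nonneg (hr j) h1, mul_nonneg h2' (sub_nonneg.2 (hMj j))]
      · nlinarith [mul_nonneg (hm j) h2']
    · obtain ⟨M, hM, hMj⟩ := big (fun j => - b j) (fun j => r j - m j) (by
        intro j
        rcases (hmr j).eq_or_lt with h | h
        · right
          have := key2 i j hi h
          exact ⟨by rw [h]; ring, by nlinarith⟩
        · left; linarith)
      refine ⟨_, ConeAux.properCone' hu 1 (-M) 0 1 (by norm_num), ?_⟩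
      rintro j v ⟨h1, h2⟩
      simp only [Set.mem_ofPred_eq, (hA j v).1, (hA j v).2]
      have h2' : 0 ≤ ConeAux.phi u v := by linarith
      constructor
      · nlinarith [mul_nonneg (hr j) h1, mul_nonneg h2' (sub_nonneg.2 (hMj j))]
      · nlinarith [mul_nonneg (hm j) h2']
  · push Not at hJ
    have hd : ∃ d : ℝ, ∀ j, |m j| = r j → b j = d * (r j - m j) := by
      by_cases hR : ∃ i, m i = - r i ∧ 0 < r i
      · obtain ⟨i, hi, hri⟩ := hR
        refine ⟨b i / (2 * r i), fun j hj => ?_⟩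
        rcases abs_choice (m j) with h | h
        · rw [h] at hj
          rw [hJ j hj, hj]; ring
        · have hj' : m j = - r j := by linarith
          have := key3 i j hi hj' hri
          rw [hj']
          field_simp
          linarith
      · push Not at hR
        refine ⟨0, fun j hj => ?_⟩
        rw [zero_mul]
        rcases abs_choice (m j) with h | h
        · rw [h] at hj
          exact hJ j hj
        · have hj' : m j = - r j := by linarith
          have h0 := hR j hj'
          have := hr j
          exact hJ j (by linarith)
    obtain ⟨d, hd⟩ := hd
    obtain ⟨M, hM, hMj⟩ := big (fun j => |b j - d * (r j - m j)|) (fun j => r j - |m j|) (by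
      intro j
      rcases (hrm j).eq_or_lt with h | h
      · right
        exact ⟨by rw [h]; ring, by rw [← hd j h]; simp⟩
      · left; linarith)
    refine ⟨_, ConeAux.properCone' hu 1 (-(M - d)) 1 (M + d)
      (by have : (0:ℝ) < 2 * M := by linarith
          intro h; linarith), ?_⟩
    rintro j v ⟨h1, h2⟩
    simp only [Set.mem_ofPred_eq, (hA j v).1, (hA j v).2]
    have hb := abs_le.1 (hMj j)
    have hp : M * (r j - |m j|) ≤ M * (r j - m j) :=
      mul_le_mul_of_nonneg_left (by linarith [le_abs_self (m j)]) hM.le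
    have hq : M * (r j - |m j|) ≤ M * (r j + m j) :=
      mul_le_mul_of_nonneg_left (by linarith [neg_abs_le (m j)]) hM.le
    obtain ⟨hb1, hb2⟩ := hb
    generalize ConeAux.psi u v = x at *
    generalize ConeAux.phi u v = y at *
    constructor
    · apply nonneg_of_mul_nonneg_right (a := 2 * M) _ (by linarith)
      have t1 : 0 ≤ (M - d) * (r j - m j) + b j := by linarith
      have t2 : 0 ≤ (M + d) * r j + (M - d) * m j - b j := by linarith
      have e1 := mul_nonneg t2 h1
      have e2 := mul_nonneg t1 h2
      linarith
    · apply nonneg_of_mul_nonneg_right (a := 2 * M) _ (by linarith)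
      have t1 : 0 ≤ (M - d) * r j + (M + d) * m j + b j := by linarith
      have t2 : 0 ≤ (M + d) * (r j - m j) - b j := by linarith
      have e1 := mul_nonneg t2 h1
      have e2 := mul_nonneg t1 h2
      linarith
end

section
/- Let 𝒜 = {A₁,…,Aₙ} be a finite family of real 2×2 matrices and let 𝒜₁ = 𝒜 ∪ {A_iA_j : A_i, A_j ∈ 𝒜, det A_i < 0, det A_j < 0, and A_iA_j is not a scalar multiple of the identity}. If there exists a proper cone K ⊆ ℝ² invariant under every matrix of 𝒜, then: (i) every matrix in 𝒜₁ is a Vandergraft matrix; (ii) the non-diagonalizable matrices in 𝒜₁ have at most two distinct dominant eigenlines, and any two non-diagonalizable matrices in 𝒜₁ with the same dominant eigenline have the same orientation; and (iii) there exists a proper cone C ⊆ ℝ² such that every dominant eigenvector of every matrix in 𝒜₁ that is not a scalar multiple of the identity lies in C ∪ (−C), while no non-dominant eigenvector of any matrix in 𝒜₁ lies in the interior of C ∪ (−C). -/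
/-- `u` is a dominant eigenvector of `A`. -/
noncomputable def DomEigvec (A : Matrix (Fin 2) (Fin 2) ℝ) (u : Fin 2 → ℝ) : Prop :=
  u ≠ 0 ∧ A.mulVec u = rho2 A • u

/-- `v` is a non-dominant eigenvector of `A`: an eigenvector for an
eigenvalue different from the spectral radius. -/
noncomputable def NonDomEigvec (A : Matrix (Fin 2) (Fin 2) ℝ) (v : Fin 2 → ℝ) : Prop :=
  ∃ μ : ℝ, μ ≠ rho2 A ∧ v ≠ 0 ∧ A.mulVec v = μ • v

/-- The extended family `𝒜₁`: `𝒜` together with all products `A i * A j` of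
two negative-determinant members that are not scalar multiples of `I`. -/
def fam1 {n : ℕ} (A : Fin n → Matrix (Fin 2) (Fin 2) ℝ) :
    Set (Matrix (Fin 2) (Fin 2) ℝ) :=
  Set.range A ∪
    {M | ∃ i j : Fin n, (A i).det < 0 ∧ (A j).det < 0 ∧ M = A i * A j ∧
      ¬ ∃ c : ℝ, M = c • (1 : Matrix (Fin 2) (Fin 2) ℝ)}

open Filter Topology in
/-- Along a line in direction `e ∈ int K`, there is a first parameter in `K`. -/
lemma aux_min (K : Set (Fin 2 → ℝ)) (hK : IsProperCone K) (e : Fin 2 → ℝ)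
    (he : e ∈ interior K) (hne : -e ∉ K) (w : Fin 2 → ℝ) :
    ∃ t : ℝ, w + t • e ∈ K ∧ ∀ s, w + s • e ∈ K → t ≤ s := by
  obtain ⟨hs, ha, hc, hp, -⟩ := hK
  have heK : e ∈ K := interior_subset he
  have hclosed : IsClosed {t : ℝ | w + t • e ∈ K} :=
    hc.preimage (by fun_prop)
  have hnon : {t : ℝ | w + t • e ∈ K}.Nonempty := by
    have h1 : ∀ᶠ r : ℝ in 𝓝 0, e + r • w ∈ K := by
      have hcont : Tendsto (fun r : ℝ => e + r • w) (𝓝 0) (𝓝 e) := by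
        have : Continuous (fun r : ℝ => e + r • w) := by fun_prop
        simpa using this.tendsto 0
      exact hcont (mem_interior_iff_mem_nhds.1 he)
    have h2 : ∀ᶠ r : ℝ in 𝓝[>] 0, e + r • w ∈ K := h1.filter_mono nhdsWithin_le_nhds
    obtain ⟨r, hr, hr0⟩ := (h2.and self_mem_nhdsWithin).exists
    have hr0 : 0 < r := hr0
    refine ⟨r⁻¹, ?_⟩
    have := hs r⁻¹ (by positivity) _ hr
    rw [smul_add, smul_smul, inv_mul_cancel₀ hr0.ne', one_smul, add_comm] at this
    exact this
  have hbdd : BddBelow {t : ℝ | w + t • e ∈ K} := by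
    by_contra hb
    apply hne
    have hup : ∀ t s : ℝ, t ≤ s → w + t • e ∈ K → w + s • e ∈ K := by
      intro t s hts ht
      have := ha _ ht _ (hs (s - t) (by linarith) _ heK)
      convert this using 1
      rw [add_assoc, ← add_smul]; congr 2; ring
    have hall : ∀ s : ℝ, w + s • e ∈ K := by
      intro s
      rw [not_bddBelow_iff] at hb
      obtain ⟨t, ht, hts⟩ := hb s
      exact hup t s hts.le ht
    have hr : ∀ᶠ r : ℝ in 𝓝[>] 0, r • w - e ∈ K := by
      filter_upwards [self_mem_nhdsWithin] with r hr0
      have hr0 : 0 < r := hr0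
      have := hs r hr0.le _ (hall (-r⁻¹))
      rw [smul_add, smul_smul] at this
      convert this using 1
      have : r * -r⁻¹ = -1 := by field_simp
      rw [this, neg_one_smul, sub_eq_add_neg]
    have hcont : Tendsto (fun r : ℝ => r • w - e) (𝓝[>] 0) (𝓝 (-e)) := by
      have : Continuous (fun r : ℝ => r • w - e) := by fun_prop
      have := this.tendsto 0
      simp only [zero_smul, zero_sub] at this
      exact this.mono_left nhdsWithin_le_nhds
    exact hc.mem_of_tendsto hcont hr
  exact ⟨sInf _, hclosed.csInf_mem hnon hbdd, fun s h => csInf_le hbdd h⟩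

/-- A proper cone of the plane is simplicial. -/
lemma aux_simplicial (K : Set (Fin 2 → ℝ)) (hK : IsProperCone K) :
    ∃ P : Matrix (Fin 2) (Fin 2) ℝ, IsUnit P.det ∧
      ∀ y, P.mulVec y ∈ K ↔ 0 ≤ y 0 ∧ 0 ≤ y 1 := by
  obtain ⟨hs, ha, hc, hp, hi⟩ := id hK
  have h0 : ∀ x, x ∈ K → -x ∈ K → x = 0 := by
    intro x hx hx'
    have : x ∈ K ∩ -K := ⟨hx, hx'⟩
    rw [hp] at this
    exact this
  have hi' : ∃ e ∈ interior K, e ≠ 0 := by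
    by_contra hcon
    push Not at hcon
    have hsub : interior K = {0} := by
      obtain ⟨e, he⟩ := hi
      ext x
      constructor
      · exact fun h => hcon x h
      · rintro rfl
        rw [← hcon e he]; exact he
    have : IsOpen ({0} : Set (Fin 2 → ℝ)) := hsub ▸ isOpen_interior
    exact not_isOpen_singleton (0 : Fin 2 → ℝ) this
  obtain ⟨e, he, hez⟩ := hi'
  have heK : e ∈ K := interior_subset he
  have hne : -e ∉ K := fun h => hez (h0 e heK h)
  have hD : 0 < e 0 ^ 2 + e 1 ^ 2 := by
    rcases eq_or_ne (e 0) 0 with h | h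
    · rcases eq_or_ne (e 1) 0 with h' | h'
      · exact absurd (by ext i; fin_cases i <;> simpa) hez
      · positivity
    · positivity
  set w : Fin 2 → ℝ := ![-e 1, e 0] with hw
  obtain ⟨t₁, h1, m1⟩ := aux_min K hK e he hne w
  obtain ⟨t₂, h2, m2⟩ := aux_min K hK e he hne (-w)
  have hsum : (t₁ + t₂) • e ∈ K := by
    have := ha _ h1 _ h2
    convert this using 1
    rw [add_smul]; abel
  have hwe : ∀ t : ℝ, w + t • e ≠ 0 := by
    intro t h
    have a0 := congrFun h 0
    have a1 := congrFun h 1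
    simp [hw] at a0 a1
    have : e 0 ^ 2 + e 1 ^ 2 = 0 := by linear_combination e 0 * a1 - e 1 * a0
    linarith
  have hpos : 0 < t₁ + t₂ := by
    rcases lt_trichotomy (t₁ + t₂) 0 with h | h | h
    · exfalso
      apply hne
      have := hs (-(t₁ + t₂))⁻¹ (by rw [inv_nonneg]; linarith) _ hsum
      rw [smul_smul] at this
      convert this using 1
      have : (-(t₁ + t₂))⁻¹ * (t₁ + t₂) = -1 := by
        have : -(t₁+t₂) ≠ 0 := by linarith
        rw [inv_neg, neg_mul, inv_mul_cancel₀ h.ne]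
      rw [this, neg_one_smul]
    · exfalso
      apply hwe t₁
      apply h0 _ h1
      have : t₂ = -t₁ := by linarith
      rw [this] at h2
      convert h2 using 1
      rw [neg_smul]; abel
    · exact h
  refine ⟨!![w 0 + t₁ * e 0, -w 0 + t₂ * e 0; w 1 + t₁ * e 1, -w 1 + t₂ * e 1], ?_, ?_⟩
  · rw [isUnit_iff_ne_zero, Matrix.det_fin_two_of]
    simp only [hw, Matrix.cons_val_zero, Matrix.cons_val_one]
    have : (-e 1 + t₁ * e 0) * (-e 0 + t₂ * e 1) - (- -e 1 + t₂ * e 0) * (e 0 + t₁ * e 1)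
        = -((t₁ + t₂) * (e 0 ^ 2 + e 1 ^ 2)) := by ring
    rw [this]
    exact neg_ne_zero.2 (by positivity)
  · intro y
    have hform : (!![w 0 + t₁ * e 0, -w 0 + t₂ * e 0; w 1 + t₁ * e 1, -w 1 + t₂ * e 1]).mulVec y
        = y 0 • (w + t₁ • e) + y 1 • (-w + t₂ • e) := by
      ext i
      fin_cases i <;> simp [Matrix.mulVec, dotProduct, Fin.sum_univ_two] <;> ring
    rw [hform]
    constructor
    · intro h
      -- write the vector as `α w + β e`
      have hab : y 0 • (w + t₁ • e) + y 1 • (-w + t₂ • e)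
          = (y 0 - y 1) • w + (y 0 * t₁ + y 1 * t₂) • e := by
        ext i; simp; ring
      rw [hab] at h
      rcases lt_trichotomy (y 0 - y 1) 0 with hα | hα | hα
      · have := hs (-(y 0 - y 1))⁻¹ (by rw [inv_nonneg]; linarith) _ h
        have hx := m2 ((-(y 0 - y 1))⁻¹ * (y 0 * t₁ + y 1 * t₂)) (by
          convert this using 1
          rw [smul_add, smul_smul, smul_smul]
          have : (-(y 0 - y 1))⁻¹ * (y 0 - y 1) = -1 := by
            rw [inv_neg, neg_mul, inv_mul_cancel₀ hα.ne]
          rw [this, neg_one_smul])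
        rw [inv_mul_eq_div, le_div_iff₀ (by linarith)] at hx
        have : 0 ≤ y 0 := by
          have : 0 ≤ y 0 * (t₁ + t₂) := by nlinarith
          exact nonneg_of_mul_nonneg_left this hpos
        exact ⟨this, by linarith⟩
      · have hy : y 1 = y 0 := by linarith
        rw [hy] at h ⊢
        simp only [sub_self, zero_smul, zero_add] at h
        rw [← mul_add] at h
        have : 0 ≤ y 0 := by
          by_contra hneg
          push Not at hneg
          apply hne
          have hl : y 0 * (t₁ + t₂) < 0 := mul_neg_of_neg_of_pos hneg hpos
          have := hs (-(y 0 * (t₁ + t₂)))⁻¹ (by rw [inv_nonneg]; linarith) _ h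
          rw [smul_smul, inv_neg, neg_mul, inv_mul_cancel₀ hl.ne, neg_one_smul] at this
          exact this
        exact ⟨this, this⟩
      · have := hs (y 0 - y 1)⁻¹ (by rw [inv_nonneg]; linarith) _ h
        have hx := m1 ((y 0 - y 1)⁻¹ * (y 0 * t₁ + y 1 * t₂)) (by
          convert this using 1
          rw [smul_add, smul_smul, smul_smul, inv_mul_cancel₀ hα.ne', one_smul])
        rw [inv_mul_eq_div, le_div_iff₀ (by linarith)] at hx
        have : 0 ≤ y 1 := by
          have : 0 ≤ y 1 * (t₁ + t₂) := by nlinarith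
          exact nonneg_of_mul_nonneg_left this hpos
        exact ⟨by linarith, this⟩
    · rintro ⟨hy0, hy1⟩
      exact ha _ (hs _ hy0 _ h1) _ (hs _ hy1 _ h2)

/-- The coordinate form of an invariant matrix. -/
lemma aux_nonneg (K : Set (Fin 2 → ℝ)) (P M : Matrix (Fin 2) (Fin 2) ℝ) (hP : IsUnit P.det)
    (hPK : ∀ y, P.mulVec y ∈ K ↔ 0 ≤ y 0 ∧ 0 ≤ y 1) (hM : InvariantUnder M K) :
    ∃ a b c d : ℝ, 0 ≤ a ∧ 0 ≤ b ∧ 0 ≤ c ∧ 0 ≤ d ∧ M = P * !![a, b; c, d] * P⁻¹ ∧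
      M.trace = a + d ∧ M.det = a * d - b * c ∧
      ∀ y, M.mulVec (P.mulVec y) = P.mulVec ![a * y 0 + b * y 1, c * y 0 + d * y 1] := by
  obtain ⟨N, hN⟩ : ∃ N, N = P⁻¹ * M * P := ⟨_, rfl⟩
  have hMP : P * N = M * P := by
    rw [hN, ← mul_assoc, ← mul_assoc, Matrix.mul_nonsing_inv _ hP, one_mul]
  have hMN : M = P * N * P⁻¹ := by
    rw [hMP, mul_assoc, Matrix.mul_nonsing_inv _ hP, mul_one]
  have hNe : N = !![N 0 0, N 0 1; N 1 0, N 1 1] := Matrix.eta_fin_two N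
  have key : ∀ y, M.mulVec (P.mulVec y) = P.mulVec (N.mulVec y) := by
    intro y
    rw [Matrix.mulVec_mulVec, Matrix.mulVec_mulVec, hMP]
  have hvec : ∀ y, N.mulVec y = ![N 0 0 * y 0 + N 0 1 * y 1, N 1 0 * y 0 + N 1 1 * y 1] := by
    intro y
    ext i
    fin_cases i <;> simp [Matrix.mulVec, dotProduct, Fin.sum_univ_two]
  have k0 := hM _ ((hPK ![1, 0]).2 (by simp))
  have k1 := hM _ ((hPK ![0, 1]).2 (by simp))
  rw [key, hPK, hvec] at k0 k1
  simp at k0 k1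
  refine ⟨N 0 0, N 0 1, N 1 0, N 1 1, k0.1, k1.1, k0.2, k1.2, ?_, ?_, ?_, ?_⟩
  · rw [← hNe]; exact hMN
  · rw [hMN, Matrix.trace_mul_comm, ← mul_assoc, Matrix.nonsing_inv_mul _ hP, one_mul,
      Matrix.trace_fin_two]
  · rw [hMN, Matrix.det_conj ((Matrix.isUnit_iff_isUnit_det P).2 hP), Matrix.det_fin_two]
  · intro y; rw [key, hvec]

lemma aux_disc (a b c d : ℝ) (hb : 0 ≤ b) (hc : 0 ≤ c) :
    ∃ s : ℝ, s = Real.sqrt ((a + d) ^ 2 - 4 * (a * d - b * c)) ∧ 0 ≤ s ∧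
      s ^ 2 = (a - d) ^ 2 + 4 * (b * c) ∧ a - d ≤ s ∧ d - a ≤ s := by
  have h : 0 ≤ b * c := mul_nonneg hb hc
  have he : (a + d) ^ 2 - 4 * (a * d - b * c) = (a - d) ^ 2 + 4 * (b * c) := by ring
  refine ⟨_, rfl, Real.sqrt_nonneg _, ?_, ?_, ?_⟩
  · rw [Real.sq_sqrt (by rw [he]; positivity), he]
  · apply Real.le_sqrt_of_sq_le; rw [he]; linarith
  · apply Real.le_sqrt_of_sq_le; rw [he]; nlinarith

/-- A nonnegative matrix with positive discriminant is diagonalizable, so a nondiagonalizable one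
is triangular with constant diagonal. -/
lemma aux_nondiag (P : Matrix (Fin 2) (Fin 2) ℝ) (hP : IsUnit P.det) (a b c d : ℝ)
    (hb : 0 ≤ b) (hc : 0 ≤ c)
    (h : ¬ IsDiagonalizable (P * !![a, b; c, d] * P⁻¹)) :
    a = d ∧ ((c = 0 ∧ 0 < b) ∨ (b = 0 ∧ 0 < c)) := by
  have hPi : P⁻¹ * P = 1 := Matrix.nonsing_inv_mul _ hP
  have hcl : ∀ (Q : Matrix (Fin 2) (Fin 2) ℝ) (l m : ℝ), IsUnit Q.det →
      !![a, b; c, d] * Q = Q * !![l, 0; 0, m] → False := by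
    intro Q l m hQ hQl
    apply h
    refine ⟨P * Q, by rw [Matrix.det_mul]; exact hP.mul hQ, ?_⟩
    have : (P * Q)⁻¹ * (P * !![a, b; c, d] * P⁻¹) * (P * Q) = !![l, 0; 0, m] := by
      calc (P * Q)⁻¹ * (P * !![a, b; c, d] * P⁻¹) * (P * Q)
          = Q⁻¹ * (P⁻¹ * P) * !![a, b; c, d] * (P⁻¹ * P) * Q := by
            rw [Matrix.mul_inv_rev]; simp only [mul_assoc]
        _ = Q⁻¹ * (!![a, b; c, d] * Q) := by rw [hPi]; simp only [mul_one, mul_assoc]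
        _ = !![l, 0; 0, m] := by
            rw [hQl, ← mul_assoc, Matrix.nonsing_inv_mul _ hQ, one_mul]
    rw [this]
    intro i j hij
    fin_cases i <;> fin_cases j <;> simp at hij ⊢
  obtain ⟨s, -, hs0, hs2, h1, h2⟩ := aux_disc a b c d hb hc
  have hsz : s = 0 := by
    by_contra hsne
    have hspos : 0 < s := lt_of_le_of_ne hs0 (Ne.symm hsne)
    rcases le_total d a with hda | hda
    · -- columns `(a - d + s, 2c)` and `(-2b, a - d + s)`
      refine hcl !![a - d + s, -2 * b; 2 * c, a - d + s] ((a + d + s) / 2) ((a + d - s) / 2) ?_ ?_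
      · rw [isUnit_iff_ne_zero, Matrix.det_fin_two_of]
        have : 0 ≤ b * c := mul_nonneg hb hc
        have : 0 < (a - d + s) * (a - d + s) := by
          have : 0 < a - d + s := by linarith
          positivity
        nlinarith
      · ext i j
        fin_cases i <;> fin_cases j <;> simp [Matrix.mul_apply, Fin.sum_univ_two] <;> nlinarith [hs2]
    · refine hcl !![2 * b, d - a + s; d - a + s, -2 * c] ((a + d + s) / 2) ((a + d - s) / 2) ?_ ?_
      · rw [isUnit_iff_ne_zero, Matrix.det_fin_two_of]
        have : 0 ≤ b * c := mul_nonneg hb hc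
        have : 0 < (d - a + s) * (d - a + s) := by
          have : 0 < d - a + s := by linarith
          positivity
        nlinarith
      · ext i j
        fin_cases i <;> fin_cases j <;> simp [Matrix.mul_apply, Fin.sum_univ_two] <;> nlinarith [hs2]
  have hbc : 0 ≤ b * c := mul_nonneg hb hc
  rw [hsz] at hs2
  have had : a - d = 0 := by nlinarith [sq_nonneg (a - d)]
  have hbc0 : b * c = 0 := by nlinarith [sq_nonneg (a - d)]
  refine ⟨by linarith, ?_⟩
  have hnot : ¬ (b = 0 ∧ c = 0) := by
    rintro ⟨rfl, rfl⟩
    exact hcl 1 a d (by simp) (by simp)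
  rcases mul_eq_zero.1 hbc0 with hb0 | hc0
  · exact Or.inr ⟨hb0, lt_of_le_of_ne hc fun h => hnot ⟨hb0, h.symm⟩⟩
  · exact Or.inl ⟨hc0, lt_of_le_of_ne hb fun h => hnot ⟨h.symm, hc0⟩⟩

/-- Eigenvector equations in coordinates. -/
lemma aux_eig (P M : Matrix (Fin 2) (Fin 2) ℝ) (hP : IsUnit P.det) (a b c d : ℝ)
    (hact : ∀ y, M.mulVec (P.mulVec y) = P.mulVec ![a * y 0 + b * y 1, c * y 0 + d * y 1])
    (y : Fin 2 → ℝ) (μ : ℝ) (hv : P.mulVec y ≠ 0)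
    (h : M.mulVec (P.mulVec y) = μ • P.mulVec y) :
    y ≠ 0 ∧ a * y 0 + b * y 1 = μ * y 0 ∧ c * y 0 + d * y 1 = μ * y 1 := by
  have hinj := Matrix.mulVec_injective_of_isUnit ((Matrix.isUnit_iff_isUnit_det P).2 hP)
  rw [hact, ← Matrix.mulVec_smul] at h
  have h := hinj h
  refine ⟨?_, ?_, ?_⟩
  · rintro rfl
    simp at hv
  · simpa using congrFun h 0
  · simpa using congrFun h 1

lemma aux_dom (P M : Matrix (Fin 2) (Fin 2) ℝ) (hP : IsUnit P.det) (a b c d : ℝ)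
    (htr : M.trace = a + d) (hdet : M.det = a * d - b * c)
    (hact : ∀ y, M.mulVec (P.mulVec y) = P.mulVec ![a * y 0 + b * y 1, c * y 0 + d * y 1])
    (y : Fin 2 → ℝ) (h : DomEigvec M (P.mulVec y)) :
    y ≠ 0 ∧
      a * y 0 + b * y 1 = (a + d + Real.sqrt ((a + d) ^ 2 - 4 * (a * d - b * c))) / 2 * y 0 ∧
      c * y 0 + d * y 1 = (a + d + Real.sqrt ((a + d) ^ 2 - 4 * (a * d - b * c))) / 2 * y 1 := by
  have := aux_eig P M hP a b c d hact y _ h.1 h.2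
  rwa [rho2, htr, hdet] at this

/-- Positive association in coordinates. -/
lemma aux_pos (K : Set (Fin 2 → ℝ)) (P M : Matrix (Fin 2) (Fin 2) ℝ) (hP : IsUnit P.det)
    (hPK : ∀ y, P.mulVec y ∈ K ↔ 0 ≤ y 0 ∧ 0 ≤ y 1) (hM : InvariantUnder M K)
    (hnd : ¬ IsDiagonalizable M) (y z : Fin 2 → ℝ) (hu : DomEigvec M (P.mulVec y)) :
    PosAssoc M (P.mulVec y) (P.mulVec z) ↔ 0 < y 0 * z 1 + y 1 * z 0 := by
  have hinj := Matrix.mulVec_injective_of_isUnit ((Matrix.isUnit_iff_isUnit_det P).2 hP)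
  obtain ⟨a, b, c, d, ha, hb, hc, hd, hMe, htr, hdet, hact⟩ := aux_nonneg K P M hP hPK hM
  obtain ⟨hy, e0, e1⟩ := aux_dom P M hP a b c d htr hdet hact y hu
  obtain ⟨s, hs, hs0, hs2, h1, h2⟩ := aux_disc a b c d hb hc
  rw [hMe] at hnd
  obtain ⟨rfl, h⟩ := aux_nondiag P hP a b c d hb hc hnd
  have hbc : b * c = 0 := by rcases h with h | h <;> simp [h.1]
  have hs3 : s = 0 := by nlinarith
  rw [← hs, hs3] at e0 e1
  have hiff : PosAssoc M (P.mulVec y) (P.mulVec z) ↔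
      ∃ t x : ℝ, 0 < x ∧ (a * y 0 + b * y 1 = t * y 0 ∧ c * y 0 + a * y 1 = t * y 1) ∧
        (a * z 0 + b * z 1 = t * z 0 + x * y 0 ∧ c * z 0 + a * z 1 = t * z 1 + x * y 1) := by
    unfold PosAssoc
    simp only [hact, ← Matrix.mulVec_smul, ← Matrix.mulVec_add, hinj.eq_iff, funext_iff,
      Fin.forall_fin_two]
    simp
  rw [hiff]
  rcases h with ⟨rfl, hb0⟩ | ⟨rfl, hc0⟩
  · have hy1 : y 1 = 0 := by
      have : b * y 1 = 0 := by linarith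
      exact (mul_eq_zero.1 this).resolve_left hb0.ne'
    have hy0 : y 0 ≠ 0 := fun h0 => hy (by ext i; fin_cases i <;> simpa)
    have p0 : 0 < y 0 ^ 2 := by positivity
    constructor
    · rintro ⟨t, x, hx, ⟨k1, -⟩, k2, -⟩
      have ht : t = a := by
        have : (t - a) * y 0 = 0 := by rw [hy1] at k1; linarith
        have := (mul_eq_zero.1 this).resolve_right hy0
        linarith
      subst ht
      have : b * (y 0 * z 1 + y 1 * z 0) = x * y 0 ^ 2 := by
        rw [hy1]; linear_combination y 0 * k2
      have h3 : 0 < b * (y 0 * z 1 + y 1 * z 0) := by rw [this]; positivity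
      exact pos_of_mul_pos_right h3 hb
    · intro h3
      refine ⟨a, b * (y 0 * z 1 + y 1 * z 0) / y 0 ^ 2, by positivity, ⟨?_, ?_⟩, ?_, ?_⟩
      · rw [hy1]; ring
      · rw [hy1]; ring
      · rw [hy1]; field_simp; ring
      · rw [hy1]; ring
  · have hy0 : y 0 = 0 := by
      have : c * y 0 = 0 := by linarith
      exact (mul_eq_zero.1 this).resolve_left hc0.ne'
    have hy1 : y 1 ≠ 0 := fun h0 => hy (by ext i; fin_cases i <;> simpa)
    have p1 : 0 < y 1 ^ 2 := by positivity
    constructor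
    · rintro ⟨t, x, hx, ⟨-, k1⟩, -, k2⟩
      have ht : t = a := by
        have : (t - a) * y 1 = 0 := by rw [hy0] at k1; linarith
        have := (mul_eq_zero.1 this).resolve_right hy1
        linarith
      subst ht
      have : c * (y 0 * z 1 + y 1 * z 0) = x * y 1 ^ 2 := by
        rw [hy0]; linear_combination y 1 * k2
      have h3 : 0 < c * (y 0 * z 1 + y 1 * z 0) := by rw [this]; positivity
      exact pos_of_mul_pos_right h3 hc
    · intro h3
      refine ⟨a, c * (y 0 * z 1 + y 1 * z 0) / y 1 ^ 2, by positivity, ⟨?_, ?_⟩, ?_, ?_⟩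
      · rw [hy0]; ring
      · rw [hy0]; ring
      · rw [hy0]; ring
      · rw [hy0]; field_simp; ring

lemma aux_union (K : Set (Fin 2 → ℝ)) (P : Matrix (Fin 2) (Fin 2) ℝ)
    (hPK : ∀ y, P.mulVec y ∈ K ↔ 0 ≤ y 0 ∧ 0 ≤ y 1) (y : Fin 2 → ℝ) :
    P.mulVec y ∈ K ∪ -K ↔ 0 ≤ y 0 * y 1 := by
  rw [Set.mem_union, Set.mem_neg, ← Matrix.mulVec_neg, hPK, hPK, mul_nonneg_iff]
  simp

open Filter Topology in
lemma aux_int (K : Set (Fin 2 → ℝ)) (P : Matrix (Fin 2) (Fin 2) ℝ)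
    (hPK : ∀ y, P.mulVec y ∈ K ↔ 0 ≤ y 0 ∧ 0 ≤ y 1) (y : Fin 2 → ℝ)
    (hv : P.mulVec y ≠ 0) (hint : P.mulVec y ∈ interior (K ∪ -K)) : 0 < y 0 * y 1 := by
  have hy : y ≠ 0 := by rintro rfl; simp at hv
  have hge := (aux_union K P hPK y).1 (interior_subset hint)
  have hpert : ∀ z : Fin 2 → ℝ, ∃ t : ℝ, 0 < t ∧ 0 ≤ (y 0 + t * z 0) * (y 1 + t * z 1) := by
    intro z
    have hcont : Tendsto (fun r : ℝ => P.mulVec (y + r • z)) (𝓝 0) (𝓝 (P.mulVec y)) := by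
      have : Continuous (fun r : ℝ => P.mulVec (y + r • z)) :=
        Continuous.matrix_mulVec continuous_const (by fun_prop)
      simpa using this.tendsto 0
    have h1 : ∀ᶠ r : ℝ in 𝓝 0, P.mulVec (y + r • z) ∈ K ∪ -K :=
      hcont (mem_interior_iff_mem_nhds.1 hint)
    have h2 : ∀ᶠ r : ℝ in 𝓝[>] 0, P.mulVec (y + r • z) ∈ K ∪ -K :=
      h1.filter_mono nhdsWithin_le_nhds
    obtain ⟨r, hr, hr0⟩ := (h2.and self_mem_nhdsWithin).exists
    refine ⟨r, hr0, ?_⟩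
    simpa using (aux_union K P hPK _).1 hr
  refine lt_of_le_of_ne hge fun h => ?_
  rcases mul_eq_zero.1 h.symm with h0 | h1
  · have hy1 : y 1 ≠ 0 := fun h' => hy (by ext i; fin_cases i <;> simpa)
    obtain ⟨t, ht, hh⟩ := hpert ![-y 1, 0]
    simp [h0] at hh
    have : 0 < t * y 1 * y 1 := by rw [mul_assoc]; exact mul_pos ht (mul_self_pos.2 hy1)
    linarith
  · have hy0 : y 0 ≠ 0 := fun h' => hy (by ext i; fin_cases i <;> simpa)
    obtain ⟨t, ht, hh⟩ := hpert ![0, -y 0]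
    simp [h1] at hh
    have : 0 < y 0 * (t * y 0) := by
      rw [mul_left_comm]; exact mul_pos ht (mul_self_pos.2 hy0)
    linarith

/-- Theorem: necessary conditions for the existence of a common invariant
proper cone for a finite family `𝒜` of real `2×2` matrices. -/
theorem necessary_conditions_common_invariant_cone
    (n : ℕ) (A : Fin n → Matrix (Fin 2) (Fin 2) ℝ)
    (hex : ∃ K : Set (Fin 2 → ℝ), IsProperCone K ∧ ∀ i, InvariantUnder (A i) K) :
    (∀ M ∈ fam1 A, IsVandergraft M) ∧
    (∃ L₁ L₂ : Submodule ℝ (Fin 2 → ℝ),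
      ∀ M ∈ fam1 A, ¬ IsDiagonalizable M → ∀ u, DomEigvec M u →
        Submodule.span ℝ {u} = L₁ ∨ Submodule.span ℝ {u} = L₂) ∧
    (∀ M ∈ fam1 A, ∀ M' ∈ fam1 A, ¬ IsDiagonalizable M → ¬ IsDiagonalizable M' →
      ∀ u, DomEigvec M u → DomEigvec M' u →
        ∀ v : Fin 2 → ℝ, PosAssoc M u v ↔ PosAssoc M' u v) ∧
    (∃ C : Set (Fin 2 → ℝ), IsProperCone C ∧
      (∀ M ∈ fam1 A, (¬ ∃ c : ℝ, M = c • (1 : Matrix (Fin 2) (Fin 2) ℝ)) →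
        ∀ u, DomEigvec M u → u ∈ C ∪ (-C)) ∧
      (∀ M ∈ fam1 A, ∀ v, NonDomEigvec M v → v ∉ interior (C ∪ (-C)))) := by
  obtain ⟨K, hK, hinv⟩ := hex
  have hfam : ∀ M ∈ fam1 A, InvariantUnder M K := by
    rintro M (⟨i, rfl⟩ | ⟨i, j, -, -, rfl, -⟩)
    · exact hinv i
    · intro x hx
      rw [← Matrix.mulVec_mulVec]
      exact hinv i _ (hinv j x hx)
  obtain ⟨P, hP, hPK⟩ := aux_simplicial K hK
  have hsurj : ∀ u, ∃ y, u = P.mulVec y := fun u => ⟨P⁻¹.mulVec u, by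
    rw [Matrix.mulVec_mulVec, Matrix.mul_nonsing_inv _ hP, Matrix.one_mulVec]⟩
  refine ⟨?_, ⟨Submodule.span ℝ {P.mulVec ![1, 0]}, Submodule.span ℝ {P.mulVec ![0, 1]}, ?_⟩,
    ?_, K, hK, ?_, ?_⟩
  · intro M hM
    obtain ⟨a, b, c, d, ha, hb, hc, hd, -, htr, hdet, -⟩ := aux_nonneg K P M hP hPK (hfam M hM)
    refine ⟨?_, by rw [htr]; linarith⟩
    rw [htr, hdet]
    nlinarith [sq_nonneg (a - d), mul_nonneg hb hc]
  · intro M hM hnd u hu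
    obtain ⟨y, rfl⟩ := hsurj u
    obtain ⟨a, b, c, d, ha, hb, hc, hd, hMe, htr, hdet, hact⟩ :=
      aux_nonneg K P M hP hPK (hfam M hM)
    obtain ⟨hy, e0, e1⟩ := aux_dom P M hP a b c d htr hdet hact y hu
    obtain ⟨s, hs, hs0, hs2, h1, h2⟩ := aux_disc a b c d hb hc
    rw [hMe] at hnd
    obtain ⟨rfl, h⟩ := aux_nondiag P hP a b c d hb hc hnd
    have hbc : b * c = 0 := by rcases h with h | h <;> simp [h.1]
    have hs3 : s = 0 := by nlinarith
    rw [← hs, hs3] at e0 e1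
    rcases h with ⟨rfl, h⟩ | ⟨rfl, h⟩
    · have hy1 : y 1 = 0 := by
        have : b * y 1 = 0 := by linarith
        exact (mul_eq_zero.1 this).resolve_left h.ne'
      have hy0 : y 0 ≠ 0 := fun h0 => hy (by ext i; fin_cases i <;> simpa)
      left
      have : P.mulVec y = y 0 • P.mulVec ![1, 0] := by
        rw [← Matrix.mulVec_smul]; congr 1; ext i; fin_cases i <;> simp [hy1]
      rw [this]
      exact Submodule.span_singleton_smul_eq (IsUnit.mk0 _ hy0) _
    · have hy0 : y 0 = 0 := by
        have : c * y 0 = 0 := by linarith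
        exact (mul_eq_zero.1 this).resolve_left h.ne'
      have hy1 : y 1 ≠ 0 := fun h0 => hy (by ext i; fin_cases i <;> simpa)
      right
      have : P.mulVec y = y 1 • P.mulVec ![0, 1] := by
        rw [← Matrix.mulVec_smul]; congr 1; ext i; fin_cases i <;> simp [hy0]
      rw [this]
      exact Submodule.span_singleton_smul_eq (IsUnit.mk0 _ hy1) _
  · intro M hM M' hM' hnd hnd' u hu hu' v
    obtain ⟨y, rfl⟩ := hsurj u
    obtain ⟨z, rfl⟩ := hsurj v
    rw [aux_pos K P M hP hPK (hfam M hM) hnd y z hu,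
      aux_pos K P M' hP hPK (hfam M' hM') hnd' y z hu']
  · intro M hM hns u hu
    obtain ⟨y, rfl⟩ := hsurj u
    obtain ⟨a, b, c, d, ha, hb, hc, hd, hMe, htr, hdet, hact⟩ :=
      aux_nonneg K P M hP hPK (hfam M hM)
    obtain ⟨hy, e0, e1⟩ := aux_dom P M hP a b c d htr hdet hact y hu
    obtain ⟨s, hs, hs0, hs2, h1, h2⟩ := aux_disc a b c d hb hc
    rw [← hs] at e0 e1
    rw [aux_union K P hPK]
    by_contra hneg
    push Not at hneg
    apply hns
    have hy0 : y 0 ≠ 0 := by rintro h; simp [h] at hneg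
    have hy1 : y 1 ≠ 0 := by rintro h; simp [h] at hneg
    have p0 : 0 < y 0 ^ 2 := by positivity
    have p1 : 0 < y 1 ^ 2 := by positivity
    have q0 : (d - a + s) / 2 * y 0 ^ 2 = b * (y 0 * y 1) := by
      linear_combination (-y 0) * e0
    have q1 : (a - d + s) / 2 * y 1 ^ 2 = c * (y 0 * y 1) := by
      linear_combination (-y 1) * e1
    have r0 : 0 ≤ (d - a + s) / 2 * y 0 ^ 2 := by
      have : 0 ≤ (d - a + s) / 2 := by linarith
      positivity
    have r1 : 0 ≤ (a - d + s) / 2 * y 1 ^ 2 := by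
      have : 0 ≤ (a - d + s) / 2 := by linarith
      positivity
    have hb0 : b = 0 := by
      by_contra h
      have : 0 < b := lt_of_le_of_ne hb (Ne.symm h)
      nlinarith
    have hc0 : c = 0 := by
      by_contra h
      have : 0 < c := lt_of_le_of_ne hc (Ne.symm h)
      nlinarith
    subst hb0 hc0
    have f0 : (d - a + s) / 2 = 0 := by
      rw [zero_mul] at q0; exact (mul_eq_zero.1 q0).resolve_right p0.ne'
    have f1 : (a - d + s) / 2 = 0 := by
      rw [zero_mul] at q1; exact (mul_eq_zero.1 q1).resolve_right p1.ne'
    have had : d = a := by linarith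
    refine ⟨a, ?_⟩
    have : !![a, 0; 0, d] = a • (1 : Matrix (Fin 2) (Fin 2) ℝ) := by
      rw [had]; ext i j; fin_cases i <;> fin_cases j <;> simp
    rw [hMe, this, Matrix.mul_smul, mul_one, Matrix.smul_mul, Matrix.mul_nonsing_inv _ hP]
  · rintro M hM v ⟨μ, hμ, hv, hMv⟩ hint
    obtain ⟨y, rfl⟩ := hsurj v
    obtain ⟨a, b, c, d, ha, hb, hc, hd, hMe, htr, hdet, hact⟩ :=
      aux_nonneg K P M hP hPK (hfam M hM)
    obtain ⟨hy, e0, e1⟩ := aux_eig P M hP a b c d hact y μ hv hMv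
    obtain ⟨s, hs, hs0, hs2, h1, h2⟩ := aux_disc a b c d hb hc
    have hyy := aux_int K P hPK y hv hint
    rw [rho2, htr, hdet, ← hs] at hμ
    have hy0 : y 0 ≠ 0 := by rintro h; simp [h] at hyy
    have hchar : (μ - (a + d + s) / 2) * (μ - (a + d - s) / 2) = 0 := by
      have : y 0 * ((μ - a) * (μ - d) - b * c) = 0 := by
        linear_combination (-(μ - d)) * e0 - b * e1
      have := (mul_eq_zero.1 this).resolve_left hy0
      linear_combination this - hs2 / 4
    have hμ2 : μ = (a + d - s) / 2 := by
      have := (mul_eq_zero.1 hchar).resolve_left (sub_ne_zero.2 hμ)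
      linarith
    have hspos : 0 < s := lt_of_le_of_ne hs0 (by rintro rfl; exact hμ (by linarith))
    have p0 : 0 < y 0 ^ 2 := by positivity
    have p1 : 0 < y 1 ^ 2 := by
      have : y 1 ≠ 0 := by rintro h; simp [h] at hyy
      positivity
    have q0 : (a - d + s) / 2 * y 0 ^ 2 = - (b * (y 0 * y 1)) := by
      linear_combination (y 0) * e0 + y 0 ^ 2 * hμ2
    have q1 : (d - a + s) / 2 * y 1 ^ 2 = - (c * (y 0 * y 1)) := by
      linear_combination (y 1) * e1 + y 1 ^ 2 * hμ2
    have n0 := mul_nonneg hb hyy.le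
    have n1 := mul_nonneg hc hyy.le
    have f0 : (a - d + s) / 2 ≤ 0 := by
      by_contra h
      push Not at h
      have := mul_pos h p0
      linarith
    have f1 : (d - a + s) / 2 ≤ 0 := by
      by_contra h
      push Not at h
      have := mul_pos h p1
      linarith
    linarith
end

section
/- Let 𝒜 = {A₁,…,Aₙ} be a finite family of diagonalizable real 2×2 matrices with det A_j ≥ 0 for every j. Then there exists a proper cone K ⊆ ℝ² invariant under every A_j if and only if (i) every A_j is a Vandergraft matrix, and (ii) there exists a proper cone C ⊆ ℝ² such that every dominant eigenvector of every A_j that is not a scalar multiple of the identity lies in C ∪ (−C), while no non-dominant eigenvector of any A_j lies in the interior of C ∪ (−C). -/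
open Filter Topology in
lemma limit_mem {K : Set (Fin 2 → ℝ)} (hK : IsProperCone K) {A : Matrix (Fin 2) (Fin 2) ℝ}
    (hA : InvariantUnder A K) {u v : Fin 2 → ℝ} {l m : ℝ} (hu : A.mulVec u = l • u)
    (hv : A.mulVec v = m • v) (hm : 0 ≤ m) (hlm : m < l) {a b : ℝ}
    (h : a • u + b • v ∈ K) : a • u ∈ K := by
  have hl : 0 < l := by linarith
  have key : ∀ k : ℕ, a • u + ((m / l) ^ k * b) • v ∈ K := by
    intro k
    induction k with
    | zero => simpa using h
    | succ k ih =>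
      have h1 := hK.1 l⁻¹ (by positivity) _ (hA _ ih)
      convert h1 using 1
      rw [Matrix.mulVec_add, Matrix.mulVec_smul, Matrix.mulVec_smul, hu, hv]
      ext i
      simp only [Pi.add_apply, Pi.smul_apply, smul_eq_mul]
      rw [pow_succ]
      have e1 : l⁻¹ * l = 1 := inv_mul_cancel₀ hl.ne'
      rw [div_eq_mul_inv m l]
      linear_combination (-(a * u i)) * e1
  have ht : Tendsto (fun k : ℕ => a • u + ((m / l) ^ k * b) • v) atTop (𝓝 (a • u + ((0:ℝ) * b) • v)) := by
    have h0 : Tendsto (fun k : ℕ => (m / l) ^ k) atTop (𝓝 0) :=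
      tendsto_pow_atTop_nhds_zero_of_lt_one (by positivity) (by rw [div_lt_one hl]; exact hlm)
    exact tendsto_const_nhds.add ((h0.mul_const b).smul_const v)
  have := hK.2.2.1.mem_of_tendsto ht (Eventually.of_forall key)
  simpa using this

lemma eps_of_interior {K : Set (Fin 2 → ℝ)} {x : Fin 2 → ℝ} (hx : x ∈ interior K)
    (e : Fin 2 → ℝ) : ∀ᶠ t in nhds (0:ℝ), x + t • e ∈ K := by
  have hc : Continuous (fun t : ℝ => x + t • e) := by fun_prop
  have : Filter.Tendsto (fun t : ℝ => x + t • e) (nhds 0) (nhds x) := by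
    simpa using hc.tendsto 0
  exact this.eventually (mem_interior_iff_mem_nhds.1 hx)

lemma exists_pos_of_eventually {p : ℝ → Prop} (h : ∀ᶠ t in nhds (0:ℝ), p t) : ∃ t > 0, p t := by
  have h2 : ∀ᶠ t in nhdsWithin (0:ℝ) (Set.Ioi 0), p t := h.filter_mono nhdsWithin_le_nhds
  obtain ⟨t, ht, ht'⟩ := (h2.and self_mem_nhdsWithin).exists
  exact ⟨t, ht', ht⟩

lemma IsProperCone.eq_zero {K : Set (Fin 2 → ℝ)} (hK : IsProperCone K) {x : Fin 2 → ℝ}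
    (h1 : x ∈ K) (h2 : -x ∈ K) : x = 0 := by
  have : x ∈ K ∩ (-K) := ⟨h1, h2⟩
  rw [hK.2.2.2.1] at this
  exact this

structure EigPack (A : Matrix (Fin 2) (Fin 2) ℝ) (u v : Fin 2 → ℝ) (l m : ℝ)
    (f g : (Fin 2 → ℝ) →ₗ[ℝ] ℝ) : Prop where
  hu : A.mulVec u = l • u
  hv : A.mulVec v = m • v
  fu : f u = 1
  fv : f v = 0
  gu : g u = 0
  gv : g v = 1
  rep : ∀ y, y = f y • u + g y • v
  tr : A.trace = l + m
  dt : A.det = l * m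

namespace EigPack
variable {A : Matrix (Fin 2) (Fin 2) ℝ} {u v : Fin 2 → ℝ} {l m : ℝ}
    {f g : (Fin 2 → ℝ) →ₗ[ℝ] ℝ}

lemma u_ne (E : EigPack A u v l m f g) : u ≠ 0 := by
  rintro rfl; have := E.fu; simp at this
lemma v_ne (E : EigPack A u v l m f g) : v ≠ 0 := by
  rintro rfl; have := E.gv; simp at this

lemma swap (E : EigPack A u v l m f g) : EigPack A v u m l g f :=
  ⟨E.hv, E.hu, E.gv, E.gu, E.fv, E.fu, fun y => by rw [add_comm]; exact E.rep y,
    by rw [E.tr, add_comm], by rw [E.dt, mul_comm]⟩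

lemma negu (E : EigPack A u v l m f g) : EigPack A (-u) v l m (-f) g :=
  ⟨by rw [Matrix.mulVec_neg, E.hu, smul_neg], E.hv, by simp [E.fu], by simp [E.fv], by simp [E.gu],
    E.gv, fun y => by simpa using E.rep y, E.tr, E.dt⟩

lemma mulVec (E : EigPack A u v l m f g) (y : Fin 2 → ℝ) :
    A.mulVec y = (l * f y) • u + (m * g y) • v := by
  conv_lhs => rw [E.rep y]
  rw [Matrix.mulVec_add, Matrix.mulVec_smul, Matrix.mulVec_smul, E.hu, E.hv, smul_smul, smul_smul,
    mul_comm, mul_comm m]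

lemma f_mulVec (E : EigPack A u v l m f g) (y : Fin 2 → ℝ) : f (A.mulVec y) = l * f y := by
  rw [E.mulVec]; simp [E.fu, E.fv]
lemma g_mulVec (E : EigPack A u v l m f g) (y : Fin 2 → ℝ) : g (A.mulVec y) = m * g y := by
  rw [E.mulVec]; simp [E.gu, E.gv]

lemma rho (E : EigPack A u v l m f g) (h : m ≤ l) : rho2 A = l := by
  have : (l + m) ^ 2 - 4 * (l * m) = (l - m) ^ 2 := by ring
  rw [rho2, E.tr, E.dt, this, Real.sqrt_sq (by linarith)]
  ring

lemma scalar (E : EigPack A u v l m f g) (h : l = m) : A = l • (1 : Matrix (Fin 2) (Fin 2) ℝ) := by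
  apply Matrix.ext_of_mulVec_single
  intro i
  rw [E.mulVec, ← h, mul_smul, mul_smul, ← smul_add, ← E.rep, Matrix.smul_mulVec, Matrix.one_mulVec]

lemma not_scalar (E : EigPack A u v l m f g) (h : m ≠ l) :
    ¬ ∃ c : ℝ, A = c • (1 : Matrix (Fin 2) (Fin 2) ℝ) := by
  rintro ⟨c, rfl⟩
  have h1 := E.f_mulVec u
  have h2 := E.g_mulVec v
  simp [Matrix.smul_mulVec, E.fu, E.gv] at h1 h2
  exact h (h2.symm.trans h1)

lemma m_nonneg (E : EigPack A u v l m f g) (hV : IsVandergraft A) (hd : 0 ≤ A.det)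
    (hml : m ≤ l) : 0 ≤ m := by
  have h := hV.2
  rw [E.tr] at h
  rw [E.dt] at hd
  by_contra hc
  push Not at hc
  nlinarith
end EigPack

lemma exists_pack {A : Matrix (Fin 2) (Fin 2) ℝ} (h : IsDiagonalizable A) :
    ∃ u v l m f g, EigPack A u v l m f g ∧ m ≤ l := by
  suffices H : ∃ u v l m f g, EigPack A u v l m f g by
    obtain ⟨u, v, l, m, f, g, E⟩ := H
    rcases le_total m l with h | h
    · exact ⟨u, v, l, m, f, g, E, h⟩
    · exact ⟨_, _, _, _, _, _, E.swap, h⟩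
  obtain ⟨P, hP, hD⟩ := h
  set D := P⁻¹ * A * P with hDdef
  have hPP : P * P⁻¹ = 1 := Matrix.mul_nonsing_inv _ hP
  have hPP' : P⁻¹ * P = 1 := Matrix.nonsing_inv_mul _ hP
  have hAP : A * P = P * D := by
    rw [hDdef, ← mul_assoc, ← mul_assoc, hPP, one_mul]
  have h01 : D 0 1 = 0 := hD (by decide)
  have h10 : D 1 0 = 0 := hD (by decide)
  have htr : A.trace = D.trace := by
    rw [hDdef, Matrix.trace_mul_comm, ← mul_assoc, hPP, one_mul]
  have hdt : A.det = D.det := by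
    have := congrArg Matrix.det hAP
    rw [Matrix.det_mul, Matrix.det_mul, mul_comm] at this
    exact mul_left_cancel₀ hP.ne_zero this
  refine ⟨fun i => P i 0, fun i => P i 1, D 0 0, D 1 1,
    (LinearMap.proj 0).comp P⁻¹.mulVecLin, (LinearMap.proj 1).comp P⁻¹.mulVecLin, ?_⟩
  have e : ∀ i j, (P⁻¹ * P) i j = (1 : Matrix (Fin 2) (Fin 2) ℝ) i j := fun i j => by rw [hPP']
  constructor
  · ext i
    have := congrFun (congrFun hAP i) 0
    simp [Matrix.mul_apply, Fin.sum_univ_two, h10] at this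
    simp [Matrix.mulVec, dotProduct, Fin.sum_univ_two]; linarith
  · ext i
    have := congrFun (congrFun hAP i) 1
    simp [Matrix.mul_apply, Fin.sum_univ_two, h01] at this
    simp [Matrix.mulVec, dotProduct, Fin.sum_univ_two]; linarith
  · exact (e 0 0).trans (by simp)
  · exact (e 0 1).trans (by simp)
  · exact (e 1 0).trans (by simp)
  · exact (e 1 1).trans (by simp)
  · intro y
    have hy : y = P.mulVec (P⁻¹.mulVec y) := by rw [Matrix.mulVec_mulVec, hPP, Matrix.one_mulVec]
    conv_lhs => rw [hy]
    ext i
    simp only [LinearMap.comp_apply, LinearMap.proj_apply, Matrix.mulVecLin_apply, Pi.add_apply,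
      Pi.smul_apply, smul_eq_mul]
    rw [Matrix.mulVec, dotProduct, Fin.sum_univ_two]; ring
  · rw [htr, Matrix.trace_fin_two]
  · rw [hdt, Matrix.det_fin_two, h01]; ring

lemma backward {C : Set (Fin 2 → ℝ)} (hC : IsProperCone C) {A : Matrix (Fin 2) (Fin 2) ℝ}
    {u v : Fin 2 → ℝ} {l m : ℝ} {f g : (Fin 2 → ℝ) →ₗ[ℝ] ℝ} (E : EigPack A u v l m f g)
    (hm : 0 ≤ m) (hlm : m < l) (huC : u ∈ C)
    (hnd : ∀ v, NonDomEigvec A v → v ∉ interior (C ∪ (-C))) : InvariantUnder A C := by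
  intro x hx
  have hx' := E.rep x
  set a := f x with ha
  set b := g x with hb
  rcases le_or_gt 0 a with h0 | h0
  · have h1 := hC.2.1 _ (hC.1 m hm x hx) _ (hC.1 ((l - m) * a) (mul_nonneg (by linarith) h0) u huC)
    convert h1 using 1
    rw [E.mulVec, ← ha, ← hb]
    conv_rhs => rw [hx']
    module
  · exfalso
    by_cases hb0 : b = 0
    · rw [hb0, zero_smul, add_zero] at hx'
      have h1 := hC.1 (-a)⁻¹ (inv_nonneg.2 (by linarith)) x hx
      have h2 : (-a)⁻¹ • x = -u := by
        rw [hx', smul_smul, inv_neg, neg_mul, inv_mul_cancel₀ h0.ne, neg_one_smul]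
      exact E.u_ne (hC.eq_zero huC (h2 ▸ h1))
    · refine hnd (b • v) ⟨m, by rw [E.rho hlm.le]; exact hlm.ne, smul_ne_zero hb0 E.v_ne, by
        rw [Matrix.mulVec_smul, E.hv, smul_comm]⟩ ?_
      have fc : Continuous f := f.continuous_of_finiteDimensional
      have gc : Continuous g := g.continuous_of_finiteDimensional
      rw [mem_interior]
      refine ⟨{y | 0 < g y / b} ∩ {y | 0 < f y - a * (g y / b)}, ?_, ?_, ?_⟩
      · rintro y ⟨h1, h2⟩
        left
        have h3 := hC.2.1 _ (hC.1 _ (le_of_lt h1) x hx) _ (hC.1 _ (le_of_lt h2) u huC)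
        convert h3 using 1
        conv_lhs => rw [E.rep y]
        conv_rhs => rw [hx']
        have : g y = g y / b * b := by field_simp
        conv_lhs => rw [this]
        module
      · exact (isOpen_lt continuous_const (by fun_prop)).inter
          (isOpen_lt continuous_const (by fun_prop))
      · constructor
        · simp [E.gv, hb0]
        · simp [E.gv, E.fv, hb0, h0]

lemma InvariantUnder.neg' {K : Set (Fin 2 → ℝ)} {A : Matrix (Fin 2) (Fin 2) ℝ}
    (h : InvariantUnder A K) : InvariantUnder A (-K) := by
  intro x hx
  have := h _ hx
  rwa [Matrix.mulVec_neg] at this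

lemma IsProperCone.neg' {K : Set (Fin 2 → ℝ)} (h : IsProperCone K) : IsProperCone (-K) := by
  obtain ⟨h1, h2, h3, h4, x, hx⟩ := h
  refine ⟨fun a ha x hx => ?_, fun x hx y hy => ?_, h3.neg, ?_, ⟨-x, ?_⟩⟩
  · have := h1 a ha _ hx
    rwa [smul_neg] at this
  · have := h2 _ hx _ hy
    rw [← neg_add] at this
    exact this
  · rw [neg_neg, Set.inter_comm]; exact h4
  · have : interior (-K) = -interior K := ((Homeomorph.neg (Fin 2 → ℝ)).preimage_interior K).symm
    rw [this]; simpa using hx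

lemma vandergraft_of_inv {K : Set (Fin 2 → ℝ)} (hK : IsProperCone K)
    {A : Matrix (Fin 2) (Fin 2) ℝ} (hA : InvariantUnder A K) (hd : 0 ≤ A.det)
    {u v : Fin 2 → ℝ} {l m : ℝ} {f g : (Fin 2 → ℝ) →ₗ[ℝ] ℝ} (E : EigPack A u v l m f g) :
    IsVandergraft A := by
  refine ⟨by rw [E.tr, E.dt]; nlinarith [sq_nonneg (l - m)], ?_⟩
  by_contra hneg
  push Not at hneg
  rw [E.tr] at hneg
  rw [E.dt] at hd
  have key : ∀ x ∈ K, A.mulVec x = 0 := by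
    intro x hx
    have h1 := hA _ hx
    have h2 := hK.2.1 _ (hA _ h1) _ (hK.1 _ hd _ hx)
    have h3 : A.mulVec (A.mulVec x) + (l * m) • x = (l + m) • A.mulVec x := by
      rw [E.mulVec (A.mulVec x), E.f_mulVec, E.g_mulVec, E.mulVec x]
      nth_rw 3 [E.rep x]
      module
    rw [h3] at h2
    have h4 := hK.1 (-(l + m))⁻¹ (inv_nonneg.2 (by linarith)) _ h2
    rw [smul_smul, inv_neg, neg_mul, inv_mul_cancel₀ hneg.ne, neg_one_smul] at h4
    exact hK.eq_zero h1 h4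
  obtain ⟨x, hx⟩ := hK.2.2.2.2
  have hx0 := key x (interior_subset hx)
  obtain ⟨s, hs, hsK⟩ := exists_pos_of_eventually (eps_of_interior hx u)
  obtain ⟨t, ht, htK⟩ := exists_pos_of_eventually (eps_of_interior hx v)
  have h1 := congrArg f (key _ hsK)
  have h2 := congrArg g (key _ htK)
  rw [Matrix.mulVec_add, hx0, zero_add, E.f_mulVec] at h1
  rw [Matrix.mulVec_add, hx0, zero_add, E.g_mulVec] at h2
  simp [E.fu, E.gv, hs.ne', ht.ne'] at h1 h2
  linarith

lemma dom_mem {K : Set (Fin 2 → ℝ)} (hK : IsProperCone K)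
    {A : Matrix (Fin 2) (Fin 2) ℝ} (hA : InvariantUnder A K)
    {u v : Fin 2 → ℝ} {l m : ℝ} {f g : (Fin 2 → ℝ) →ₗ[ℝ] ℝ} (E : EigPack A u v l m f g)
    (hm : 0 ≤ m) (hlm : m < l) {w : Fin 2 → ℝ} (hw : A.mulVec w = l • w) : w ∈ K ∪ -K := by
  have hx : ∃ x ∈ K, f x ≠ 0 := by
    obtain ⟨x, hx⟩ := hK.2.2.2.2
    by_cases h : f x = 0
    · obtain ⟨s, hs, hsK⟩ := exists_pos_of_eventually (eps_of_interior hx u)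
      exact ⟨_, hsK, by simp [h, E.fu, hs.ne']⟩
    · exact ⟨x, interior_subset hx, h⟩
  obtain ⟨x, hx, hfx⟩ := hx
  have h1 : f x • u ∈ K := limit_mem hK hA E.hu E.hv hm hlm (b := g x) (E.rep x ▸ hx)
  have h2 : g w = 0 := by
    have := congrArg g hw
    rw [E.g_mulVec, map_smul, smul_eq_mul] at this
    have h3 : (m - l) * g w = 0 := by linarith
    exact (mul_eq_zero.1 h3).resolve_left (by linarith)
  have h3 := E.rep w
  rw [h2, zero_smul, add_zero] at h3
  have h4 : w = (f w / f x) • f x • u := by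
    rw [smul_smul, div_mul_cancel₀ _ hfx]; exact h3
  rcases le_total 0 (f w / f x) with h | h
  · left; rw [h4]; exact hK.1 _ h _ h1
  · right
    have := hK.1 (-(f w / f x)) (by linarith) _ h1
    rw [neg_smul, ← h4] at this
    exact this

lemma not_int_aux {K : Set (Fin 2 → ℝ)} (hK : IsProperCone K)
    {A : Matrix (Fin 2) (Fin 2) ℝ} (hA : InvariantUnder A K)
    {u v : Fin 2 → ℝ} {l m : ℝ} {f g : (Fin 2 → ℝ) →ₗ[ℝ] ℝ} (E : EigPack A u v l m f g)
    (hm : 0 ≤ m) (hlm : m < l) {w : Fin 2 → ℝ} (hw0 : w ≠ 0) (hw : f w = 0) (hwK : w ∈ K) :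
    w ∉ interior (K ∪ -K) := by
  intro hi
  have hn : w ∉ -K := fun h => hw0 (hK.eq_zero hwK h)
  have hnn : w ∈ interior ((-K)ᶜ) := by
    rw [hK.2.2.1.neg.isOpen_compl.interior_eq]; exact hn
  have main : ∀ e, (∃ t : ℝ, 0 < t ∧ w + t • e ∈ K) := by
    intro e
    obtain ⟨t, ht, h1, h2⟩ := exists_pos_of_eventually
      ((eps_of_interior hi e).and (eps_of_interior hnn e))
    exact ⟨t, ht, h1.resolve_right h2⟩
  have hwv := E.rep w
  rw [hw, zero_smul, zero_add] at hwv
  have lim : ∀ {t : ℝ}, w + t • u ∈ K → t • u ∈ K := by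
    intro t h
    rw [hwv, add_comm] at h
    exact limit_mem hK hA E.hu E.hv hm hlm h
  have nrm : ∀ {t : ℝ} {y : Fin 2 → ℝ}, 0 < t → t • y ∈ K → y ∈ K := by
    intro t y ht h
    have := hK.1 t⁻¹ (by positivity) _ h
    rwa [smul_smul, inv_mul_cancel₀ ht.ne', one_smul] at this
  obtain ⟨t, ht, h1⟩ := main u
  obtain ⟨s, hs, h2⟩ := main (-u)
  refine E.u_ne (hK.eq_zero (nrm ht (lim h1)) (nrm hs ?_))
  rw [smul_neg, ← neg_smul] at h2 ⊢
  exact lim h2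

/-- Theorem: a finite family of diagonalizable real `2×2` matrices with
nonnegative determinants has a common invariant proper cone iff all the
matrices are Vandergraft and the dominant eigenvectors can be separated
from the non-dominant ones by a proper cone `C`. -/
theorem common_invariant_cone_diagonalizable_nonneg_det
    (n : ℕ) (A : Fin n → Matrix (Fin 2) (Fin 2) ℝ)
    (hdiag : ∀ j, IsDiagonalizable (A j))
    (hdet : ∀ j, 0 ≤ (A j).det) :
    (∃ K : Set (Fin 2 → ℝ), IsProperCone K ∧ ∀ j, InvariantUnder (A j) K) ↔
      ((∀ j, IsVandergraft (A j)) ∧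
        ∃ C : Set (Fin 2 → ℝ), IsProperCone C ∧
          (∀ j, (¬ ∃ c : ℝ, A j = c • (1 : Matrix (Fin 2) (Fin 2) ℝ)) →
            ∀ u, DomEigvec (A j) u → u ∈ C ∪ (-C)) ∧
          (∀ j, ∀ v, NonDomEigvec (A j) v → v ∉ interior (C ∪ (-C)))) := by
  constructor
  · rintro ⟨K, hK, hA⟩
    have hV : ∀ j, IsVandergraft (A j) := fun j => by
      obtain ⟨u, v, l, m, f, g, E, _⟩ := exists_pack (hdiag j)
      exact vandergraft_of_inv hK (hA j) (hdet j) E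
    refine ⟨hV, K, hK, ?_, ?_⟩
    · intro j hns w hw
      obtain ⟨u, v, l, m, f, g, E, hml⟩ := exists_pack (hdiag j)
      have hne : m ≠ l := fun h => hns ⟨l, E.scalar h.symm⟩
      have hm := E.m_nonneg (hV j) (hdet j) hml
      have h2 := hw.2
      rw [E.rho hml] at h2
      exact dom_mem hK (hA j) E hm (lt_of_le_of_ne hml hne) h2
    · rintro j w ⟨μ, hμ, hw0, hw⟩ hi
      obtain ⟨u, v, l, m, f, g, E, hml⟩ := exists_pack (hdiag j)
      have hm := E.m_nonneg (hV j) (hdet j) hml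
      rw [E.rho hml] at hμ
      have hf : f w = 0 := by
        have := congrArg f hw
        rw [E.f_mulVec, map_smul, smul_eq_mul] at this
        have h3 : (μ - l) * f w = 0 := by linarith
        exact (mul_eq_zero.1 h3).resolve_left (sub_ne_zero.2 hμ)
      have hne : m ≠ l := by
        intro h
        apply hμ
        have h1 := E.rep w
        rw [hf, zero_smul, zero_add] at h1
        have hg : g w ≠ 0 := fun h0 => hw0 (by rw [h1, h0, zero_smul])
        have := congrArg g hw
        rw [E.g_mulVec, map_smul, smul_eq_mul] at this
        rw [← h]
        exact (mul_right_cancel₀ hg this).symm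
      have hlt := lt_of_le_of_ne hml hne
      rcases interior_subset hi with h | h
      · exact not_int_aux hK (hA j) E hm hlt hw0 hf h hi
      · refine not_int_aux hK.neg' (hA j).neg' E hm hlt hw0 hf h ?_
        rwa [neg_neg, Set.union_comm]
  · rintro ⟨hV, C, hC, h1, h2⟩
    refine ⟨C, hC, fun j => ?_⟩
    obtain ⟨u, v, l, m, f, g, E, hml⟩ := exists_pack (hdiag j)
    have hm := E.m_nonneg (hV j) (hdet j) hml
    rcases hml.eq_or_lt with h | h
    · intro x hx
      rw [E.scalar h.symm, Matrix.smul_mulVec, Matrix.one_mulVec]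
      exact hC.1 _ (hm.trans hml) x hx
    · rcases h1 j (E.not_scalar h.ne) u ⟨E.u_ne, by rw [E.rho hml]; exact E.hu⟩ with hu | hu
      · exact backward hC E hm h hu (h2 j)
      · exact backward hC E.negu hm h hu (h2 j)
end
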